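/- arXiv:1310.4528 — 2 statements merged into one kernel-verified Lean document; each statement's English description precedes it below -/
import Mathlib

section
/- Let m ≥ 1, σ ∈ (0,1), let f be a monostable nonlinearity and w the associated heteroclinic, and write ℝ^{m+1}_+ = ℝ^m × (0,∞). Then there exists a constant C > 0 such that: for every g : ℝ^{m+1}_+ → ℝ with ‖g‖_{C^{0,σ}(ℝ^{m+1}_+)} < ∞ there exists a function φ : closure(ℝ^{m+1}_+) → ℝ of class C², depending linearly on g, with Δφ(y,t) + f'(w(t)) φ(y,t) = g(y,t) for all (y,t) ∈ ℝ^m × (0,∞), φ(y,0) = 0 for all y ∈ ℝ^m, and ‖φ‖_{C^{2,σ}(ℝ^{m+1}_+)} ≤ C ‖g‖_{C^{0,σ}(ℝ^{m+1}_+)}. -/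
open Set Filter

/-- A monostable nonlinearity: smooth, `f 0 = f 1 = 0`, positive on `(0,1)`, `f' 1 < 0`. -/
def Monostable (f : ℝ → ℝ) : Prop :=
  ContDiff ℝ (⊤ : ℕ∞) f ∧ f 0 = 0 ∧ f 1 = 0 ∧ (∀ s ∈ Set.Ioo (0 : ℝ) 1, 0 < f s) ∧ deriv f 1 < 0

/-- The heteroclinic associated with `f`. -/
def IsHeteroclinic (f w : ℝ → ℝ) : Prop :=
  ContDiffOn ℝ 2 w (Set.Ici 0) ∧
  (∀ t ∈ Set.Ioi (0 : ℝ),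
    derivWithin (derivWithin w (Set.Ici 0)) (Set.Ici 0) t + f (w t) = 0) ∧
  w 0 = 0 ∧
  Filter.Tendsto w Filter.atTop (nhds 1) ∧
  (∀ t ∈ Set.Ioi (0 : ℝ), 0 < w t) ∧
  StrictMonoOn w (Set.Ici 0) ∧
  (∀ t ∈ Set.Ici (0 : ℝ), 0 < derivWithin w (Set.Ici 0) t)

/-- `sup_Λ ‖h‖ + [h]_{σ,Λ} ≤ K`, componentwise: the `C^{0,σ}(Λ)` norm of `h` is
controlled by `K`. -/
def HolderLe {X Y : Type*} [PseudoMetricSpace X] [NormedAddCommGroup Y]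
    (σ : ℝ) (Λ : Set X) (h : X → Y) (K : ℝ) : Prop :=
  (∀ x ∈ Λ, ‖h x‖ ≤ K) ∧ ∀ x ∈ Λ, ∀ y ∈ Λ, ‖h x - h y‖ ≤ K * dist x y ^ σ

/-- The Laplacian of a function on `ℝ^m × ℝ`, as the sum of second directional
derivatives along the standard basis vectors. -/
noncomputable def lapP {m : ℕ} (u : EuclideanSpace ℝ (Fin m) × ℝ → ℝ)
    (x : EuclideanSpace ℝ (Fin m) × ℝ) : ℝ :=
  (∑ i : Fin m, fderiv ℝ (fun y => fderiv ℝ u y (EuclideanSpace.single i 1, 0)) x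
      (EuclideanSpace.single i 1, 0))
    + fderiv ℝ (fun y => fderiv ℝ u y (0, 1)) x (0, 1)

/-- The closed upper half-space `ℝ^m × [0,∞)`. -/
def halfSpace (m : ℕ) : Set (EuclideanSpace ℝ (Fin m) × ℝ) := {p | 0 ≤ p.2}

/-!
On the whole space `(lam - Δ)⁻¹ g` is the Laplace transform of the heat semigroup: the average of
the Gaussian means of `g` at scale `r` with weight `r * exp (-lam * r ^ 2 / 2)`. Moving derivatives
onto the Gaussian gives the Schauder estimate, and only the tangential regularity of `g` matters for
all second derivatives except `∂ₜ²`, which the equation recovers. Hence the odd reflection of a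
Hölder function, although discontinuous across `t = 0`, has a resolvent which is `C^{2,σ}` up to the
boundary and vanishes there.

The equation `Δφ + V(t) φ = g` with `V = f'(w)` then reads `lam φ - Δφ = (lam + V) φ - g`, and is
solved by iteration. Since `w'` is positive, nonincreasing and satisfies `w''' + V w' = 0`, while
`V` is negative at infinity, for `A` large the weight `P = 1 + A (1 - exp (-t)) w'` satisfies
`lam P - P'' ≥ (lam + V) P + δ` with some `δ > 0`, and the maximum principle makes the iteration a
contraction in `sup |φ| / P`. The same estimate gives uniqueness, hence linearity in `g`.
-/

open MeasureTheory
open scoped SchwartzMap ContDiff LineDeriv Topology NNReal RealInnerProductSpace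

namespace HolderLe

variable {X Y : Type*} [PseudoMetricSpace X] [NormedAddCommGroup Y] {σ A B c : ℝ} {Λ : Set X}
  {f g : X → Y} {p q : X → ℝ}

lemma mono (hf : HolderLe σ Λ f A) (hAB : A ≤ B) : HolderLe σ Λ f B :=
  ⟨fun x hx => (hf.1 x hx).trans hAB, fun x hx y hy => (hf.2 x hx y hy).trans (by gcongr)⟩

lemma mono_set {Λ' : Set X} (hf : HolderLe σ Λ f A) (h : Λ' ⊆ Λ) : HolderLe σ Λ' f A :=
  ⟨fun x hx => hf.1 x (h hx), fun x hx y hy => hf.2 x (h hx) y (h hy)⟩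

lemma congr (hf : HolderLe σ Λ f A) (h : EqOn f g Λ) : HolderLe σ Λ g A :=
  ⟨fun x hx => h hx ▸ hf.1 x hx, fun x hx y hy => h hx ▸ h hy ▸ hf.2 x hx y hy⟩

lemma nonneg (hf : HolderLe σ Λ f A) (h : Λ.Nonempty) : 0 ≤ A :=
  let ⟨x, hx⟩ := h
  (norm_nonneg _).trans (hf.1 x hx)

lemma neg (hf : HolderLe σ Λ f A) : HolderLe σ Λ (fun x => -f x) A :=
  ⟨fun x hx => by simpa using hf.1 x hx, fun x hx y hy => by
    rw [neg_sub_neg, norm_sub_rev]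
    exact hf.2 x hx y hy⟩

lemma add (hf : HolderLe σ Λ f A) (hg : HolderLe σ Λ g B) :
    HolderLe σ Λ (fun x => f x + g x) (A + B) :=
  ⟨fun x hx => norm_add_le_of_le (hf.1 x hx) (hg.1 x hx), fun x hx y hy => by
    rw [add_sub_add_comm, add_mul]
    exact norm_add_le_of_le (hf.2 x hx y hy) (hg.2 x hx y hy)⟩

lemma sub (hf : HolderLe σ Λ f A) (hg : HolderLe σ Λ g B) :
    HolderLe σ Λ (fun x => f x - g x) (A + B) := by
  simpa only [sub_eq_add_neg] using hf.add hg.neg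

lemma sum {ι : Type*} {u : ι → X → Y} {a : ι → ℝ} (s : Finset ι)
    (hu : ∀ i ∈ s, HolderLe σ Λ (u i) (a i)) :
    HolderLe σ Λ (fun x => ∑ i ∈ s, u i x) (∑ i ∈ s, a i) :=
  ⟨fun x hx => norm_sum_le_of_le s fun i hi => (hu i hi).1 x hx, fun x hx y hy => by
    rw [← Finset.sum_sub_distrib, Finset.sum_mul]
    exact norm_sum_le_of_le s fun i hi => (hu i hi).2 x hx y hy⟩

lemma mul (hA : 0 ≤ A) (hp : HolderLe σ Λ p A) (hq : HolderLe σ Λ q B) :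
    HolderLe σ Λ (fun x => p x * q x) (2 * A * B) := by
  have hprod {a b a' b' : ℝ} (ha : ‖a‖ ≤ a') (hb : ‖b‖ ≤ b') : ‖a * b‖ ≤ a' * b' := by
    rw [norm_mul]
    exact mul_le_mul ha hb (norm_nonneg b) ((norm_nonneg a).trans ha)
  refine ⟨fun x hx => (hprod (hp.1 x hx) (hq.1 x hx)).trans ?_, fun x hx y hy => ?_⟩
  · nlinarith [(norm_nonneg _).trans (hq.1 x hx)]
  · calc ‖p x * q x - p y * q y‖ = ‖p x * (q x - q y) + (p x - p y) * q y‖ := by ring_nf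
      _ ≤ A * (B * dist x y ^ σ) + A * dist x y ^ σ * B :=
        norm_add_le_of_le (hprod (hp.1 x hx) (hq.2 x hx y hy)) (hprod (hp.2 x hx y hy) (hq.1 y hy))
      _ = 2 * A * B * dist x y ^ σ := by ring

lemma const_mul (hc : 0 ≤ c) (hp : HolderLe σ Λ p A) : HolderLe σ Λ (fun x => c * p x) (c * A) :=
  ⟨fun x hx => by rw [norm_mul, Real.norm_of_nonneg hc]; gcongr; exact hp.1 x hx,
    fun x hx y hy => by
      rw [← mul_sub, norm_mul, Real.norm_of_nonneg hc, mul_assoc]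
      gcongr
      exact hp.2 x hx y hy⟩

lemma of_tendsto {ι : Type*} {l : Filter ι} [l.NeBot] {u : ι → X → Y}
    (hu : ∀ i, HolderLe σ Λ (u i) A) (h : ∀ x ∈ Λ, Tendsto (fun i => u i x) l (nhds (f x))) :
    HolderLe σ Λ f A :=
  ⟨fun x hx => le_of_tendsto' (h x hx).norm fun i => (hu i).1 x hx, fun x hx y hy =>
    le_of_tendsto' ((h x hx).sub (h y hy)).norm fun i => (hu i).2 x hx y hy⟩

lemma const (b : Y) : HolderLe σ Λ (fun _ : X => b) ‖b‖ :=
  ⟨fun _ _ => le_rfl, fun x _ y _ => by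
    rw [sub_self, norm_zero]
    positivity⟩

lemma comp_of_dist_le {Z : Type*} [PseudoMetricSpace Z] {S : Set Z} {φ : Z → X} (hσ : 0 ≤ σ)
    (hf : HolderLe σ Λ f A) (hφ : MapsTo φ S Λ) (h : ∀ x y, dist (φ x) (φ y) ≤ dist x y) :
    HolderLe σ S (f ∘ φ) A := by
  refine ⟨fun x hx => hf.1 _ (hφ hx), fun x hx y hy => (hf.2 _ (hφ hx) _ (hφ hy)).trans ?_⟩
  have hA := hf.nonneg ⟨_, hφ hx⟩
  gcongr
  exact h x y

lemma continuousOn (hσ : 0 < σ) (hf : HolderLe σ Λ f A) : ContinuousOn f Λ := by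
  intro x hx
  refine tendsto_iff_norm_sub_tendsto_zero.2 (squeeze_zero' (Eventually.of_forall fun _ =>
    norm_nonneg _) (eventually_mem_nhdsWithin.mono fun y hy => hf.2 y hy x hx) ?_)
  have hdist : Tendsto (fun y => dist y x) (nhdsWithin x Λ) (nhds 0) :=
    (tendsto_iff_dist_tendsto_zero.1 tendsto_id).mono_left nhdsWithin_le_nhds
  simpa [Real.zero_rpow hσ.ne'] using (hdist.rpow_const (p := σ) (Or.inr hσ.le)).const_mul A

lemma of_norm_le_of_norm_sub_le (h0 : 0 ≤ σ) (h1 : σ ≤ 1) (hA : ∀ x ∈ Λ, ‖f x‖ ≤ A)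
    (hB : ∀ x ∈ Λ, ∀ y ∈ Λ, ‖f x - f y‖ ≤ B * dist x y) (hB0 : 0 ≤ B) :
    HolderLe σ Λ f (2 * A + B) := by
  refine ⟨fun x hx => by linarith [hA x hx, norm_nonneg (f x)], fun x hx y hy => ?_⟩
  have hA0 : 0 ≤ A := (norm_nonneg _).trans (hA x hx)
  rcases le_total (dist x y) 1 with hd | hd
  · have hpow : dist x y ≤ dist x y ^ σ := by
      rcases (dist_nonneg (x := x) (y := y)).eq_or_lt with h | h
      · rw [← h]; positivity
      · simpa using Real.rpow_le_rpow_of_exponent_ge h hd h1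
    nlinarith [hB x hx y hy, mul_le_mul_of_nonneg_left hpow hB0,
      mul_nonneg hA0 (dist_nonneg.trans hpow)]
  · have hpow : 1 ≤ dist x y ^ σ := Real.one_le_rpow hd h0
    nlinarith [norm_sub_le_of_le (hA x hx) (hA y hy)]

variable {E : Type*} [NormedAddCommGroup E] [NormedSpace ℝ E] [NormedSpace ℝ Y]

lemma exists_of_basis {ι : Type*} [Finite ι] (b : Module.Basis ι ℝ E) :
    ∃ C > 0, ∀ {σ A : ℝ} {Λ : Set X} {L : X → E →L[ℝ] Y}, 0 ≤ A →
      (∀ i, HolderLe σ Λ (fun x => L x (b i)) A) → HolderLe σ Λ L (C * A) := by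
  have := Fintype.ofFinite ι
  obtain ⟨C, hC, hb⟩ := b.exists_opNorm_le (F := Y)
  refine ⟨C, hC, fun hA hL => ⟨fun x hx => hb hA fun i => (hL i).1 x hx, fun x hx y hy => ?_⟩⟩
  rw [mul_assoc]
  exact hb (by positivity) fun i => (hL i).2 x hx y hy

end HolderLe

namespace HalfSpaceDirichlet

section Gaussian

variable {H : Type*} [NormedAddCommGroup H] [InnerProductSpace ℝ H]

lemma exists_one_add_pow_mul_exp_le (N : ℕ) : ∃ C, ∀ s : ℝ, 0 ≤ s →
    (1 + s) ^ N * Real.exp (-(1 / 2) * s ^ 2) ≤ C := by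
  refine ⟨4 ^ N * (N.factorial * Real.exp (1 / 2)), fun s hs => ?_⟩
  have hfact := Real.pow_div_factorial_le_exp (x := (1 + s ^ 2) / 2) (by positivity) N
  rw [div_le_iff₀ (by positivity)] at hfact
  have hpow : (1 + s) ^ N ≤ 4 ^ N * ((1 + s ^ 2) / 2) ^ N := by
    rw [← mul_pow]
    apply pow_le_pow_left₀ (by positivity)
    nlinarith [sq_nonneg (s - 1)]
  have hexp : Real.exp ((1 + s ^ 2) / 2) * Real.exp (-(1 / 2) * s ^ 2) = Real.exp (1 / 2) := by
    rw [← Real.exp_add]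
    ring_nf
  calc (1 + s) ^ N * Real.exp (-(1 / 2) * s ^ 2)
      ≤ (4 ^ N * (Real.exp ((1 + s ^ 2) / 2) * N.factorial)) * Real.exp (-(1 / 2) * s ^ 2) := by
        gcongr
        exact hpow.trans (by gcongr)
    _ = 4 ^ N * (N.factorial *
          (Real.exp ((1 + s ^ 2) / 2) * Real.exp (-(1 / 2) * s ^ 2))) := by ring
    _ = 4 ^ N * (N.factorial * Real.exp (1 / 2)) := by rw [hexp]

lemma exists_norm_iteratedFDeriv_gaussian_le (n : ℕ) : ∃ C p, 0 ≤ C ∧ ∀ x : H,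
    ‖iteratedFDeriv ℝ n (fun x : H => Real.exp (-(1 / 2) * ‖x‖ ^ 2)) x‖ ≤
      C * (1 + ‖x‖) ^ p * Real.exp (-(1 / 2) * ‖x‖ ^ 2) := by
  have htemp := Function.hasTemperateGrowth_norm_sq H
  obtain ⟨p, C, hC, hsq⟩ := htemp.norm_iteratedFDeriv_le_uniform n
  refine ⟨n.factorial * (1 + C) ^ n, p * n, by positivity, fun x => ?_⟩
  have hcomp := norm_iteratedFDeriv_comp_le (𝕜 := ℝ) (g := fun s : ℝ => Real.exp (-(1 / 2) * s))
    (f := fun x : H => ‖x‖ ^ 2) (n := n) (N := ∞) (by fun_prop) htemp.1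
    (by exact_mod_cast le_top) x (C := Real.exp (-(1 / 2) * ‖x‖ ^ 2))
    (D := (1 + C) * (1 + ‖x‖) ^ p)
    (fun i _ => by
      rw [norm_iteratedFDeriv_eq_norm_iteratedDeriv, iteratedDeriv_exp_const_mul, norm_mul,
        Real.norm_eq_abs (Real.exp _), abs_of_pos (Real.exp_pos _), norm_pow]
      exact mul_le_of_le_one_left (Real.exp_pos _).le
        (pow_le_one₀ (norm_nonneg _) (by norm_num)))
    (fun i hi hin => by
      have hone : (1 : ℝ) ≤ (1 + ‖x‖) ^ p := one_le_pow₀ (by linarith [norm_nonneg x])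
      calc ‖iteratedFDeriv ℝ i (fun x : H => ‖x‖ ^ 2) x‖
          ≤ C * (1 + ‖x‖) ^ p := hsq i hin x
        _ ≤ (1 + C) * (1 + ‖x‖) ^ p := by gcongr; linarith
        _ ≤ _ := le_self_pow₀ (by nlinarith) (by omega))
  refine hcomp.trans (le_of_eq ?_)
  rw [mul_pow, pow_mul]
  ring

/-- The unnormalised Gaussian `exp (-‖x‖² / 2)` as a Schwartz function. -/
noncomputable def gaussian (H : Type*) [NormedAddCommGroup H] [InnerProductSpace ℝ H] :
    𝓢(H, ℝ) where
  toFun x := Real.exp (-(1 / 2) * ‖x‖ ^ 2)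
  smooth' := (contDiff_const.mul (contDiff_norm_sq ℝ)).exp
  decay' k n := by
    obtain ⟨C, p, hC, hder⟩ := exists_norm_iteratedFDeriv_gaussian_le (H := H) n
    obtain ⟨B, hexp⟩ := exists_one_add_pow_mul_exp_le (k + p)
    refine ⟨C * B, fun x => ?_⟩
    have hx := norm_nonneg x
    calc _ ≤ (1 + ‖x‖) ^ k * (C * (1 + ‖x‖) ^ p * Real.exp (-(1 / 2) * ‖x‖ ^ 2)) := by
          gcongr
          · linarith
          · exact hder x
      _ = C * ((1 + ‖x‖) ^ (k + p) * Real.exp (-(1 / 2) * ‖x‖ ^ 2)) := by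
          rw [pow_add]
          ring
      _ ≤ C * B := by
          gcongr
          exact hexp _ hx

lemma gaussian_apply (x : H) : gaussian H x = Real.exp (-(1 / 2) * ‖x‖ ^ 2) := rfl

lemma lineDerivOp_gaussian_apply (v x : H) :
    ∂_{v} (gaussian H) x = -⟪x, v⟫ * gaussian H x := by
  have h : HasFDerivAt (gaussian H) _ x :=
    ((hasStrictFDerivAt_norm_sq x).hasFDerivAt.const_mul (-(1 / 2) : ℝ)).exp
  rw [SchwartzMap.lineDerivOp_apply_eq_fderiv, h.fderiv]
  simp only [neg_smul, smul_neg, neg_apply, smul_apply, coe_innerSL_apply, nsmul_eq_mul,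
    smul_eq_mul, gaussian_apply]
  ring

lemma lineDerivOp_lineDerivOp_gaussian_apply (v w x : H) :
    ∂_{w} (∂_{v} (gaussian H)) x = (⟪x, v⟫ * ⟪x, w⟫ - ⟪w, v⟫) * gaussian H x := by
  have hfun : ⇑(∂_{v} (gaussian H) : 𝓢(H, ℝ)) = fun x => -⟪x, v⟫ * gaussian H x :=
    funext (lineDerivOp_gaussian_apply v)
  have hinner : HasFDerivAt (fun x : H => ⟪x, v⟫) (innerSL ℝ v) x := by
    simpa [Function.comp_def, real_inner_comm] using (innerSL ℝ v).hasFDerivAt (x := x)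
  have h : HasFDerivAt (fun x => -⟪x, v⟫ * gaussian H x) _ x :=
    hinner.neg.mul ((gaussian H).hasFDerivAt x)
  have hw := lineDerivOp_gaussian_apply w x
  rw [SchwartzMap.lineDerivOp_apply_eq_fderiv] at hw ⊢
  rw [hfun, h.fderiv]
  simp only [add_apply, smul_apply, neg_apply, Pi.neg_apply, innerSL_apply_apply, smul_eq_mul, hw,
    real_inner_comm v w]
  ring

lemma card_mul_gaussian_add_fderiv {ι : Type*} [Fintype ι] (b : OrthonormalBasis ι ℝ H) (x : H) :
    Fintype.card ι * gaussian H x + fderiv ℝ (gaussian H) x x =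
      -∑ i, ∂_{b i} (∂_{b i} (gaussian H)) x := by
  have hx := lineDerivOp_gaussian_apply x x
  rw [SchwartzMap.lineDerivOp_apply_eq_fderiv] at hx
  have hpars : ∑ i, ⟪x, b i⟫ * ⟪x, b i⟫ = ⟪x, x⟫ := by
    rw [← b.sum_inner_mul_inner x x]
    simp only [real_inner_comm]
  simp only [hx, lineDerivOp_lineDerivOp_gaussian_apply, ← Finset.sum_mul,
    Finset.sum_sub_distrib, hpars, real_inner_self_eq_norm_sq, b.norm_eq_one]
  simp only [one_pow, mul_one, Finset.sum_const, Finset.card_univ, nsmul_eq_mul]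
  ring

end Gaussian

section ScaledAverage

variable {E : Type*} [NormedAddCommGroup E] [NormedSpace ℝ E]
  {F : Type*} [NormedAddCommGroup F] [NormedSpace ℝ F]

lemma lineDerivOp_comm (v w : E) (k : 𝓢(E, F)) : ∂_{v} (∂_{w} k) = ∂_{w} (∂_{v} k) := by
  have hsymm (x : E) : IsSymmSndFDerivAt ℝ k x :=
    (k.smooth 2).contDiffAt.isSymmSndFDerivAt (by simp)
  have hiter (a b x : E) : ∂_{a} (∂_{b} k) x = fderiv ℝ (fderiv ℝ k) x a b := by
    have hd : DifferentiableAt ℝ (fderiv ℝ k) x :=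
      (SchwartzMap.fderivCLM ℝ E F k).differentiableAt
    change fderiv ℝ (fun z => fderiv ℝ k z b) x a = _
    rw [(hd.hasFDerivAt.clm_apply (hasFDerivAt_const b x)).fderiv]
    simp
  ext x
  rw [hiter, hiter, (hsymm x).eq]

lemma fderivCLM_lineDerivOp (v : E) (k : 𝓢(E, F)) :
    SchwartzMap.fderivCLM ℝ E F (∂_{v} k) = ∂_{v} (SchwartzMap.fderivCLM ℝ E F k) := by
  refine SchwartzMap.ext fun x => ContinuousLinearMap.ext fun w => ?_
  have happly : ∂_{v} (∂_{w} k) x = ∂_{v} (SchwartzMap.fderivCLM ℝ E F k) x w := by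
    change fderiv ℝ (fun z => SchwartzMap.fderivCLM ℝ E F k z w) x v = _
    rw [(((SchwartzMap.fderivCLM ℝ E F k).hasFDerivAt x).clm_apply
      (hasFDerivAt_const w x)).fderiv]
    simp [SchwartzMap.lineDerivOp_apply_eq_fderiv]
  rw [← happly, lineDerivOp_comm]
  rfl

lemma rpow_le_one_add {s σ : ℝ} (hs : 0 ≤ s) (h0 : 0 ≤ σ) (h1 : σ ≤ 1) : s ^ σ ≤ 1 + s := by
  rcases le_total s 1 with h | h
  · exact (Real.rpow_le_one hs h h0).trans (by linarith)
  · calc s ^ σ ≤ s ^ (1 : ℝ) := Real.rpow_le_rpow_of_exponent_le h h1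
      _ ≤ 1 + s := by rw [Real.rpow_one]; linarith

variable [MeasureSpace E]

/-- The average of `g` at scale `r` around `x` against the kernel `k`; for `k` of integral one this
is the mollification of `g` by `r ^ (-dim E) k (-· / r)`. -/
noncomputable def scaledAverage (k : 𝓢(E, F)) (g : E → ℝ) (r : ℝ) (x : E) : F :=
  ∫ z, g (x + r • z) • k z

/-- The first absolute moment `∫ (1 + ‖z‖) ‖k z‖ dz` of a kernel. -/
noncomputable def kernelMoment (k : 𝓢(E, F)) : ℝ := ∫ z, (1 + ‖z‖) * ‖k z‖

lemma kernelMoment_nonneg (k : 𝓢(E, F)) : 0 ≤ kernelMoment k :=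
  integral_nonneg fun _ => by positivity

variable [FiniteDimensional ℝ E] [BorelSpace E] [(volume : Measure E).IsAddHaarMeasure]
  {g g' : E → ℝ} {K K' σ A r : ℝ}

lemma exists_one_add_norm_mul_norm_le (k : 𝓢(E, F)) : ∃ W : E → ℝ, Integrable W ∧
    ∀ z z' : E, 1 + ‖z‖ ≤ 2 * (1 + ‖z'‖) → (1 + ‖z'‖) * ‖k z'‖ ≤ W z := by
  set d := Module.finrank ℝ E
  set C := 2 ^ (d + 2) * ((Finset.Iic (d + 2, 0)).sup fun n => SchwartzMap.seminorm ℝ n.1 n.2) k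
  have hdecay (z : E) : (1 + ‖z‖) ^ (d + 2) * ‖k z‖ ≤ C := by
    simpa using SchwartzMap.one_add_le_sup_seminorm_apply (𝕜 := ℝ) (m := (d + 2, 0))
      (k := d + 2) (n := 0) le_rfl le_rfl k z
  refine ⟨fun z => 2 ^ (d + 1) * C * (1 + ‖z‖) ^ (-(d + 1 : ℝ)),
    (integrable_one_add_norm (by simp [d])).const_mul _, fun z z' hz => ?_⟩
  have hweight : (1 + ‖z‖) ^ (-(d + 1 : ℝ)) = ((1 + ‖z‖) ^ (d + 1))⁻¹ := by
    rw [Real.rpow_neg (by positivity), ← Real.rpow_natCast]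
    push_cast
    rfl
  have hpow : (1 + ‖z‖) ^ (d + 1) ≤ 2 ^ (d + 1) * (1 + ‖z'‖) ^ (d + 1) := by
    rw [← mul_pow]
    gcongr
  dsimp only
  rw [hweight, ← div_eq_mul_inv, le_div_iff₀ (by positivity)]
  calc (1 + ‖z'‖) * ‖k z'‖ * (1 + ‖z‖) ^ (d + 1)
      ≤ (1 + ‖z'‖) * ‖k z'‖ * (2 ^ (d + 1) * (1 + ‖z'‖) ^ (d + 1)) := by gcongr
    _ = 2 ^ (d + 1) * ((1 + ‖z'‖) ^ (d + 2) * ‖k z'‖) := by ring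
    _ ≤ 2 ^ (d + 1) * C := by gcongr; exact hdecay z'

lemma integrable_one_add_norm_mul_norm (k : 𝓢(E, F)) :
    Integrable fun z : E => (1 + ‖z‖) * ‖k z‖ := by
  obtain ⟨W, hW, hle⟩ := exists_one_add_norm_mul_norm_le k
  refine hW.mono' (by have := k.continuous; fun_prop) (Eventually.of_forall fun z => ?_)
  rw [Real.norm_of_nonneg (by positivity)]
  exact hle z z (by linarith [norm_nonneg z])

lemma integrable_smul_schwartz (k : 𝓢(E, F)) (hg : Measurable g) (hK : ∀ x, |g x| ≤ K) :
    Integrable fun z => g z • k z :=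
  k.integrable.bdd_smul K hg.aestronglyMeasurable (Eventually.of_forall hK)

lemma integrable_scaledAverage (k : 𝓢(E, F)) (hg : Measurable g) (hK : ∀ x, |g x| ≤ K)
    (r : ℝ) (x : E) : Integrable fun z => g (x + r • z) • k z :=
  integrable_smul_schwartz k (hg.comp (by fun_prop)) fun _ => hK _

lemma norm_integral_smul_le_mul_kernelMoment (k : 𝓢(E, F)) {φ : E → ℝ} {c : ℝ}
    (hφ : ∀ z, |φ z| ≤ c * (1 + ‖z‖)) : ‖∫ z, φ z • k z‖ ≤ c * kernelMoment k := by
  rw [kernelMoment, ← integral_const_mul]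
  refine norm_integral_le_of_norm_le ((integrable_one_add_norm_mul_norm k).const_mul c)
    (Eventually.of_forall fun z => ?_)
  rw [norm_smul, Real.norm_eq_abs, ← mul_assoc]
  gcongr
  exact hφ z

lemma norm_scaledAverage_le (k : 𝓢(E, F)) (hK : ∀ x, |g x| ≤ K) (r : ℝ) (x : E) :
    ‖scaledAverage k g r x‖ ≤ K * kernelMoment k := by
  have hK0 : 0 ≤ K := (abs_nonneg _).trans (hK 0)
  refine norm_integral_smul_le_mul_kernelMoment k fun z => (hK _).trans ?_
  exact le_mul_of_one_le_right hK0 (by linarith [norm_nonneg z])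

lemma stronglyMeasurable_scaledAverage (k : 𝓢(E, F)) (hg : Measurable g) (x : E) :
    StronglyMeasurable fun r => scaledAverage k g r x := by
  refine StronglyMeasurable.integral_prod_right (f := fun r z => g (x + r • z) • k z) ?_
  have hg' : Measurable fun p : ℝ × E => g (x + p.1 • p.2) := hg.comp (by fun_prop)
  exact hg'.stronglyMeasurable.smul (k.continuous.comp continuous_snd).stronglyMeasurable

lemma scaledAverage_sub (k : 𝓢(E, F)) (hg : Measurable g) (hK : ∀ x, |g x| ≤ K)
    (hg' : Measurable g') (hK' : ∀ x, |g' x| ≤ K') (r : ℝ) (x : E) :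
    scaledAverage k (fun z => g z - g' z) r x = scaledAverage k g r x - scaledAverage k g' r x := by
  simp only [scaledAverage, sub_smul]
  exact integral_sub (integrable_scaledAverage k hg hK r x) (integrable_scaledAverage k hg' hK' r x)

lemma norm_scaledAverage_sub_le (k : 𝓢(E, F)) (hg : Measurable g) (hK : ∀ x, |g x| ≤ K)
    (hg' : Measurable g') (hK' : ∀ x, |g' x| ≤ K') (h0 : 0 ≤ σ) (h1 : σ ≤ 1) {x : E} (hA : 0 ≤ A)
    (hx : ∀ z, |g (x + z) - g' (x + z)| ≤ A * ‖z‖ ^ σ) (hr : 0 ≤ r) :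
    ‖scaledAverage k g r x - scaledAverage k g' r x‖ ≤ A * kernelMoment k * r ^ σ := by
  rw [← scaledAverage_sub k hg hK hg' hK', mul_right_comm]
  refine norm_integral_smul_le_mul_kernelMoment k fun z => ?_
  calc |g (x + r • z) - g' (x + r • z)| ≤ A * ‖r • z‖ ^ σ := hx _
    _ = A * r ^ σ * ‖z‖ ^ σ := by
        rw [norm_smul, Real.norm_of_nonneg hr, Real.mul_rpow hr (norm_nonneg _), mul_assoc]
    _ ≤ A * r ^ σ * (1 + ‖z‖) := by gcongr; exact rpow_le_one_add (norm_nonneg _) h0 h1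

lemma abs_scaledAverage_sub_self_le {k : 𝓢(E, ℝ)} (hk : ∫ z, k z = 1) (hg : Measurable g)
    (hK : ∀ x, |g x| ≤ K) (h0 : 0 ≤ σ) (h1 : σ ≤ 1) {x : E} (hA : 0 ≤ A)
    (hx : ∀ z, |g (x + z) - g x| ≤ A * ‖z‖ ^ σ) (hr : 0 ≤ r) :
    |scaledAverage k g r x - g x| ≤ A * kernelMoment k * r ^ σ := by
  have hconst : scaledAverage k (fun _ => g x) r x = g x := by
    rw [scaledAverage, integral_smul, hk, smul_eq_mul, mul_one]
  simpa [hconst] using norm_scaledAverage_sub_le k hg hK (g' := fun _ => g x) measurable_const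
    (fun _ => hK x) h0 h1 hA hx hr

lemma hasFDerivAt_integral_smul_translate (k : 𝓢(E, F)) (hg : Measurable g)
    (hK : ∀ x, |g x| ≤ K) :
    HasFDerivAt (fun a : E => ∫ z, g z • k (z - a))
      (-∫ z, g z • SchwartzMap.fderivCLM ℝ E F k z) 0 := by
  have hK0 : 0 ≤ K := (abs_nonneg _).trans (hK 0)
  obtain ⟨W, hW, hdom⟩ := exists_one_add_norm_mul_norm_le (SchwartzMap.fderivCLM ℝ E F k)
  have hder : ∀ z a : E, HasFDerivAt (fun a => g z • k (z - a))
      (g z • -SchwartzMap.fderivCLM ℝ E F k (z - a)) a := fun z a => by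
    have h := ((k.hasFDerivAt (z - a)).comp a ((hasFDerivAt_id a).const_sub z)).const_smul (g z)
    simpa [Function.comp_def, Pi.smul_def] using h
  have hbound : ∀ z, ∀ a ∈ Metric.ball (0 : E) 1,
      ‖g z • -SchwartzMap.fderivCLM ℝ E F k (z - a)‖ ≤ K * W z := fun z a ha => by
    have hza := norm_le_norm_add_norm_sub' z a
    have hpos := norm_nonneg (z - a)
    have ha1 : ‖a‖ < 1 := mem_ball_zero_iff.1 ha
    rw [norm_smul, norm_neg, Real.norm_eq_abs]
    gcongr
    · exact hK z
    · refine le_trans ?_ (hdom z (z - a) (by linarith))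
      exact le_mul_of_one_le_left (norm_nonneg _) (by linarith)
  have := secondCountableTopologyEither_of_left E (E →L[ℝ] F)
  have key := hasFDerivAt_integral_of_dominated_of_fderiv_le (𝕜 := ℝ) (μ := (volume : Measure E))
    (F := fun a z => g z • k (z - a)) (x₀ := 0) (Metric.ball_mem_nhds 0 one_pos)
    (Eventually.of_forall fun a => hg.aestronglyMeasurable.smul
      (Continuous.aestronglyMeasurable (by have := k.continuous; fun_prop)))
    (by simpa using integrable_smul_schwartz k hg hK)
    (hg.aestronglyMeasurable.smul (Continuous.aestronglyMeasurable (by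
      have := (SchwartzMap.fderivCLM ℝ E F k).continuous; fun_prop)))
    (Eventually.of_forall hbound) (hW.const_mul K) (Eventually.of_forall fun z a _ => hder z a)
  simpa [integral_neg] using key

lemma hasFDerivAt_scaledAverage (k : 𝓢(E, F)) (hg : Measurable g) (hK : ∀ x, |g x| ≤ K)
    (hr : 0 < r) (x : E) : HasFDerivAt (scaledAverage k g r)
      (-(r⁻¹ • scaledAverage (SchwartzMap.fderivCLM ℝ E F k) g r x)) x := by
  have htranslate : scaledAverage k g r =
      (fun a : E => ∫ z, g (x + r • z) • k (z - a)) ∘ fun y => r⁻¹ • (y - x) := by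
    ext y
    rw [Function.comp_apply, scaledAverage, ← integral_add_right_eq_self
      (fun z => g (x + r • z) • k (z - r⁻¹ • (y - x))) (r⁻¹ • (y - x))]
    congr! 3 with z
    · rw [smul_add, smul_inv_smul₀ hr.ne']
      abel_nf
    · rw [add_sub_cancel_right]
  have hinner : HasFDerivAt (fun y : E => r⁻¹ • (y - x)) (r⁻¹ • ContinuousLinearMap.id ℝ E) x :=
    ((hasFDerivAt_id x).sub_const x).const_smul r⁻¹
  have houter := hasFDerivAt_integral_smul_translate k (g := fun z => g (x + r • z))
    (hg.comp (by fun_prop)) fun _ => hK _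
  rw [htranslate]
  convert HasFDerivAt.comp x (by simpa using houter) hinner using 1
  ext v
  simp [scaledAverage]

lemma scaledAverage_fderivCLM_apply (k : 𝓢(E, F)) (hg : Measurable g)
    (hK : ∀ x, |g x| ≤ K) (r : ℝ) (x v : E) :
    scaledAverage (SchwartzMap.fderivCLM ℝ E F k) g r x v = scaledAverage (∂_{v} k) g r x := by
  rw [scaledAverage, ContinuousLinearMap.integral_apply (integrable_scaledAverage _ hg hK r x)]
  rfl

lemma norm_scaledAverage_sub_le_mul_norm_sub (k : 𝓢(E, F)) (hg : Measurable g)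
    (hK : ∀ x, |g x| ≤ K) {N : ℝ} (hr : 0 < r)
    (hN : ∀ x, ‖scaledAverage (SchwartzMap.fderivCLM ℝ E F k) g r x‖ ≤ N) (x x' : E) :
    ‖scaledAverage k g r x - scaledAverage k g r x'‖ ≤ r⁻¹ * N * ‖x - x'‖ := by
  refine convex_univ.norm_image_sub_le_of_norm_hasFDerivWithin_le (𝕜 := ℝ)
    (fun z _ => (hasFDerivAt_scaledAverage k hg hK hr z).hasFDerivWithinAt) (fun z _ => ?_)
    (mem_univ _) (mem_univ _)
  rw [norm_neg, norm_smul, norm_inv, Real.norm_of_nonneg hr.le]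
  gcongr
  exact hN z

lemma scaledAverage_lineDerivOp_eq_zero (k : 𝓢(E, F)) {v : E}
    (hg : Measurable g) (hK : ∀ x, |g x| ≤ K) (hinv : ∀ x, ∀ s : ℝ, g (x + s • v) = g x)
    (hr : 0 < r) (x : E) : scaledAverage (∂_{v} k) g r x = 0 := by
  have hline : HasDerivAt (fun s : ℝ => x + s • v) v 0 := by
    simpa using ((hasDerivAt_id (0 : ℝ)).smul_const v).const_add x
  have hconst : (fun s : ℝ => scaledAverage k g r (x + s • v)) =
      fun _ => scaledAverage k g r x := by
    funext s
    simp only [scaledAverage, add_right_comm x (s • v), hinv]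
  have hder : HasDerivAt (fun s : ℝ => scaledAverage k g r (x + s • v))
      ((-(r⁻¹ • scaledAverage (SchwartzMap.fderivCLM ℝ E F k) g r x)) v) 0 :=
    HasFDerivAt.comp_hasDerivAt (l := scaledAverage k g r) (f := fun s : ℝ => x + s • v) 0
      (by simpa using hasFDerivAt_scaledAverage k hg hK hr x) hline
  rw [hconst, neg_apply, smul_apply, scaledAverage_fderivCLM_apply k hg hK] at hder
  simpa [hr.ne'] using hder.unique (hasDerivAt_const 0 _)

/-- A derivative of the kernel along `v` kills the `v`-invariant part of the datum, so that the
regularity of `g` transversally to that part is gained as a power of the scale. -/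
lemma norm_scaledAverage_lineDerivOp_le (k : 𝓢(E, F)) {v : E}
    (hg : Measurable g) (hK : ∀ x, |g x| ≤ K) (hg' : Measurable g') (hK' : ∀ x, |g' x| ≤ K')
    (hinv : ∀ x, ∀ s : ℝ, g' (x + s • v) = g' x) (h0 : 0 ≤ σ) (h1 : σ ≤ 1) {x : E} (hA : 0 ≤ A)
    (hx : ∀ z, |g (x + z) - g' (x + z)| ≤ A * ‖z‖ ^ σ) (hr : 0 < r) :
    ‖scaledAverage (∂_{v} k) g r x‖ ≤ A * kernelMoment (∂_{v} k) * r ^ σ := by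
  simpa [scaledAverage_lineDerivOp_eq_zero k hg' hK' hinv hr] using
    norm_scaledAverage_sub_le (∂_{v} k) hg hK hg' hK' h0 h1 hA hx hr.le

lemma hasDerivAt_integral_smul_dilate (k : 𝓢(E, F)) (hg : Measurable g) (hK : ∀ x, |g x| ≤ K) :
    Integrable (fun z => g z • fderiv ℝ k z z) ∧
      HasDerivAt (fun τ : ℝ => ∫ z, g z • k (τ • z)) (∫ z, g z • fderiv ℝ k z z) 1 := by
  have hK0 : 0 ≤ K := (abs_nonneg _).trans (hK 0)
  obtain ⟨W, hW, hdom⟩ := exists_one_add_norm_mul_norm_le (SchwartzMap.fderivCLM ℝ E F k)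
  have hder : ∀ (z : E) (τ : ℝ), HasDerivAt (fun τ : ℝ => g z • k (τ • z))
      (g z • SchwartzMap.fderivCLM ℝ E F k (τ • z) z) τ := fun z τ => by
    have h := ((k.hasFDerivAt (τ • z)).comp_hasDerivAt τ
      ((hasDerivAt_id τ).smul_const z)).const_smul (g z)
    simpa [Function.comp_def, Pi.smul_def] using h
  have hbound : ∀ z, ∀ τ ∈ Metric.ball (1 : ℝ) (1 / 2),
      ‖g z • SchwartzMap.fderivCLM ℝ E F k (τ • z) z‖ ≤ K * (2 * W z) := fun z τ hτ => by
    have hτ2 : 1 / 2 ≤ τ := by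
      rw [Real.ball_eq_Ioo] at hτ
      linarith [hτ.1]
    have hnorm : ‖τ • z‖ = τ * ‖z‖ := by rw [norm_smul, Real.norm_of_nonneg (by linarith)]
    have hz : 1 + ‖z‖ ≤ 2 * (1 + ‖τ • z‖) := by
      rw [hnorm]
      nlinarith [norm_nonneg z]
    rw [norm_smul, Real.norm_eq_abs]
    gcongr
    · exact hK z
    · calc ‖SchwartzMap.fderivCLM ℝ E F k (τ • z) z‖
          ≤ ‖SchwartzMap.fderivCLM ℝ E F k (τ • z)‖ * ‖z‖ := ContinuousLinearMap.le_opNorm _ _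
        _ ≤ ‖SchwartzMap.fderivCLM ℝ E F k (τ • z)‖ * (2 * (1 + ‖τ • z‖)) := by
            gcongr
            linarith
        _ = 2 * ((1 + ‖τ • z‖) * ‖SchwartzMap.fderivCLM ℝ E F k (τ • z)‖) := by ring
        _ ≤ 2 * W z := by gcongr; exact hdom z _ hz
  have key := hasDerivAt_integral_of_dominated_loc_of_deriv_le (𝕜 := ℝ)
    (μ := (volume : Measure E)) (F := fun (τ : ℝ) z => g z • k (τ • z)) (x₀ := 1)
    (Metric.ball_mem_nhds _ (by norm_num))
    (Eventually.of_forall fun τ => hg.aestronglyMeasurable.smul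
      (Continuous.aestronglyMeasurable (by have := k.continuous; fun_prop)))
    (by simpa using integrable_smul_schwartz k hg hK)
    (hg.aestronglyMeasurable.smul (Continuous.aestronglyMeasurable (by
      have := (SchwartzMap.fderivCLM ℝ E F k).continuous; fun_prop)))
    (Eventually.of_forall hbound) ((hW.const_mul 2).const_mul K)
    (Eventually.of_forall fun z τ _ => hder z τ)
  simpa using key

lemma scaledAverage_eq_pow_smul_integral (k : 𝓢(E, F)) (g : E → ℝ) {r₀ : ℝ} (hr₀ : 0 < r₀)
    (hr : 0 < r) (x : E) : scaledAverage k g r x =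
      (r₀ / r) ^ Module.finrank ℝ E • ∫ z, g (x + r₀ • z) • k ((r₀ / r) • z) := by
  have hpoint : ∀ z : E, g (x + r₀ • (r / r₀) • z) • k ((r₀ / r) • (r / r₀) • z) =
      g (x + r • z) • k z := fun z => by
    rw [smul_smul, smul_smul, mul_div_cancel₀ r hr₀.ne', div_mul_div_cancel₀ hr.ne',
      div_self hr₀.ne', one_smul]
  have hscale := Measure.integral_comp_smul (volume : Measure E)
    (fun z => g (x + r₀ • z) • k ((r₀ / r) • z)) (r / r₀)
  simp only [hpoint] at hscale
  rw [scaledAverage, hscale, ← inv_pow, inv_div, abs_of_pos (by positivity)]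

lemma hasDerivAt_scaledAverage_scale {k k' : 𝓢(E, F)}
    (hk' : ∀ z, (Module.finrank ℝ E : ℝ) • k z + fderiv ℝ k z z = -k' z)
    (hg : Measurable g) (hK : ∀ x, |g x| ≤ K) (hr : 0 < r) (x : E) :
    HasDerivAt (fun s => scaledAverage k g s x) (r⁻¹ • scaledAverage k' g r x) r := by
  obtain ⟨hint, hdil⟩ := hasDerivAt_integral_smul_dilate k (g := fun z => g (x + r • z))
    (hg.comp (by fun_prop)) fun _ => hK _
  have hpow : HasDerivAt (fun τ : ℝ => τ ^ Module.finrank ℝ E) (Module.finrank ℝ E : ℝ) 1 := by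
    simpa using hasDerivAt_pow (Module.finrank ℝ E) (1 : ℝ)
  have hratio : HasDerivAt (fun s : ℝ => r / s) (-(r⁻¹)) r := by
    have h : HasDerivAt (fun s : ℝ => r / s) _ r := (hasDerivAt_inv hr.ne').const_mul r
    convert h using 1
    field_simp
  have hk'int : -scaledAverage k' g r x = (∫ z, g (x + r • z) • fderiv ℝ k z z) +
      (Module.finrank ℝ E : ℝ) • ∫ z, g (x + r • z) • k z := by
    rw [scaledAverage, ← integral_neg]
    simp only [← smul_neg, ← hk', smul_add, smul_comm _ (Module.finrank ℝ E : ℝ)]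
    rw [add_comm, ← integral_smul]
    exact integral_add ((integrable_scaledAverage k hg hK r x).smul _) hint
  have hprod := hpow.smul hdil
  rw [← div_self hr.ne'] at hprod
  have hcomp := hprod.scomp r hratio
  have heq : (fun s => scaledAverage k g s x) =ᶠ[𝓝 r] ((fun τ : ℝ => τ ^ Module.finrank ℝ E) •
      fun τ : ℝ => ∫ z, g (x + r • z) • k (τ • z)) ∘ fun s => r / s := by
    filter_upwards [lt_mem_nhds hr] with s hs
    exact scaledAverage_eq_pow_smul_integral k g hr hs x
  convert hcomp.congr_of_eventuallyEq heq using 1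
  simp [← hk'int, div_self hr.ne']

end ScaledAverage

section ScaleIntegral

variable {E : Type*} [NormedAddCommGroup E] [NormedSpace ℝ E]
  {F : Type*} [NormedAddCommGroup F] [NormedSpace ℝ F]
  {lam a s τ r : ℝ}

/-- The weight with which the scale `r = √(2t)` of the heat semigroup enters the Laplace transform
of the resolvent at `lam`. -/
noncomputable def scaleWeight (lam s r : ℝ) : ℝ := r ^ s * Real.exp (-(lam / 2) * r ^ 2)

lemma scaleWeight_nonneg (hr : 0 ≤ r) : 0 ≤ scaleWeight lam s r := by
  unfold scaleWeight; positivity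

lemma scaleWeight_mul_rpow (hr : 0 < r) :
    scaleWeight lam s r * r ^ τ = scaleWeight lam (s + τ) r := by
  rw [scaleWeight, scaleWeight, Real.rpow_add hr]; ring

lemma scaleWeight_mul_inv (hr : 0 < r) :
    scaleWeight lam s r * r⁻¹ = scaleWeight lam (s - 1) r := by
  rw [← Real.rpow_neg_one, scaleWeight_mul_rpow hr, sub_eq_add_neg]

lemma scaleWeight_le_rpow (hl : 0 < lam) (hr : 0 ≤ r) : scaleWeight lam s r ≤ r ^ s := by
  refine mul_le_of_le_one_right (by positivity) (Real.exp_le_one_iff.2 ?_)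
  nlinarith [sq_nonneg r]

lemma measurable_scaleWeight (lam s : ℝ) : Measurable (scaleWeight lam s) := by
  unfold scaleWeight; fun_prop

lemma norm_scaleWeight_smul_le {N : ℝ} {v : F} (hr : 0 < r) (hv : ‖v‖ ≤ N * r ^ τ) :
    ‖scaleWeight lam s r • v‖ ≤ N * scaleWeight lam (s + τ) r := by
  have hpos := scaleWeight_nonneg (lam := lam) (s := s) hr.le
  rw [norm_smul, Real.norm_of_nonneg hpos, ← scaleWeight_mul_rpow hr]
  calc scaleWeight lam s r * ‖v‖ ≤ scaleWeight lam s r * (N * r ^ τ) := by gcongr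
    _ = N * (scaleWeight lam s r * r ^ τ) := by ring

/-- `r ^ s` times a Gaussian is integrable on `(a, ∞)`. -/
def IsAdmissibleExponent (a s : ℝ) : Prop := 0 ≤ a ∧ (a = 0 → -1 < s)

lemma isAdmissibleExponent_zero (hs : -1 < s) : IsAdmissibleExponent 0 s := ⟨le_rfl, fun _ => hs⟩

lemma isAdmissibleExponent_of_pos (ha : 0 < a) (s : ℝ) : IsAdmissibleExponent a s :=
  ⟨ha.le, fun h => absurd h ha.ne'⟩

lemma IsAdmissibleExponent.integrableOn_scaleWeight (h : IsAdmissibleExponent a s)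
    (hl : 0 < lam) : IntegrableOn (scaleWeight lam s) (Ioi a) := by
  obtain ⟨ha, hs⟩ := h
  rcases ha.eq_or_lt with rfl | ha
  · exact integrableOn_rpow_mul_exp_neg_mul_sq (by positivity) (hs rfl)
  have hmajor : IntegrableOn (fun r => a ^ (s - |s|) * scaleWeight lam |s| r) (Ioi a) :=
    ((integrableOn_rpow_mul_exp_neg_mul_sq (by positivity)
      (by linarith [abs_nonneg s])).mono_set (Ioi_subset_Ioi ha.le)).const_mul _
  refine hmajor.mono' (measurable_scaleWeight lam s).aestronglyMeasurable
    ((ae_restrict_mem measurableSet_Ioi).mono fun r (hr : a < r) => ?_)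
  have hr0 : 0 < r := ha.trans hr
  have hw := scaleWeight_nonneg (lam := lam) (s := |s|) hr0.le
  calc ‖scaleWeight lam s r‖ = scaleWeight lam (|s| + (s - |s|)) r := by
        rw [Real.norm_of_nonneg (scaleWeight_nonneg hr0.le), add_sub_cancel]
    _ = r ^ (s - |s|) * scaleWeight lam |s| r := by rw [← scaleWeight_mul_rpow hr0, mul_comm]
    _ ≤ a ^ (s - |s|) * scaleWeight lam |s| r := by
        gcongr ?_ * _
        exact Real.rpow_le_rpow_of_nonpos ha hr.le (by linarith [le_abs_self s])

lemma integral_Ioc_zero_rpow {b p : ℝ} (hb : 0 ≤ b) (hp : -1 < p) :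
    ∫ r in Ioc 0 b, r ^ p = b ^ (p + 1) / (p + 1) := by
  rw [← intervalIntegral.integral_of_le hb, integral_rpow (Or.inl hp),
    Real.zero_rpow (by linarith), sub_zero]

lemma norm_setIntegral_Ioc_scaleWeight_smul_le {N b : ℝ} {v : ℝ → F} (hl : 0 < lam)
    (hN : 0 ≤ N) (hb : 0 ≤ b) (hs : -1 < s + τ) (hv : ∀ r, 0 < r → ‖v r‖ ≤ N * r ^ τ) :
    ‖∫ r in Ioc 0 b, scaleWeight lam s r • v r‖ ≤ N / (s + τ + 1) * b ^ (s + τ + 1) := by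
  have hN' : N / (s + τ + 1) * b ^ (s + τ + 1) = ∫ r in Ioc 0 b, N * r ^ (s + τ) := by
    rw [integral_const_mul, integral_Ioc_zero_rpow hb hs]
    ring
  rw [hN']
  refine norm_integral_le_of_norm_le
    ((intervalIntegral.intervalIntegrable_rpow' (a := 0) (b := b) hs).1.const_mul N)
    ((ae_restrict_mem measurableSet_Ioc).mono fun r hr => ?_)
  refine (norm_scaleWeight_smul_le hr.1 (hv r hr.1)).trans ?_
  gcongr
  exact scaleWeight_le_rpow hl hr.1.le

lemma norm_setIntegral_Ioi_scaleWeight_smul_le {N b : ℝ} {v : ℝ → F} (hl : 0 < lam)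
    (hN : 0 ≤ N) (hb : 0 < b) (hs : s + τ < -1) (hv : ∀ r, 0 < r → ‖v r‖ ≤ N * r ^ τ) :
    ‖∫ r in Ioi b, scaleWeight lam s r • v r‖ ≤ N / (-(s + τ + 1)) * b ^ (s + τ + 1) := by
  have hN' : N / (-(s + τ + 1)) * b ^ (s + τ + 1) = ∫ r in Ioi b, N * r ^ (s + τ) := by
    rw [integral_const_mul, integral_Ioi_rpow_of_lt hs hb, div_neg]
    ring
  rw [hN']
  refine norm_integral_le_of_norm_le ((integrableOn_Ioi_rpow_of_lt hs hb).const_mul _)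
    ((ae_restrict_mem measurableSet_Ioi).mono fun r (hr : b < r) => ?_)
  have hr0 : 0 < r := hb.trans hr
  refine (norm_scaleWeight_smul_le hr0 (hv r hr0)).trans ?_
  gcongr
  exact scaleWeight_le_rpow hl hr0.le

lemma setIntegral_Ioi_zero_eq_add {φ : ℝ → F} {b : ℝ} (hb : 0 ≤ b)
    (hφ : IntegrableOn φ (Ioi 0)) :
    ∫ r in Ioi 0, φ r = (∫ r in Ioc 0 b, φ r) + ∫ r in Ioi b, φ r := by
  rw [← Ioc_union_Ioi_eq_Ioi hb]
  exact setIntegral_union Ioc_disjoint_Ioi_same measurableSet_Ioi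
    (hφ.mono_set Ioc_subset_Ioi_self) (hφ.mono_set (Ioi_subset_Ioi hb))

variable [MeasureSpace E]

/-- The averages of `g` against `k` integrated over the scales above `a`. With `k` the normalised
Gaussian, `a = 0` and `s = 1` this is the resolvent `(lam - Δ)⁻¹ g`; derivatives of the latter
correspond to derivatives of `k` and smaller `s`. -/
noncomputable def scaleIntegral (lam a s : ℝ) (k : 𝓢(E, F)) (g : E → ℝ) (x : E) : F :=
  ∫ r in Ioi a, scaleWeight lam s r • scaledAverage k g r x

variable {g : E → ℝ} {K N N' σ τ' : ℝ} {x : E}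

lemma norm_scaleIntegral_le (hl : 0 < lam) (k : 𝓢(E, F)) (hs : -1 < s + τ)
    (hN : ∀ r, 0 < r → ‖scaledAverage k g r x‖ ≤ N * r ^ τ) :
    ‖scaleIntegral lam 0 s k g x‖ ≤ N * ∫ r in Ioi 0, scaleWeight lam (s + τ) r := by
  rw [scaleIntegral, ← integral_const_mul]
  exact norm_integral_le_of_norm_le
    (((isAdmissibleExponent_zero hs).integrableOn_scaleWeight hl).const_mul N)
    ((ae_restrict_mem measurableSet_Ioi).mono fun r hr => norm_scaleWeight_smul_le hr (hN r hr))

variable [FiniteDimensional ℝ E] [BorelSpace E] [(volume : Measure E).IsAddHaarMeasure]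

lemma norm_scaledAverage_le_mul_rpow_zero (k : 𝓢(E, F)) (hK : ∀ x, |g x| ≤ K) (r : ℝ) (x : E) :
    ‖scaledAverage k g r x‖ ≤ K * kernelMoment k * r ^ (0 : ℝ) := by
  rw [Real.rpow_zero, mul_one]
  exact norm_scaledAverage_le k hK r x

lemma aestronglyMeasurable_scaleWeight_smul (lam a s : ℝ) (k : 𝓢(E, F)) (hg : Measurable g)
    (x : E) : AEStronglyMeasurable (fun r => scaleWeight lam s r • scaledAverage k g r x)
      (volume.restrict (Ioi a)) :=
  ((measurable_scaleWeight lam s).stronglyMeasurable.smul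
    (stronglyMeasurable_scaledAverage k hg x)).aestronglyMeasurable

lemma IsAdmissibleExponent.integrableOn_scaleWeight_smul (ha : IsAdmissibleExponent a (s + τ))
    (hl : 0 < lam) (k : 𝓢(E, F)) (hg : Measurable g)
    (hN : ∀ r, 0 < r → ‖scaledAverage k g r x‖ ≤ N * r ^ τ) :
    IntegrableOn (fun r => scaleWeight lam s r • scaledAverage k g r x) (Ioi a) := by
  refine ((ha.integrableOn_scaleWeight hl).const_mul N).mono'
    (aestronglyMeasurable_scaleWeight_smul lam a s k hg x)
    ((ae_restrict_mem measurableSet_Ioi).mono fun r hr => ?_)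
  have hr0 : 0 < r := ha.1.trans_lt hr
  exact norm_scaleWeight_smul_le hr0 (hN r hr0)

lemma norm_scaleIntegral_sub_truncation_le (hl : 0 < lam) (k : 𝓢(E, F)) (hg : Measurable g)
    (hs : -1 < s + τ) (hN : ∀ r, 0 < r → ‖scaledAverage k g r x‖ ≤ N * r ^ τ) {ε : ℝ}
    (hε : 0 ≤ ε) : ‖scaleIntegral lam 0 s k g x - scaleIntegral lam ε s k g x‖ ≤
      N / (s + τ + 1) * ε ^ (s + τ + 1) := by
  have hN0 : 0 ≤ N := by simpa using (norm_nonneg _).trans (hN 1 one_pos)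
  rw [scaleIntegral, scaleIntegral, setIntegral_Ioi_zero_eq_add hε
    ((isAdmissibleExponent_zero hs).integrableOn_scaleWeight_smul hl k hg hN), add_sub_cancel_right]
  exact norm_setIntegral_Ioc_scaleWeight_smul_le hl hN0 hε hs hN

lemma hasFDerivAt_scaleIntegral (hl : 0 < lam) (k : 𝓢(E, F)) (hg : Measurable g)
    (hK : ∀ x, |g x| ≤ K) (ha : IsAdmissibleExponent a (s + τ))
    (hN : ∀ r, 0 < r → ‖scaledAverage k g r x‖ ≤ N * r ^ τ)
    (ha' : IsAdmissibleExponent a (s - 1 + τ'))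
    (hN' : ∀ r, 0 < r → ∀ x,
      ‖scaledAverage (SchwartzMap.fderivCLM ℝ E F k) g r x‖ ≤ N' * r ^ τ') :
    HasFDerivAt (scaleIntegral lam a s k g)
      (-scaleIntegral lam a (s - 1) (SchwartzMap.fderivCLM ℝ E F k) g x) x := by
  have key := hasFDerivAt_integral_of_dominated_of_fderiv_le (𝕜 := ℝ)
    (μ := volume.restrict (Ioi a))
    (F := fun x r => scaleWeight lam s r • scaledAverage k g r x)
    (F' := fun x r =>
      -(scaleWeight lam (s - 1) r • scaledAverage (SchwartzMap.fderivCLM ℝ E F k) g r x))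
    (x₀ := x) (s := univ) (bound := fun r => N' * scaleWeight lam (s - 1 + τ') r) univ_mem
    (Eventually.of_forall fun x => aestronglyMeasurable_scaleWeight_smul lam a s k hg x)
    (ha.integrableOn_scaleWeight_smul hl k hg hN)
    (aestronglyMeasurable_scaleWeight_smul lam a (s - 1) _ hg x).neg
    ((ae_restrict_mem measurableSet_Ioi).mono fun r hr x _ => by
      have hr0 : 0 < r := ha.1.trans_lt hr
      rw [norm_neg]
      exact norm_scaleWeight_smul_le hr0 (hN' r hr0 x))
    ((ha'.integrableOn_scaleWeight hl).const_mul N')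
    ((ae_restrict_mem measurableSet_Ioi).mono fun r hr x _ => by
      have hr0 : 0 < r := ha.1.trans_lt hr
      have h := (hasFDerivAt_scaledAverage k hg hK hr0 x).const_smul (scaleWeight lam s r)
      rwa [smul_neg, smul_smul, scaleWeight_mul_inv hr0] at h)
  rwa [integral_neg] at key

lemma norm_scaleIntegral_sub_le_rpow (hl : 0 < lam) (h0 : 0 < σ) (h1 : σ < 1) (k : 𝓢(E, F))
    (hg : Measurable g) (hK : ∀ x, |g x| ≤ K)
    (hN : ∀ r, 0 < r → ∀ x, ‖scaledAverage k g r x‖ ≤ N * r ^ σ)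
    (hN' : ∀ r, 0 < r → ∀ x, ‖scaledAverage (SchwartzMap.fderivCLM ℝ E F k) g r x‖ ≤ N' * r ^ σ)
    (x x' : E) : ‖scaleIntegral lam 0 (-1) k g x - scaleIntegral lam 0 (-1) k g x'‖ ≤
      (2 * N / σ + N' / (1 - σ)) * ‖x - x'‖ ^ σ := by
  rcases eq_or_ne x x' with rfl | hne
  · simp [Real.zero_rpow h0.ne']
  set d := ‖x - x'‖
  have hd : 0 < d := norm_pos_iff.2 (sub_ne_zero.2 hne)
  have hN0 : 0 ≤ N := by simpa using (norm_nonneg _).trans (hN 1 one_pos 0)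
  have hN0' : 0 ≤ N' := by simpa using (norm_nonneg _).trans (hN' 1 one_pos 0)
  have hint (x : E) := (isAdmissibleExponent_zero (s := -1 + σ) (by linarith)
    ).integrableOn_scaleWeight_smul hl k hg (x := x) fun r hr => hN r hr x
  have hsub : scaleIntegral lam 0 (-1) k g x - scaleIntegral lam 0 (-1) k g x' =
      ∫ r in Ioi 0, scaleWeight lam (-1) r • (scaledAverage k g r x - scaledAverage k g r x') := by
    simp only [smul_sub]
    exact (integral_sub (hint x) (hint x')).symm
  have hint_sub : IntegrableOn (fun r =>
      scaleWeight lam (-1) r • (scaledAverage k g r x - scaledAverage k g r x')) (Ioi 0) := by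
    simp only [smul_sub]
    exact (hint x).sub (hint x')
  have hnear : ∀ r, 0 < r →
      ‖scaledAverage k g r x - scaledAverage k g r x'‖ ≤ 2 * N * r ^ σ := fun r hr =>
    (norm_sub_le _ _).trans (by linarith [hN r hr x, hN r hr x'])
  have hfar : ∀ r, 0 < r →
      ‖scaledAverage k g r x - scaledAverage k g r x'‖ ≤ N' * d * r ^ (σ - 1) := fun r hr => by
    refine (norm_scaledAverage_sub_le_mul_norm_sub k hg hK hr (hN' r hr) x x').trans_eq ?_
    rw [Real.rpow_sub_one hr.ne']
    ring
  have hpow : d * d ^ (-1 + (σ - 1) + 1) = d ^ σ := by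
    rw [← Real.rpow_one_add' hd.le (by linarith)]
    ring_nf
  rw [hsub, setIntegral_Ioi_zero_eq_add hd.le hint_sub, add_mul]
  refine norm_add_le_of_le ?_ ?_
  · simpa using norm_setIntegral_Ioc_scaleWeight_smul_le (s := -1) hl (by positivity) hd.le
      (by linarith) hnear
  · refine (norm_setIntegral_Ioi_scaleWeight_smul_le hl (by positivity) hd (by linarith)
      hfar).trans_eq ?_
    rw [← hpow]
    ring_nf

lemma scaleIntegral_fderivCLM_apply (hl : 0 < lam) (k : 𝓢(E, F))
    (hg : Measurable g) (hK : ∀ x, |g x| ≤ K) (v : E) (ha : IsAdmissibleExponent a (s + τ))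
    (hN : ∀ r, 0 < r → ‖scaledAverage (SchwartzMap.fderivCLM ℝ E F k) g r x‖ ≤ N * r ^ τ) :
    scaleIntegral lam a s (SchwartzMap.fderivCLM ℝ E F k) g x v =
      scaleIntegral lam a s (∂_{v} k) g x := by
  rw [scaleIntegral, scaleIntegral, ContinuousLinearMap.integral_apply
    (ha.integrableOn_scaleWeight_smul hl _ hg hN)]
  simp only [smul_apply, scaledAverage_fderivCLM_apply k hg hK]

lemma continuous_scaleIntegral (hl : 0 < lam) (k : 𝓢(E, F)) (hg : Measurable g)
    (hK : ∀ x, |g x| ≤ K) (ha : IsAdmissibleExponent a s) :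
    Continuous (scaleIntegral lam a s k g) := by
  refine continuous_of_dominated
    (bound := fun r => K * kernelMoment k * scaleWeight lam s r)
    (fun x => aestronglyMeasurable_scaleWeight_smul lam a s k hg x)
    (fun x => (ae_restrict_mem measurableSet_Ioi).mono fun r hr => ?_)
    ((ha.integrableOn_scaleWeight hl).const_mul _)
    ((ae_restrict_mem measurableSet_Ioi).mono fun r hr => ?_)
  · simpa using norm_scaleWeight_smul_le (lam := lam) (s := s) (τ := 0) (ha.1.trans_lt hr)
      (by simpa using norm_scaledAverage_le k hK r x)
  · have hcont : Continuous (scaledAverage k g r) := continuous_iff_continuousAt.2 fun x =>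
      (hasFDerivAt_scaledAverage k hg hK (ha.1.trans_lt hr) x).continuousAt
    exact hcont.const_smul _

lemma scaleIntegral_sum {ι : Type*} (I : Finset ι) (hl : 0 < lam) (k : ι → 𝓢(E, F))
    (hg : Measurable g) (hK : ∀ x, |g x| ≤ K) (ha : IsAdmissibleExponent a s) :
    scaleIntegral lam a s (∑ i ∈ I, k i) g x = ∑ i ∈ I, scaleIntegral lam a s (k i) g x := by
  have hint (i : ι) := (add_zero s ▸ ha).integrableOn_scaleWeight_smul hl (k i) hg (x := x)
    fun r _ => norm_scaledAverage_le_mul_rpow_zero (k i) hK r x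
  have hsum (r : ℝ) : scaledAverage (∑ i ∈ I, k i) g r x = ∑ i ∈ I, scaledAverage (k i) g r x := by
    simp only [scaledAverage, sum_apply, Finset.smul_sum]
    exact integral_finsetSum _ fun i _ => integrable_scaledAverage (k i) hg hK r x
  simp only [scaleIntegral, hsum, Finset.smul_sum]
  exact integral_finsetSum _ fun i _ => hint i

/-- Integration by parts in the scale: `k'` plays the role of the Laplacian of the Gaussian `k`. -/
lemma scaleIntegral_neg_one_eq [CompleteSpace F] {k k' : 𝓢(E, F)} {ε : ℝ}
    (hk' : ∀ z, (Module.finrank ℝ E : ℝ) • k z + fderiv ℝ k z z = -k' z) (hl : 0 < lam)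
    (hg : Measurable g) (hK : ∀ x, |g x| ≤ K) (hε : 0 < ε) (x : E) :
    scaleIntegral lam ε (-1) k' g x = lam • scaleIntegral lam ε 1 k g x -
      Real.exp (-(lam / 2) * ε ^ 2) • scaledAverage k g ε x := by
  have hderiv : ∀ r ∈ Ici ε, HasDerivAt
      (fun r => Real.exp (-(lam / 2) * r ^ 2) • scaledAverage k g r x)
      (scaleWeight lam (-1) r • scaledAverage k' g r x -
        lam • scaleWeight lam 1 r • scaledAverage k g r x) r := fun r hr => by
    have hr0 : 0 < r := hε.trans_le hr
    have hexp : HasDerivAt (fun r : ℝ => Real.exp (-(lam / 2) * r ^ 2)) _ r :=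
      ((hasDerivAt_pow 2 r).const_mul (-(lam / 2))).exp
    refine (hexp.fun_smul (hasDerivAt_scaledAverage_scale hk' hg hK hr0 x)).congr_deriv ?_
    simp only [scaleWeight, Real.rpow_one, Real.rpow_neg_one, smul_smul]
    rw [sub_eq_add_neg, ← neg_smul]
    congr 2 <;> ring
  have hint (s : ℝ) (k : 𝓢(E, F)) :=
    (isAdmissibleExponent_of_pos hε (s + 0)).integrableOn_scaleWeight_smul hl k hg (x := x)
      fun r _ => norm_scaledAverage_le_mul_rpow_zero k hK r x
  have hdecay : Tendsto (fun r => Real.exp (-(lam / 2) * r ^ 2) • scaledAverage k g r x) atTop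
      (𝓝 0) := by
    have hexp : Tendsto (fun r : ℝ => Real.exp (-(lam / 2) * r ^ 2)) atTop (𝓝 0) :=
      Real.tendsto_exp_atBot.comp
        ((tendsto_pow_atTop two_ne_zero).const_mul_atTop_of_neg (by linarith))
    exact hexp.zero_smul_isBoundedUnder_le
      (isBoundedUnder_of ⟨K * kernelMoment k, fun r => norm_scaledAverage_le k hK r x⟩)
  have hparts := integral_Ioi_of_hasDerivAt_of_tendsto' hderiv
    ((hint (-1) k').sub ((hint 1 k).smul lam)) hdecay
  have hsplit := integral_sub (hint (-1) k') ((hint 1 k).smul lam)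
  simp only [Pi.smul_apply, integral_smul] at hsplit
  rw [hsplit] at hparts
  rw [sub_eq_iff_eq_add] at hparts
  rw [scaleIntegral, scaleIntegral, hparts]
  abel

lemma hasFDerivAt_scaleIntegral_of_truncation (hl : 0 < lam) (h0 : 0 < σ) (k : 𝓢(E, F))
    (hg : Measurable g) (hK : ∀ x, |g x| ≤ K) {D : E → E →L[ℝ] F} {S : Set E} (hS : IsOpen S)
    {C : ℝ} (hD : ∀ x ∈ S, ∀ ε, 0 < ε → ε ≤ 1 →
      ‖scaleIntegral lam ε (-1) (SchwartzMap.fderivCLM ℝ E F k) g x - D x‖ ≤ C * ε ^ σ)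
    (hx : x ∈ S) : HasFDerivAt (scaleIntegral lam 0 0 k g) (-D x) x := by
  have hε (n : ℕ) : (0 : ℝ) < 1 / (n + 1) := Nat.one_div_pos_of_nat
  have hsmall (p C : ℝ) (hp : 0 < p) :
      Tendsto (fun n : ℕ => C * (1 / ((n : ℝ) + 1)) ^ p) atTop (𝓝 0) := by
    have h := (tendsto_one_div_add_atTop_nhds_zero_nat (𝕜 := ℝ)).rpow_const (p := p) (Or.inr hp.le)
    simpa [Real.zero_rpow hp.ne'] using h.const_mul C
  refine hasFDerivAt_of_tendstoUniformlyOn (l := atTop) hS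
    (f := fun (n : ℕ) => scaleIntegral lam (1 / ((n : ℝ) + 1)) 0 k g)
    (f' := fun (n : ℕ) x =>
      -scaleIntegral lam (1 / ((n : ℝ) + 1)) (-1) (SchwartzMap.fderivCLM ℝ E F k) g x)
    (g' := fun x => -D x) ?_ (fun n x _ => ?_) (fun x _ => ?_) hx
  · refine Metric.tendstoUniformlyOn_iff.2 fun e he => ?_
    filter_upwards [(hsmall σ C h0).eventually_lt_const he] with n hn x hx
    rw [dist_neg_neg, dist_comm, dist_eq_norm]
    exact (hD x hx _ (hε n) (div_le_one_of_le₀ (by simp) (by positivity))).trans_lt hn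
  · simpa using hasFDerivAt_scaleIntegral (s := 0) (τ := 0) (τ' := 0) (x := x) hl k hg hK
      (isAdmissibleExponent_of_pos (hε n) _)
      (fun r _ => norm_scaledAverage_le_mul_rpow_zero k hK r x)
      (isAdmissibleExponent_of_pos (hε n) _)
      (fun r _ => norm_scaledAverage_le_mul_rpow_zero _ hK r)
  · have htail (n : ℕ) := norm_scaleIntegral_sub_truncation_le (s := 0) (τ := 0) (x := x) hl k hg
      (by norm_num) (fun r _ => norm_scaledAverage_le_mul_rpow_zero k hK r x) (hε n).le
    refine tendsto_iff_norm_sub_tendsto_zero.2 (squeeze_zero (fun _ => norm_nonneg _)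
      (fun n => (norm_sub_rev _ _).trans_le (htail n)) (hsmall _ _ (by norm_num)))

end ScaleIntegral

section Ambient

variable {m : ℕ}

/-- The space `ℝ^m × ℝ` with variables `(y, t)`. -/
abbrev Ambient (m : ℕ) : Type := EuclideanSpace ℝ (Fin m) × ℝ

instance : (volume : Measure (Ambient m)).IsAddHaarMeasure := by
  rw [Measure.volume_eq_prod]; infer_instance

/-- The standard basis of `ℝ^m × ℝ`; the index `inr ()` is the normal direction. -/
noncomputable def stdBasis (m : ℕ) : Module.Basis (Fin m ⊕ Unit) ℝ (Ambient m) :=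
  (EuclideanSpace.basisFun (Fin m) ℝ).toBasis.prod (Module.Basis.singleton Unit ℝ)

@[simp] lemma stdBasis_inl (i : Fin m) : stdBasis m (.inl i) = (EuclideanSpace.single i 1, 0) := by
  ext <;> simp [stdBasis]

@[simp] lemma stdBasis_inr (i : Unit) : stdBasis m (.inr i) = (0, 1) := by
  ext <;> simp [stdBasis]

lemma lapP_eq_sum_stdBasis (u : Ambient m → ℝ) (x : Ambient m) :
    lapP u x = ∑ j, fderiv ℝ (fun y => fderiv ℝ u y (stdBasis m j)) x (stdBasis m j) := by
  simp [lapP, Fintype.sum_sum_type]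

/-- The Gaussian density on `ℝ^m × ℝ`. The product carries the sup norm, so the Gaussian is
transported from the Euclidean norm of `WithLp 2`. -/
noncomputable def gaussianDensity (m : ℕ) : 𝓢(Ambient m, ℝ) :=
  (∫ x : Ambient m, gaussian (WithLp 2 (Ambient m)) (WithLp.toLp 2 x))⁻¹ •
    SchwartzMap.compCLMOfContinuousLinearEquiv ℝ
      (WithLp.prodContinuousLinearEquiv 2 ℝ (EuclideanSpace ℝ (Fin m)) ℝ).symm
      (gaussian (WithLp 2 (Ambient m)))

lemma gaussianDensity_apply (x : Ambient m) : gaussianDensity m x =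
    (∫ x : Ambient m, gaussian (WithLp 2 (Ambient m)) (WithLp.toLp 2 x))⁻¹ *
      gaussian (WithLp 2 (Ambient m)) (WithLp.toLp 2 x) := rfl

lemma gaussianDensity_neg_snd (y : EuclideanSpace ℝ (Fin m)) (t : ℝ) :
    gaussianDensity m (y, -t) = gaussianDensity m (y, t) := by
  simp [gaussianDensity_apply, gaussian_apply, WithLp.prod_norm_sq_eq_of_L2]

lemma integral_gaussianDensity : ∫ x, gaussianDensity m x = 1 := by
  have hint : Integrable fun x : Ambient m => gaussian (WithLp 2 (Ambient m)) (WithLp.toLp 2 x) :=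
    (SchwartzMap.compCLMOfContinuousLinearEquiv ℝ
      (WithLp.prodContinuousLinearEquiv 2 ℝ (EuclideanSpace ℝ (Fin m)) ℝ).symm
      (gaussian (WithLp 2 (Ambient m)))).integrable
  have hpos : 0 < ∫ x : Ambient m, gaussian (WithLp 2 (Ambient m)) (WithLp.toLp 2 x) := by
    refine integral_pos_of_integrable_nonneg_nonzero (x := 0) ?_ hint
      (fun x => by simpa [gaussian_apply] using (Real.exp_pos _).le) (by simp [gaussian_apply])
    have := (gaussian (WithLp 2 (Ambient m))).continuous
    fun_prop
  simp only [gaussianDensity_apply]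
  rw [integral_const_mul, inv_mul_cancel₀ hpos.ne']

lemma lineDerivOp_gaussianDensity (v : Ambient m) : ∂_{v} (gaussianDensity m) =
    (∫ x : Ambient m, gaussian (WithLp 2 (Ambient m)) (WithLp.toLp 2 x))⁻¹ •
      SchwartzMap.compCLMOfContinuousLinearEquiv ℝ
        (WithLp.prodContinuousLinearEquiv 2 ℝ (EuclideanSpace ℝ (Fin m)) ℝ).symm
        (∂_{WithLp.toLp 2 v} (gaussian (WithLp 2 (Ambient m)))) := by
  rw [gaussianDensity, LineDeriv.lineDerivOp_smul,
    SchwartzMap.lineDerivOp_compCLMOfContinuousLinearEquiv]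
  rfl

lemma finrank_smul_gaussianDensity_add_fderiv (z : Ambient m) :
    (Module.finrank ℝ (Ambient m) : ℝ) • gaussianDensity m z + fderiv ℝ (gaussianDensity m) z z =
      -(∑ j, ∂_{stdBasis m j} (∂_{stdBasis m j} (gaussianDensity m))) z := by
  have hbasis (j : Fin m ⊕ Unit) : (EuclideanSpace.basisFun (Fin m) ℝ).prod
      (OrthonormalBasis.singleton Unit ℝ) j = WithLp.toLp 2 (stdBasis m j) := by
    rcases j with i | i <;> simp
  have hfderiv : fderiv ℝ (gaussianDensity m) z z = ∂_{z} (gaussianDensity m) z := rfl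
  have hcomp (k : 𝓢(WithLp 2 (Ambient m), ℝ)) :
      SchwartzMap.compCLMOfContinuousLinearEquiv ℝ
        (WithLp.prodContinuousLinearEquiv 2 ℝ (EuclideanSpace ℝ (Fin m)) ℝ).symm k z =
        k (WithLp.toLp 2 z) := rfl
  have hid := card_mul_gaussian_add_fderiv ((EuclideanSpace.basisFun (Fin m) ℝ).prod
    (OrthonormalBasis.singleton Unit ℝ)) (WithLp.toLp 2 z)
  simp only [hbasis, ← SchwartzMap.lineDerivOp_apply_eq_fderiv] at hid
  rw [Module.finrank_eq_card_basis (stdBasis m), hfderiv, sum_apply]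
  simp only [lineDerivOp_gaussianDensity, LineDeriv.lineDerivOp_smul,
    SchwartzMap.lineDerivOp_compCLMOfContinuousLinearEquiv, smul_apply, smul_eq_mul]
  rw [← Finset.mul_sum]
  simp only [hcomp, gaussianDensity_apply, WithLp.prodContinuousLinearEquiv_symm_apply]
  linear_combination (∫ x : Ambient m, gaussian (WithLp 2 (Ambient m)) (WithLp.toLp 2 x))⁻¹ * hid

end Ambient

section Resolvent

variable {m : ℕ} {lam σ K : ℝ} {g : Ambient m → ℝ}

/-- Bounded measurable functions that are `σ`-Hölder along each horizontal slice `t = const`, with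
both the bound and the Hölder constant at most `K`. -/
structure IsTangentiallyHolder (σ K : ℝ) (g : Ambient m → ℝ) : Prop where
  measurable : Measurable g
  abs_le : ∀ x, |g x| ≤ K
  abs_sub_le : ∀ y y' t, |g (y, t) - g (y', t)| ≤ K * ‖y - y'‖ ^ σ

lemma IsTangentiallyHolder.nonneg (hg : IsTangentiallyHolder σ K g) : 0 ≤ K :=
  (abs_nonneg _).trans (hg.abs_le 0)

lemma IsTangentiallyHolder.norm_scaledAverage_lineDerivOp_le {F : Type*} [NormedAddCommGroup F]
    [NormedSpace ℝ F] (hg : IsTangentiallyHolder σ K g) (h0 : 0 ≤ σ) (h1 : σ ≤ 1)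
    (k : 𝓢(Ambient m, F)) {v : Ambient m} (hv : v.2 = 0) {r : ℝ} (hr : 0 < r) (x : Ambient m) :
    ‖scaledAverage (∂_{v} k) g r x‖ ≤ K * kernelMoment (∂_{v} k) * r ^ σ := by
  refine HalfSpaceDirichlet.norm_scaledAverage_lineDerivOp_le k hg.measurable hg.abs_le
    (g' := fun z => g (x.1, z.2)) (hg.measurable.comp (by fun_prop)) (fun _ => hg.abs_le _)
    (fun z s => by simp [hv]) h0 h1 hg.nonneg (fun z => ?_) hr
  refine (hg.abs_sub_le _ _ _).trans ?_
  have hz : ‖(x + z).1 - x.1‖ ≤ ‖z‖ := by simpa using norm_fst_le z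
  exact mul_le_mul_of_nonneg_left (Real.rpow_le_rpow (norm_nonneg _) hz h0) hg.nonneg

lemma IsTangentiallyHolder.exists_holderLe_scaleIntegral_lineDerivOp (hl : 0 < lam) (h0 : 0 < σ)
    (h1 : σ < 1) (k : 𝓢(Ambient m, ℝ)) {v : Ambient m} (hv : v.2 = 0) :
    ∃ C, 0 ≤ C ∧ ∀ {g : Ambient m → ℝ} {K : ℝ}, IsTangentiallyHolder σ K g →
      HolderLe σ univ (scaleIntegral lam 0 (-1) (∂_{v} k) g) (C * K) := by
  set N := kernelMoment (∂_{v} k)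
  set N' := kernelMoment (SchwartzMap.fderivCLM ℝ _ _ (∂_{v} k)) with hN'_def
  set I := ∫ r in Ioi 0, scaleWeight lam (-1 + σ) r
  have hN : 0 ≤ N := kernelMoment_nonneg _
  have hN' : 0 ≤ N' := kernelMoment_nonneg _
  have hI : 0 ≤ I :=
    setIntegral_nonneg measurableSet_Ioi fun r hr => scaleWeight_nonneg (le_of_lt hr)
  have hC : 0 ≤ 2 * N / σ + N' / (1 - σ) := by
    have := sub_pos.2 h1
    positivity
  refine ⟨N * I + (2 * N / σ + N' / (1 - σ)), by positivity, fun {g K} hg => ?_⟩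
  have hK := hg.nonneg
  have hbound (r : ℝ) (hr : 0 < r) (x : Ambient m) :=
    hg.norm_scaledAverage_lineDerivOp_le h0.le h1.le k hv hr x
  have hbound' (r : ℝ) (hr : 0 < r) (x : Ambient m) :
      ‖scaledAverage (SchwartzMap.fderivCLM ℝ _ _ (∂_{v} k)) g r x‖ ≤ K * N' * r ^ σ := by
    rw [hN'_def, fderivCLM_lineDerivOp]
    exact hg.norm_scaledAverage_lineDerivOp_le h0.le h1.le _ hv hr x
  refine ⟨fun x _ => ?_, fun x _ y _ => ?_⟩
  · refine (norm_scaleIntegral_le hl _ (by linarith) fun r hr => hbound r hr x).trans ?_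
    linear_combination mul_nonneg hC hK
  · refine (norm_scaleIntegral_sub_le_rpow hl h0 h1 _ hg.measurable hg.abs_le hbound hbound'
      x y).trans ?_
    have : 0 ≤ N * I * K * ‖x - y‖ ^ σ := by positivity
    rw [dist_eq_norm]
    linear_combination this

/-- `(lam - Δ)⁻¹ g` on the whole space: the Laplace transform of the heat semigroup, written in the
scale variable. -/
noncomputable def resolvent (lam : ℝ) (g : Ambient m → ℝ) : Ambient m → ℝ :=
  scaleIntegral lam 0 1 (gaussianDensity m) g

/-- The derivative of `resolvent lam g`. -/
noncomputable def resolventDeriv (lam : ℝ) (g : Ambient m → ℝ) (x : Ambient m) :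
    Ambient m →L[ℝ] ℝ :=
  -scaleIntegral lam 0 0 (SchwartzMap.fderivCLM ℝ _ _ (gaussianDensity m)) g x

lemma hasFDerivAt_resolvent (hl : 0 < lam) (hg : Measurable g) (hK : ∀ x, |g x| ≤ K)
    (x : Ambient m) : HasFDerivAt (resolvent lam g) (resolventDeriv lam g x) x := by
  simpa [resolvent, resolventDeriv] using hasFDerivAt_scaleIntegral (s := 1) (τ := 0) (τ' := 0)
    (x := x) hl (gaussianDensity m) hg hK (isAdmissibleExponent_zero (by norm_num))
    (fun r _ => norm_scaledAverage_le_mul_rpow_zero _ hK r x)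
    (isAdmissibleExponent_zero (by norm_num))
    (fun r _ => norm_scaledAverage_le_mul_rpow_zero _ hK r)

lemma continuous_resolventDeriv (hl : 0 < lam) (hg : Measurable g) (hK : ∀ x, |g x| ≤ K) :
    Continuous (resolventDeriv lam g) :=
  (continuous_scaleIntegral hl _ hg hK (isAdmissibleExponent_zero (by norm_num))).neg

lemma exists_holderLe_resolvent (hl : 0 < lam) (h0 : 0 ≤ σ) (h1 : σ ≤ 1) :
    ∃ C, 0 ≤ C ∧ ∀ {g : Ambient m → ℝ} {K : ℝ}, Measurable g → (∀ x, |g x| ≤ K) →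
      HolderLe σ univ (resolvent lam g) (C * K) := by
  set ρ := gaussianDensity m
  set N := kernelMoment ρ * ∫ r in Ioi 0, scaleWeight lam 1 r
  set N' := kernelMoment (SchwartzMap.fderivCLM ℝ _ _ ρ) * ∫ r in Ioi 0, scaleWeight lam 0 r
  have hI (s : ℝ) : 0 ≤ ∫ r in Ioi 0, scaleWeight lam s r :=
    setIntegral_nonneg measurableSet_Ioi fun r hr => scaleWeight_nonneg (le_of_lt hr)
  have hN : 0 ≤ N := mul_nonneg (kernelMoment_nonneg _) (hI 1)
  have hN' : 0 ≤ N' := mul_nonneg (kernelMoment_nonneg _) (hI 0)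
  refine ⟨2 * N + N', by positivity, fun {g K} hg hK => ?_⟩
  have hK0 : 0 ≤ K := (abs_nonneg _).trans (hK 0)
  have hbound (x : Ambient m) : ‖resolvent lam g x‖ ≤ N * K := by
    have h := norm_scaleIntegral_le (s := 1) (τ := 0) (x := x) hl ρ (by norm_num) fun r _ =>
      norm_scaledAverage_le_mul_rpow_zero ρ hK r x
    rw [add_zero] at h
    exact h.trans_eq (by ring)
  have hderiv (x : Ambient m) : ‖resolventDeriv lam g x‖ ≤ N' * K := by
    have h := norm_scaleIntegral_le (s := 0) (τ := 0) (x := x) hl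
      (SchwartzMap.fderivCLM ℝ _ _ ρ) (by norm_num) fun r _ =>
        norm_scaledAverage_le_mul_rpow_zero _ hK r x
    rw [add_zero] at h
    rw [resolventDeriv, norm_neg]
    exact h.trans_eq (by ring)
  rw [add_mul, mul_assoc]
  refine HolderLe.of_norm_le_of_norm_sub_le h0 h1 (fun x _ => hbound x) (fun x _ y _ => ?_)
    (by positivity)
  rw [dist_eq_norm]
  exact convex_univ.norm_image_sub_le_of_norm_hasFDerivWithin_le
    (fun z _ => (hasFDerivAt_resolvent hl hg hK z).hasFDerivWithinAt) (fun z _ => hderiv z)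
    trivial trivial

end Resolvent

section ResolventHessian

variable {m : ℕ} {lam σ K : ℝ} {g : Ambient m → ℝ} {j k : Fin m ⊕ Unit}

/-- The second derivatives `∂_j ∂_k` of the Gaussian density. -/
noncomputable def gaussianHessian (m : ℕ) (j k : Fin m ⊕ Unit) : 𝓢(Ambient m, ℝ) :=
  ∂_{stdBasis m k} (∂_{stdBasis m j} (gaussianDensity m))

lemma exists_gaussianHessian_eq_lineDerivOp (h : ¬(j.isRight ∧ k.isRight)) :
    ∃ (v : Ambient m) (κ : 𝓢(Ambient m, ℝ)), v.2 = 0 ∧ gaussianHessian m j k = ∂_{v} κ := by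
  rcases k with i | i
  · exact ⟨_, _, by simp, rfl⟩
  rcases j with i' | i'
  · exact ⟨_, _, by simp, lineDerivOp_comm _ _ _⟩
  · simp at h

/-- The second derivatives `∂_j ∂_k` of `resolvent lam g`. The purely normal one, whose integral
over the scales need not converge, is read off from `lam u - Δu = g`. -/
noncomputable def resolventHessianEntry (lam : ℝ) (g : Ambient m → ℝ) (j k : Fin m ⊕ Unit)
    (x : Ambient m) : ℝ :=
  if j.isRight ∧ k.isRight then
    lam * resolvent lam g x -
      ∑ i, scaleIntegral lam 0 (-1) (gaussianHessian m (.inl i) (.inl i)) g x - g x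
  else scaleIntegral lam 0 (-1) (gaussianHessian m j k) g x

/-- The second derivative of `resolvent lam g`. -/
noncomputable def resolventHessian (lam : ℝ) (g : Ambient m → ℝ) (x : Ambient m) :
    Ambient m →L[ℝ] Ambient m →L[ℝ] ℝ :=
  (stdBasis m).constrL fun j => (stdBasis m).constrL fun k => resolventHessianEntry lam g j k x

lemma resolventHessian_stdBasis (j k : Fin m ⊕ Unit) (x : Ambient m) :
    resolventHessian lam g x (stdBasis m j) (stdBasis m k) =
      resolventHessianEntry lam g j k x := by
  simp only [resolventHessian, Module.Basis.constrL_basis]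

lemma sum_resolventHessian_stdBasis (x : Ambient m) :
    ∑ j, resolventHessian lam g x (stdBasis m j) (stdBasis m j) =
      lam * resolvent lam g x - g x := by
  simp only [resolventHessian_stdBasis, resolventHessianEntry, Fintype.sum_sum_type,
    Sum.isRight_inl, Sum.isRight_inr, Bool.false_eq_true, and_self, if_true, if_false,
    Finset.univ_unique, Finset.sum_singleton]
  ring

lemma exists_holderLe_scaleIntegral_gaussianHessian (hl : 0 < lam) (h0 : 0 < σ) (h1 : σ < 1)
    (h : ¬(j.isRight ∧ k.isRight)) : ∃ C, 0 ≤ C ∧ ∀ {g : Ambient m → ℝ} {K : ℝ},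
      IsTangentiallyHolder σ K g →
        HolderLe σ univ (scaleIntegral lam 0 (-1) (gaussianHessian m j k) g) (C * K) := by
  obtain ⟨v, κ, hv, hκ⟩ := exists_gaussianHessian_eq_lineDerivOp h
  rw [hκ]
  exact IsTangentiallyHolder.exists_holderLe_scaleIntegral_lineDerivOp hl h0 h1 κ hv

lemma exists_holderLe_resolventHessianEntry (hl : 0 < lam) (h0 : 0 < σ) (h1 : σ < 1)
    (j k : Fin m ⊕ Unit) : ∃ C, 0 ≤ C ∧ ∀ {g : Ambient m → ℝ} {K : ℝ} {Λ : Set (Ambient m)},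
      IsTangentiallyHolder σ K g → HolderLe σ Λ g K →
        HolderLe σ Λ (resolventHessianEntry lam g j k) (C * K) := by
  by_cases hjk : j.isRight ∧ k.isRight
  · obtain ⟨C, hC, hU⟩ := exists_holderLe_resolvent (m := m) hl h0.le h1.le
    choose D hD hR using fun i : Fin m =>
      exists_holderLe_scaleIntegral_gaussianHessian (m := m) (j := .inl i) (k := .inl i) hl h0 h1
        (by simp)
    refine ⟨lam * C + ∑ i, D i + 1, ?_, fun {g K Λ} hg hgΛ => ?_⟩
    · have := Finset.sum_nonneg fun i (_ : i ∈ Finset.univ) => hD i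
      positivity
    · have h := ((((hU hg.measurable hg.abs_le).mono_set (subset_univ Λ)).const_mul hl.le).sub
        (HolderLe.sum Finset.univ fun i _ => (hR i hg).mono_set (subset_univ Λ))).sub hgΛ
      refine (h.congr fun x _ => (if_pos hjk).symm).mono ?_
      rw [← Finset.sum_mul]
      linarith
  · obtain ⟨C, hC, hR⟩ := exists_holderLe_scaleIntegral_gaussianHessian (m := m) hl h0 h1 hjk
    exact ⟨C, hC, fun hg _ =>
      ((hR hg).mono_set (subset_univ _)).congr fun x _ => (if_neg hjk).symm⟩

lemma exists_holderLe_resolventHessian (hl : 0 < lam) (h0 : 0 < σ) (h1 : σ < 1) :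
    ∃ C, 0 ≤ C ∧ ∀ {g : Ambient m → ℝ} {K : ℝ} {Λ : Set (Ambient m)},
      IsTangentiallyHolder σ K g → HolderLe σ Λ g K →
        HolderLe σ Λ (resolventHessian lam g) (C * K) := by
  obtain ⟨B, hB, hinner⟩ := HolderLe.exists_of_basis (X := Ambient m) (Y := ℝ) (stdBasis m)
  obtain ⟨B', hB', houter⟩ :=
    HolderLe.exists_of_basis (X := Ambient m) (Y := Ambient m →L[ℝ] ℝ) (stdBasis m)
  choose C hC hentry using exists_holderLe_resolventHessianEntry (m := m) hl h0 h1
  have hsum : 0 ≤ ∑ j, ∑ k, C j k :=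
    Finset.sum_nonneg fun j _ => Finset.sum_nonneg fun k _ => hC j k
  have hle (j k : Fin m ⊕ Unit) : C j k ≤ ∑ j, ∑ k, C j k :=
    (Finset.single_le_sum (fun k _ => hC j k) (Finset.mem_univ k)).trans
      (Finset.single_le_sum (f := fun j => ∑ k, C j k)
        (fun j _ => Finset.sum_nonneg fun k _ => hC j k) (Finset.mem_univ j))
  refine ⟨B' * (B * ∑ j, ∑ k, C j k), by positivity, fun {g K Λ} hg hgΛ => ?_⟩
  have hK := hg.nonneg
  rw [mul_assoc, mul_assoc]
  refine houter (by positivity) fun j => hinner (by positivity) fun k => ?_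
  simp only [resolventHessian_stdBasis]
  exact (hentry j k hg hgΛ).mono (by gcongr; exact hle j k)

end ResolventHessian

section ResolventSecondDerivative

variable {m : ℕ} {lam σ K A ε : ℝ} {g : Ambient m → ℝ} {x : Ambient m}

lemma abs_exp_neg_sq_sub_one_le (hl : 0 ≤ lam) :
    |Real.exp (-(lam / 2) * ε ^ 2) - 1| ≤ lam / 2 * ε ^ 2 := by
  have hnonneg : 0 ≤ lam / 2 * ε ^ 2 := by positivity
  rw [abs_sub_comm, abs_of_nonneg (sub_nonneg.2 (Real.exp_le_one_iff.2 (by linarith)))]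
  linarith [Real.add_one_le_exp (-(lam / 2) * ε ^ 2)]

lemma IsTangentiallyHolder.exists_abs_scaleIntegral_truncation_sub_le (hl : 0 < lam) (h0 : 0 < σ)
    (h1 : σ < 1) (hg : IsTangentiallyHolder σ K g) {j k : Fin m ⊕ Unit}
    (hjk : ¬(j.isRight ∧ k.isRight)) : ∃ C, ∀ x ε, 0 < ε →
      |scaleIntegral lam ε (-1) (gaussianHessian m j k) g x -
        scaleIntegral lam 0 (-1) (gaussianHessian m j k) g x| ≤ C * ε ^ σ := by
  obtain ⟨v, κ, hv, hκ⟩ := exists_gaussianHessian_eq_lineDerivOp hjk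
  refine ⟨K * kernelMoment (∂_{v} κ) / σ, fun x ε hε => ?_⟩
  rw [hκ, abs_sub_comm]
  simpa using norm_scaleIntegral_sub_truncation_le (s := -1) hl (∂_{v} κ) hg.measurable
    (by linarith) (fun r hr => hg.norm_scaledAverage_lineDerivOp_le h0.le h1.le κ hv hr x) hε.le

lemma abs_truncation_sub_resolvent_le (hl : 0 < lam) (hg : Measurable g) (hK : ∀ x, |g x| ≤ K)
    (hε : 0 < ε) (x : Ambient m) :
    |scaleIntegral lam ε 1 (gaussianDensity m) g x - resolvent lam g x| ≤
      K * kernelMoment (gaussianDensity m) / 2 * ε ^ 2 := by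
  have h := norm_scaleIntegral_sub_truncation_le (s := 1) (τ := 0) (x := x) hl (gaussianDensity m)
    hg (by norm_num) (fun r _ => norm_scaledAverage_le_mul_rpow_zero _ hK r x) hε.le
  rw [Real.norm_eq_abs, abs_sub_comm] at h
  have hexp : (1 : ℝ) + 0 + 1 = (2 : ℕ) := by norm_num
  rwa [hexp, Real.rpow_natCast, Nat.cast_two] at h

lemma exists_abs_exp_mul_scaledAverage_sub_le (hl : 0 < lam) (h0 : 0 ≤ σ) (h1 : σ ≤ 1)
    (hg : Measurable g) (hK : ∀ x, |g x| ≤ K) (hA : 0 ≤ A) : ∃ C, ∀ x ε,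
      (∀ z, |g (x + z) - g x| ≤ A * ‖z‖ ^ σ) → 0 < ε → ε ^ 2 ≤ ε ^ σ →
        |Real.exp (-(lam / 2) * ε ^ 2) * scaledAverage (gaussianDensity m) g ε x - g x| ≤
          C * ε ^ σ := by
  set N := kernelMoment (gaussianDensity m)
  refine ⟨lam / 2 * (K * N) + A * N, fun x ε hx hε hle => ?_⟩
  set S := scaledAverage (gaussianDensity m) g ε x
  have hS : |S| ≤ K * N := norm_scaledAverage_le (gaussianDensity m) hK ε x
  have happrox : |S - g x| ≤ A * N * ε ^ σ :=
    abs_scaledAverage_sub_self_le integral_gaussianDensity hg hK h0 h1 hA hx hε.le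
  have hexp : |Real.exp (-(lam / 2) * ε ^ 2) - 1| ≤ lam / 2 * ε ^ σ :=
    (abs_exp_neg_sq_sub_one_le hl.le).trans (by gcongr)
  calc |Real.exp (-(lam / 2) * ε ^ 2) * S - g x|
      = |(Real.exp (-(lam / 2) * ε ^ 2) - 1) * S + (S - g x)| := by ring_nf
    _ ≤ lam / 2 * ε ^ σ * (K * N) + A * N * ε ^ σ := by
      refine (abs_add_le _ _).trans (add_le_add ?_ happrox)
      rw [abs_mul]
      gcongr
    _ = _ := by ring

lemma scaleIntegral_gaussianHessian_normal (hl : 0 < lam) (hg : Measurable g)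
    (hK : ∀ x, |g x| ≤ K) (hε : 0 < ε) (u u' : Unit) (x : Ambient m) :
    scaleIntegral lam ε (-1) (gaussianHessian m (.inr u) (.inr u')) g x =
      lam * scaleIntegral lam ε 1 (gaussianDensity m) g x -
      ∑ i, scaleIntegral lam ε (-1) (gaussianHessian m (.inl i) (.inl i)) g x -
      Real.exp (-(lam / 2) * ε ^ 2) * scaledAverage (gaussianDensity m) g ε x := by
  have hparts := scaleIntegral_neg_one_eq (k := gaussianDensity m)
    (k' := ∑ j, gaussianHessian m j j)
    (fun z => by simpa [gaussianHessian] using finrank_smul_gaussianDensity_add_fderiv z)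
    hl hg hK hε x
  rw [scaleIntegral_sum _ hl _ hg hK (isAdmissibleExponent_of_pos hε _),
    Fintype.sum_sum_type] at hparts
  simp only [Finset.univ_unique, Finset.sum_singleton, smul_eq_mul] at hparts
  exact eq_sub_of_add_eq' hparts |>.trans (sub_right_comm _ _ _)

lemma IsTangentiallyHolder.exists_abs_truncation_sub_resolventHessianEntry_le (hl : 0 < lam)
    (h0 : 0 < σ) (h1 : σ < 1) (hg : IsTangentiallyHolder σ K g) (hA : 0 ≤ A)
    (j k : Fin m ⊕ Unit) : ∃ C, ∀ x ε,
      (∀ z, |g (x + z) - g x| ≤ A * ‖z‖ ^ σ) → 0 < ε → ε ≤ 1 →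
        |scaleIntegral lam ε (-1) (gaussianHessian m j k) g x -
          resolventHessianEntry lam g j k x| ≤ C * ε ^ σ := by
  by_cases hjk : j.isRight ∧ k.isRight
  · obtain ⟨⟨u, rfl⟩, ⟨u', rfl⟩⟩ := hjk.imp Sum.isRight_iff.1 Sum.isRight_iff.1
    choose R hR using fun i : Fin m =>
      hg.exists_abs_scaleIntegral_truncation_sub_le hl h0 h1 (j := .inl i) (k := .inl i) (by simp)
    obtain ⟨C, hC⟩ := exists_abs_exp_mul_scaledAverage_sub_le hl h0.le h1.le hg.measurable
      hg.abs_le hA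
    have hK := hg.nonneg
    set N := kernelMoment (gaussianDensity m)
    have hN : 0 ≤ N := kernelMoment_nonneg _
    refine ⟨lam * (K * N / 2) + ∑ i, R i + C, fun x ε hx hε hε1 => ?_⟩
    have hle : ε ^ 2 ≤ ε ^ σ := by
      rw [← Real.rpow_natCast]
      exact Real.rpow_le_rpow_of_exponent_ge hε hε1 (by push_cast; linarith)
    rw [scaleIntegral_gaussianHessian_normal hl hg.measurable hg.abs_le hε,
      resolventHessianEntry, if_pos (by simp), sub_sub_sub_comm _ (Real.exp _ * _),
      sub_sub_sub_comm (lam * _), ← mul_sub, ← Finset.sum_sub_distrib, add_mul, add_mul,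
      Finset.sum_mul]
    refine (abs_sub _ _).trans (add_le_add ((abs_sub _ _).trans (add_le_add ?_ ?_)) ?_)
    · rw [abs_mul, abs_of_pos hl, mul_assoc]
      gcongr
      exact (abs_truncation_sub_resolvent_le hl hg.measurable hg.abs_le hε x).trans (by gcongr)
    · exact (Finset.abs_sum_le_sum_abs _ _).trans (Finset.sum_le_sum fun i _ => hR i x ε hε)
    · exact hC x ε hx hε hle
  · obtain ⟨C, hC⟩ := hg.exists_abs_scaleIntegral_truncation_sub_le hl h0 h1 hjk
    refine ⟨C, fun x ε _ hε _ => ?_⟩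
    rw [resolventHessianEntry, if_neg hjk]
    exact hC x ε hε

lemma scaleIntegral_fderivCLM_fderivCLM_stdBasis (hl : 0 < lam) (hg : Measurable g)
    (hK : ∀ x, |g x| ≤ K) (hε : 0 < ε) (j k : Fin m ⊕ Unit) (x : Ambient m) :
    scaleIntegral lam ε (-1) (SchwartzMap.fderivCLM ℝ _ _
        (SchwartzMap.fderivCLM ℝ _ _ (gaussianDensity m))) g x (stdBasis m j) (stdBasis m k) =
      scaleIntegral lam ε (-1) (gaussianHessian m j k) g x := by
  have ha : IsAdmissibleExponent ε (-1 + 0) := isAdmissibleExponent_of_pos hε _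
  rw [scaleIntegral_fderivCLM_apply hl _ hg hK _ ha fun r _ =>
      norm_scaledAverage_le_mul_rpow_zero _ hK r x,
    ← fderivCLM_lineDerivOp, scaleIntegral_fderivCLM_apply hl _ hg hK _ ha fun r _ =>
      norm_scaledAverage_le_mul_rpow_zero _ hK r x, gaussianHessian]

lemma IsTangentiallyHolder.exists_norm_truncation_sub_resolventHessian_le (hl : 0 < lam)
    (h0 : 0 < σ) (h1 : σ < 1) (hg : IsTangentiallyHolder σ K g) (hA : 0 ≤ A) : ∃ C, ∀ x ε,
      (∀ z, |g (x + z) - g x| ≤ A * ‖z‖ ^ σ) → 0 < ε → ε ≤ 1 →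
        ‖scaleIntegral lam ε (-1) (SchwartzMap.fderivCLM ℝ _ _
          (SchwartzMap.fderivCLM ℝ _ _ (gaussianDensity m))) g x - resolventHessian lam g x‖ ≤
          C * ε ^ σ := by
  choose R hR using hg.exists_abs_truncation_sub_resolventHessianEntry_le hl h0 h1 hA
  obtain ⟨B, hB, hinner⟩ := (stdBasis m).exists_opNorm_le (F := ℝ)
  obtain ⟨B', _, houter⟩ := (stdBasis m).exists_opNorm_le (F := Ambient m →L[ℝ] ℝ)
  have hle (j k : Fin m ⊕ Unit) : R j k ≤ ∑ j, ∑ k, |R j k| :=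
    (le_abs_self _).trans <| (Finset.single_le_sum (f := fun k => |R j k|)
      (fun k _ => abs_nonneg _) (Finset.mem_univ k)).trans
      (Finset.single_le_sum (f := fun j => ∑ k, |R j k|)
        (fun j _ => Finset.sum_nonneg fun k _ => abs_nonneg _) (Finset.mem_univ j))
  refine ⟨B' * (B * ∑ j, ∑ k, |R j k|), fun x ε hx hε hε1 => ?_⟩
  have : 0 ≤ (∑ j, ∑ k, |R j k|) * ε ^ σ := by positivity
  rw [mul_assoc, mul_assoc]
  refine houter (by positivity) fun j => hinner (by positivity) fun k => ?_
  rw [sub_apply, sub_apply, scaleIntegral_fderivCLM_fderivCLM_stdBasis hl hg.measurable hg.abs_le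
    hε, resolventHessian_stdBasis]
  exact (hR j k x ε hx hε hε1).trans (by gcongr; exact hle j k)

lemma hasFDerivAt_resolventDeriv (hl : 0 < lam) (h0 : 0 < σ) (h1 : σ < 1)
    (hg : IsTangentiallyHolder σ K g) {S : Set (Ambient m)} (hS : IsOpen S) (hA : 0 ≤ A)
    (hgS : ∀ x ∈ S, ∀ z, |g (x + z) - g x| ≤ A * ‖z‖ ^ σ) (hx : x ∈ S) :
    HasFDerivAt (resolventDeriv lam g) (resolventHessian lam g x) x := by
  obtain ⟨C, hC⟩ := hg.exists_norm_truncation_sub_resolventHessian_le hl h0 h1 hA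
  have h := (hasFDerivAt_scaleIntegral_of_truncation hl h0 _ hg.measurable hg.abs_le hS
    (fun x hx ε => hC x ε (hgS x hx)) hx).neg
  rwa [neg_neg] at h

end ResolventSecondDerivative

section OddExtension

variable {m : ℕ} {lam σ K M : ℝ} {h : Ambient m → ℝ} {x : Ambient m}

lemma mem_halfSpace : x ∈ halfSpace m ↔ 0 ≤ x.2 := Iff.rfl

/-- The extension of a function on the half-space that is odd in the normal variable. -/
noncomputable def oddExtension (h : Ambient m → ℝ) (x : Ambient m) : ℝ :=
  if 0 ≤ x.2 then h x else -h (x.1, -x.2)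

lemma oddExtension_of_nonneg (hx : 0 ≤ x.2) : oddExtension h x = h x := if_pos hx

lemma oddExtension_neg_snd (h : Ambient m → ℝ) (y : EuclideanSpace ℝ (Fin m)) {t : ℝ}
    (ht : t ≠ 0) : oddExtension h (y, -t) = -oddExtension h (y, t) := by
  rcases ht.lt_or_gt with ht | ht
  · simp [oddExtension, ht.le, ht.not_ge]
  · simp [oddExtension, ht.le, ht.not_ge]

lemma oddExtension_eq_mul (h : Ambient m → ℝ) (x : Ambient m) :
    oddExtension h x = (if 0 ≤ x.2 then 1 else -1) * h (x.1, |x.2|) := by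
  unfold oddExtension
  split_ifs with hx
  · rw [abs_of_nonneg hx, one_mul]
  · rw [abs_of_neg (not_le.1 hx), neg_one_mul]

lemma abs_ite_one_neg_one_mul (p : Prop) [Decidable p] (a : ℝ) :
    |(if p then 1 else -1) * a| = |a| := by
  split_ifs <;> simp

lemma abs_oddExtension_le (hM : ∀ x ∈ halfSpace m, |h x| ≤ M) (x : Ambient m) :
    |oddExtension h x| ≤ M := by
  rw [oddExtension_eq_mul, abs_ite_one_neg_one_mul]
  exact hM _ (mem_halfSpace.2 (abs_nonneg _))

lemma measurable_oddExtension (hh : ContinuousOn h (halfSpace m)) :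
    Measurable (oddExtension h) := by
  have habs : Continuous fun x : Ambient m => h (x.1, |x.2|) :=
    hh.comp_continuous (by fun_prop) fun x => mem_halfSpace.2 (abs_nonneg x.2)
  simp only [funext (oddExtension_eq_mul h)]
  exact (Measurable.ite (measurableSet_le measurable_const measurable_snd) measurable_const
    measurable_const).mul habs.measurable

lemma isTangentiallyHolder_oddExtension (h0 : 0 < σ) (hh : HolderLe σ (halfSpace m) h K) :
    IsTangentiallyHolder σ K (oddExtension h) where
  measurable := measurable_oddExtension (hh.continuousOn h0)
  abs_le := abs_oddExtension_le hh.1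
  abs_sub_le y y' t := by
    rw [oddExtension_eq_mul, oddExtension_eq_mul, ← mul_sub, abs_ite_one_neg_one_mul]
    simpa [Prod.dist_eq, dist_eq_norm] using
      hh.2 (y, |t|) (mem_halfSpace.2 (abs_nonneg t)) (y', |t|) (mem_halfSpace.2 (abs_nonneg t))

lemma abs_oddExtension_add_sub_le (h0 : 0 ≤ σ) (hh : HolderLe σ (halfSpace m) h K) {t₀ : ℝ}
    (ht₀ : 0 < t₀) (hx : t₀ < x.2) (z : Ambient m) :
    |oddExtension h (x + z) - oddExtension h x| ≤ (K + 2 * K / t₀ ^ σ) * ‖z‖ ^ σ := by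
  have hx0 : 0 < x.2 := ht₀.trans hx
  have hK : 0 ≤ K := hh.nonneg ⟨x, hx0.le⟩
  rw [add_mul]
  rcases le_or_gt 0 (x + z).2 with hz | hz
  · have hnear := hh.2 (x + z) hz x hx0.le
    rw [dist_eq_norm, add_sub_cancel_left, Real.norm_eq_abs] at hnear
    rw [oddExtension_of_nonneg hz, oddExtension_of_nonneg hx0.le]
    have : 0 ≤ 2 * K / t₀ ^ σ * ‖z‖ ^ σ := by positivity
    linarith
  · have hfar : t₀ ≤ ‖z‖ := by
      have := (neg_abs_le z.2).trans' (neg_le_neg (norm_snd_le z))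
      rw [Prod.snd_add] at hz
      linarith
    have hbound := (abs_sub _ _).trans
      (add_le_add (abs_oddExtension_le hh.1 (x + z)) (abs_oddExtension_le hh.1 x))
    have hpow : 2 * K ≤ 2 * K / t₀ ^ σ * ‖z‖ ^ σ := by
      rw [div_mul_eq_mul_div, le_div_iff₀ (by positivity)]
      gcongr
    have : 0 ≤ K * ‖z‖ ^ σ := by positivity
    linarith

lemma scaledAverage_gaussianDensity_oddExtension (h : Ambient m → ℝ) {r : ℝ} (hr : r ≠ 0)
    (y : EuclideanSpace ℝ (Fin m)) :
    scaledAverage (gaussianDensity m) (oddExtension h) r (y, 0) = 0 := by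
  let reflect : Ambient m ≃ᵐ Ambient m :=
    MeasurableEquiv.prodCongr (MeasurableEquiv.refl _) (MeasurableEquiv.neg ℝ)
  have hreflect : MeasurePreserving reflect volume volume :=
    (MeasurePreserving.id (volume : Measure (EuclideanSpace ℝ (Fin m)))).prod
      (Measure.measurePreserving_neg (volume : Measure ℝ))
  have hodd : ∀ᵐ z : Ambient m,
      oddExtension h ((y, 0) + r • reflect z) • gaussianDensity m (reflect z) =
        -(oddExtension h ((y, 0) + r • z) • gaussianDensity m z) := by
    have hne : ∀ᵐ z : Ambient m, z.2 ≠ 0 :=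
      Measure.quasiMeasurePreserving_snd.ae (Measure.ae_ne volume 0)
    filter_upwards [hne] with ⟨y', t⟩ ht
    have hreflect_apply : reflect (y', t) = (y', -t) := rfl
    rw [hreflect_apply, gaussianDensity_neg_snd, ← neg_smul]
    congr 1
    simpa using oddExtension_neg_snd h (y + r • y') (mul_ne_zero hr ht)
  have hint := hreflect.integral_comp reflect.measurableEmbedding
    fun z => oddExtension h ((y, 0) + r • z) • gaussianDensity m z
  rw [integral_congr_ae hodd, integral_neg] at hint
  exact self_eq_neg.1 hint.symm

lemma resolvent_oddExtension_boundary (lam : ℝ) (h : Ambient m → ℝ)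
    (y : EuclideanSpace ℝ (Fin m)) : resolvent lam (oddExtension h) (y, 0) = 0 :=
  setIntegral_eq_zero_of_forall_eq_zero fun r hr => by
    rw [scaledAverage_gaussianDensity_oddExtension h (ne_of_gt hr), smul_zero]

end OddExtension

section SecondOrderRegularity

variable {E F : Type*} [NormedAddCommGroup E] [NormedSpace ℝ E] [NormedAddCommGroup F]
  [NormedSpace ℝ F] {s : Set E} {u : E → F} {D : E → E →L[ℝ] F} {H : E → E →L[ℝ] E →L[ℝ] F}
  {σ A : ℝ}

lemma contDiffOn_two_of_hasFDerivWithinAt (hs : UniqueDiffOn ℝ s)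
    (hu : ∀ x ∈ s, HasFDerivWithinAt u (D x) s x) (hD : ∀ x ∈ s, HasFDerivWithinAt D (H x) s x)
    (hH : ContinuousOn H s) : ContDiffOn ℝ 2 u s := by
  have hDs : ContDiffOn ℝ 1 D s := by
    rw [← zero_add 1, contDiffOn_succ_iff_hasFDerivWithinAt_of_uniqueDiffOn hs]
    exact ⟨fun h => absurd h (by decide), H, contDiffOn_zero.2 hH, hD⟩
  rw [← one_add_one_eq_two, contDiffOn_succ_iff_hasFDerivWithinAt_of_uniqueDiffOn hs]
  exact ⟨fun h => absurd h (by decide), D, hDs, hu⟩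

lemma iteratedFDerivWithin_two_eq (hs : UniqueDiffOn ℝ s)
    (hu : ∀ x ∈ s, HasFDerivWithinAt u (D x) s x) {x : E} (hx : x ∈ s)
    (hD : HasFDerivWithinAt D (H x) s x) (v : Fin 2 → E) :
    iteratedFDerivWithin ℝ 2 u s x v = H x (v 0) (v 1) := by
  rw [iteratedFDerivWithin_two_apply u hs hx,
    fderivWithin_congr (fun z hz => (hu z hz).fderivWithin (hs z hz))
      ((hu x hx).fderivWithin (hs x hx)),
    hD.fderivWithin (hs x hx)]

lemma holderLe_iteratedFDerivWithin_two (hs : UniqueDiffOn ℝ s)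
    (hu : ∀ x ∈ s, HasFDerivWithinAt u (D x) s x) (hD : ∀ x ∈ s, HasFDerivWithinAt D (H x) s x)
    (hH : HolderLe σ s H A) : HolderLe σ s (iteratedFDerivWithin ℝ 2 u s) A := by
  have le_opNorm (L : E →L[ℝ] E →L[ℝ] F) (v : Fin 2 → E) :
      ‖L (v 0) (v 1)‖ ≤ ‖L‖ * ∏ i, ‖v i‖ := by
    rw [Fin.prod_univ_two, ← mul_assoc]
    exact L.le_opNorm₂ _ _
  refine ⟨fun x hx => le_trans ?_ (hH.1 x hx), fun x hx y hy => le_trans ?_ (hH.2 x hx y hy)⟩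
  · refine ContinuousMultilinearMap.opNorm_le_bound (norm_nonneg (H x)) fun v => ?_
    rw [iteratedFDerivWithin_two_eq hs hu hx (hD x hx)]
    exact le_opNorm _ v
  · refine ContinuousMultilinearMap.opNorm_le_bound (norm_nonneg (H x - H y)) fun v => ?_
    rw [sub_apply, iteratedFDerivWithin_two_eq hs hu hx (hD x hx),
      iteratedFDerivWithin_two_eq hs hu hy (hD y hy)]
    exact le_opNorm (H x - H y) v

end SecondOrderRegularity

section DirichletResolvent

variable {m : ℕ} {lam σ K M : ℝ} {h : Ambient m → ℝ} {x : Ambient m}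

lemma convex_halfSpace : Convex ℝ (halfSpace m) :=
  convex_halfSpace_ge (LinearMap.snd ℝ (EuclideanSpace ℝ (Fin m)) ℝ).isLinear 0

lemma isOpen_setOf_lt_snd (a : ℝ) : IsOpen {x : Ambient m | a < x.2} :=
  isOpen_lt continuous_const continuous_snd

lemma closure_setOf_snd_pos : closure {x : Ambient m | 0 < x.2} = halfSpace m := by
  have hopen : {x : Ambient m | 0 < x.2} = univ ×ˢ Ioi 0 := by ext; simp
  have hclosed : halfSpace m = univ ×ˢ Ici 0 := by ext; simp [mem_halfSpace]
  rw [hopen, hclosed, closure_prod_eq, closure_univ, closure_Ioi]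

lemma uniqueDiffOn_halfSpace : UniqueDiffOn ℝ (halfSpace m) :=
  uniqueDiffOn_convex convex_halfSpace ⟨(0, 1), interior_maximal
    (fun _ hx => mem_halfSpace.2 (le_of_lt hx)) (isOpen_setOf_lt_snd 0)
    (show (0 : ℝ) < 1 from one_pos)⟩

lemma halfSpace_mem_nhds (hx : 0 < x.2) : halfSpace m ∈ 𝓝 x :=
  mem_of_superset ((isOpen_setOf_lt_snd 0).mem_nhds hx) fun _ hy => mem_halfSpace.2 (le_of_lt hy)

/-- The solution of `lam • u - Δ u = h` in the half-space with zero boundary values, obtained by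
solving on the whole space with the odd extension of `h`. -/
noncomputable def dirichletResolvent (lam : ℝ) (h : Ambient m → ℝ) : Ambient m → ℝ :=
  resolvent lam (oddExtension h)

lemma dirichletResolvent_boundary (lam : ℝ) (h : Ambient m → ℝ) (y : EuclideanSpace ℝ (Fin m)) :
    dirichletResolvent lam h (y, 0) = 0 :=
  resolvent_oddExtension_boundary lam h y

lemma hasFDerivAt_dirichletResolvent (hl : 0 < lam) (h0 : 0 < σ)
    (hh : HolderLe σ (halfSpace m) h K) (x : Ambient m) :
    HasFDerivAt (dirichletResolvent lam h) (resolventDeriv lam (oddExtension h) x) x :=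
  hasFDerivAt_resolvent hl (isTangentiallyHolder_oddExtension h0 hh).measurable
    (isTangentiallyHolder_oddExtension h0 hh).abs_le x

lemma exists_holderLe_dirichletResolvent (m : ℕ) (hl : 0 < lam) (h0 : 0 ≤ σ) (h1 : σ ≤ 1) :
    ∃ C, 0 ≤ C ∧ ∀ {h : Ambient m → ℝ} {M : ℝ}, ContinuousOn h (halfSpace m) →
      (∀ x ∈ halfSpace m, |h x| ≤ M) →
        HolderLe σ (halfSpace m) (dirichletResolvent lam h) (C * M) := by
  obtain ⟨C, hC, hCres⟩ := exists_holderLe_resolvent (m := m) hl h0 h1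
  exact ⟨C, hC, fun hh hM =>
    (hCres (measurable_oddExtension hh) (abs_oddExtension_le hM)).mono_set (subset_univ _)⟩

lemma exists_holderLe_resolventHessian_oddExtension (m : ℕ) (hl : 0 < lam) (h0 : 0 < σ)
    (h1 : σ < 1) :
    ∃ C, 0 ≤ C ∧ ∀ {h : Ambient m → ℝ} {K : ℝ}, HolderLe σ (halfSpace m) h K →
      HolderLe σ (halfSpace m) (resolventHessian lam (oddExtension h)) (C * K) := by
  obtain ⟨C, hC, hCres⟩ := exists_holderLe_resolventHessian (m := m) hl h0 h1
  exact ⟨C, hC, fun hh => hCres (isTangentiallyHolder_oddExtension h0 hh)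
    (hh.congr fun x hx => (oddExtension_of_nonneg hx).symm)⟩

lemma hasFDerivAt_resolventDeriv_oddExtension (hl : 0 < lam) (h0 : 0 < σ) (h1 : σ < 1)
    (hh : HolderLe σ (halfSpace m) h K) (hx : 0 < x.2) :
    HasFDerivAt (resolventDeriv lam (oddExtension h)) (resolventHessian lam (oddExtension h) x)
      x := by
  have hK : 0 ≤ K := hh.nonneg ⟨x, hx.le⟩
  exact hasFDerivAt_resolventDeriv hl h0 h1 (isTangentiallyHolder_oddExtension h0 hh)
    (isOpen_setOf_lt_snd (x.2 / 2)) (by positivity)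
    (fun _ hy => abs_oddExtension_add_sub_le h0.le hh (half_pos hx) hy) (half_lt_self hx)

lemma hasFDerivWithinAt_resolventDeriv_oddExtension (hl : 0 < lam) (h0 : 0 < σ) (h1 : σ < 1)
    (hh : HolderLe σ (halfSpace m) h K) (hx : x ∈ halfSpace m) :
    HasFDerivWithinAt (resolventDeriv lam (oddExtension h))
      (resolventHessian lam (oddExtension h) x) (halfSpace m) x := by
  have hodd := isTangentiallyHolder_oddExtension h0 hh
  have hderiv (y : Ambient m) (hy : 0 < y.2) :=
    hasFDerivAt_resolventDeriv_oddExtension hl h0 h1 hh hy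
  obtain ⟨C, -, hC⟩ := exists_holderLe_resolventHessian_oddExtension m hl h0 h1
  rw [← closure_setOf_snd_pos]
  refine hasFDerivWithinAt_closure_of_tendsto_fderiv
    (fun y hy => (hderiv y hy).differentiableAt.differentiableWithinAt)
    (convex_halfSpace_gt (LinearMap.snd ℝ (EuclideanSpace ℝ (Fin m)) ℝ).isLinear 0)
    (isOpen_setOf_lt_snd 0)
    (fun y _ => (continuous_resolventDeriv hl hodd.measurable hodd.abs_le).continuousWithinAt) ?_
  refine (((hC hh).continuousOn h0 x hx).mono fun y hy => mem_halfSpace.2 (le_of_lt hy)).congr' ?_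
  filter_upwards [self_mem_nhdsWithin] with y hy
  exact (hderiv y hy).fderiv.symm

lemma contDiffOn_dirichletResolvent (hl : 0 < lam) (h0 : 0 < σ) (h1 : σ < 1)
    (hh : HolderLe σ (halfSpace m) h K) :
    ContDiffOn ℝ 2 (dirichletResolvent lam h) (halfSpace m) := by
  obtain ⟨C, -, hC⟩ := exists_holderLe_resolventHessian_oddExtension m hl h0 h1
  exact contDiffOn_two_of_hasFDerivWithinAt uniqueDiffOn_halfSpace
    (fun x _ => (hasFDerivAt_dirichletResolvent hl h0 hh x).hasFDerivWithinAt)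
    (fun _ hx => hasFDerivWithinAt_resolventDeriv_oddExtension hl h0 h1 hh hx)
    ((hC hh).continuousOn h0)

theorem exists_holderLe_iteratedFDerivWithin_dirichletResolvent (m : ℕ) (hl : 0 < lam)
    (h0 : 0 < σ) (h1 : σ < 1) :
    ∃ C, 0 ≤ C ∧ ∀ {h : Ambient m → ℝ} {K : ℝ}, HolderLe σ (halfSpace m) h K →
      HolderLe σ (halfSpace m)
        (iteratedFDerivWithin ℝ 2 (dirichletResolvent lam h) (halfSpace m)) (C * K) := by
  obtain ⟨C, hC0, hC⟩ := exists_holderLe_resolventHessian_oddExtension m hl h0 h1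
  exact ⟨C, hC0, fun hh => holderLe_iteratedFDerivWithin_two uniqueDiffOn_halfSpace
    (fun x _ => (hasFDerivAt_dirichletResolvent hl h0 hh x).hasFDerivWithinAt)
    (fun _ hx => hasFDerivWithinAt_resolventDeriv_oddExtension hl h0 h1 hh hx) (hC hh)⟩

theorem mul_dirichletResolvent_sub_lapP (hl : 0 < lam) (h0 : 0 < σ) (h1 : σ < 1)
    (hh : HolderLe σ (halfSpace m) h K) (hx : 0 < x.2) :
    lam * dirichletResolvent lam h x - lapP (dirichletResolvent lam h) x = h x := by
  have hderiv : fderiv ℝ (dirichletResolvent lam h) = resolventDeriv lam (oddExtension h) :=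
    funext fun y => (hasFDerivAt_dirichletResolvent hl h0 hh y).fderiv
  have hsecond (j) : fderiv ℝ (fun y => fderiv ℝ (dirichletResolvent lam h) y (stdBasis m j)) x
      (stdBasis m j) =
        resolventHessian lam (oddExtension h) x (stdBasis m j) (stdBasis m j) := by
    rw [hderiv, ((hasFDerivAt_resolventDeriv_oddExtension hl h0 h1 hh hx).clm_apply
      (hasFDerivAt_const _ _)).fderiv]
    simp
  simp only [lapP_eq_sum_stdBasis, hsecond, sum_resolventHessian_stdBasis]
  rw [dirichletResolvent, sub_sub_cancel, oddExtension_of_nonneg hx.le]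

end DirichletResolvent

section SecondDerivativeTest

variable {E : Type*} [NormedAddCommGroup E] [NormedSpace ℝ E] {u : E → ℝ} {x : E}

lemma deriv_deriv_nonpos_of_isLocalMax {f : ℝ → ℝ} {a : ℝ} (hf : ContinuousAt f a)
    (h : IsLocalMax f a) : deriv (deriv f) a ≤ 0 := by
  by_contra! hpos
  have hconst : f =ᶠ[𝓝 a] fun _ => f a := by
    filter_upwards [h, isLocalMin_of_deriv_deriv_pos hpos h.deriv_eq_zero hf] with b hmax hmin
    exact le_antisymm hmax hmin
  have hderiv : deriv f =ᶠ[𝓝 a] fun _ => 0 := by simpa using hconst.deriv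
  simp [hderiv.deriv_eq] at hpos

lemma deriv_deriv_comp_add_smul (hu : ContDiffAt ℝ 2 u x) (v : E) :
    deriv (deriv fun s : ℝ => u (x + s • v)) 0 = iteratedFDeriv ℝ 2 u x fun _ => v := by
  have hline (s : ℝ) : HasDerivAt (fun s : ℝ => x + s • v) v s := by
    simpa using ((hasDerivAt_id s).smul_const v).const_add x
  have hx : x + (0 : ℝ) • v = x := by simp
  have hnear : ∀ᶠ s in 𝓝 (0 : ℝ), ContDiffAt ℝ 2 u (x + s • v) := by
    refine (hline 0).continuousAt.eventually ?_
    simpa only [hx] using hu.eventually (by simp)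
  have hfirst : (deriv fun s : ℝ => u (x + s • v)) =ᶠ[𝓝 0] fun s => fderiv ℝ u (x + s • v) v :=
    hnear.mono fun s hs =>
      ((hs.differentiableAt two_ne_zero).hasFDerivAt.comp_hasDerivAt s (hline s)).deriv
  have hsecond : HasFDerivAt (fun y => fderiv ℝ u y v) ((fderiv ℝ (fderiv ℝ u) x).flip v)
      (x + (0 : ℝ) • v) := by
    rw [hx]
    simpa using ((hu.fderiv_right (m := 1) (by norm_num)).differentiableAt
      one_ne_zero).hasFDerivAt.clm_apply (hasFDerivAt_const v x)
  rw [hfirst.deriv_eq, iteratedFDeriv_two_apply]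
  exact (hsecond.comp_hasDerivAt 0 (hline 0)).deriv

lemma deriv_deriv_comp_add_smul_nonpos_of_isLocalMax (hu : ContinuousAt u x)
    (h : IsLocalMax u x) (v : E) : deriv (deriv fun s : ℝ => u (x + s • v)) 0 ≤ 0 := by
  have hx : x + (0 : ℝ) • v = x := by simp
  have hline : ContinuousAt (fun s : ℝ => x + s • v) 0 := by fun_prop
  rw [← hx] at hu h
  exact deriv_deriv_nonpos_of_isLocalMax (hu.comp (f := fun s : ℝ => x + s • v) hline)
    (h.comp_tendsto (g := fun s : ℝ => x + s • v) hline)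

end SecondDerivativeTest

section Laplacian

variable {m : ℕ} {u v : Ambient m → ℝ} {x : Ambient m}

lemma lapP_eq_sum_iteratedFDeriv (hu : ContDiffAt ℝ 2 u x) :
    lapP u x = ∑ j, iteratedFDeriv ℝ 2 u x fun _ => stdBasis m j := by
  have hdiff : DifferentiableAt ℝ (fderiv ℝ u) x :=
    (hu.fderiv_right (m := 1) (by norm_num)).differentiableAt one_ne_zero
  rw [lapP_eq_sum_stdBasis]
  refine Finset.sum_congr rfl fun j _ => ?_
  rw [iteratedFDeriv_two_apply, fderiv_clm_apply hdiff (differentiableAt_const _)]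
  simp

lemma lapP_eq_sum_deriv_deriv (hu : ContDiffAt ℝ 2 u x) :
    lapP u x = ∑ j, deriv (deriv fun s : ℝ => u (x + s • stdBasis m j)) 0 := by
  simp only [lapP_eq_sum_iteratedFDeriv hu, deriv_deriv_comp_add_smul hu]

lemma lapP_sub (hu : ContDiffAt ℝ 2 u x) (hv : ContDiffAt ℝ 2 v x) :
    lapP (u - v) x = lapP u x - lapP v x := by
  rw [lapP_eq_sum_iteratedFDeriv hu, lapP_eq_sum_iteratedFDeriv hv,
    lapP_eq_sum_iteratedFDeriv (u := u - v) (hu.sub hv), ← Finset.sum_sub_distrib,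
    iteratedFDeriv_sub_apply hu hv]
  rfl

lemma lapP_const_smul (c : ℝ) (hu : ContDiffAt ℝ 2 u x) : lapP (c • u) x = c * lapP u x := by
  rw [lapP_eq_sum_iteratedFDeriv hu, lapP_eq_sum_iteratedFDeriv (u := c • u) (hu.const_smul c),
    Finset.mul_sum, iteratedFDeriv_const_smul_apply hu]
  rfl

lemma lapP_congr (h : u =ᶠ[𝓝 x] v) : lapP u x = lapP v x := by
  simp only [lapP_eq_sum_stdBasis]
  refine Finset.sum_congr rfl fun j _ => ?_
  have hfderiv : (fun y => fderiv ℝ u y (stdBasis m j)) =ᶠ[𝓝 x]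
      fun y => fderiv ℝ v y (stdBasis m j) := h.fderiv.fun_comp fun L => L (stdBasis m j)
  rw [hfderiv.fderiv_eq]

lemma lapP_nonpos_of_isLocalMax (hu : ContDiffAt ℝ 2 u x) (h : IsLocalMax u x) : lapP u x ≤ 0 := by
  rw [lapP_eq_sum_deriv_deriv hu]
  exact Finset.sum_nonpos fun j _ =>
    deriv_deriv_comp_add_smul_nonpos_of_isLocalMax hu.continuousAt h _

lemma lapP_comp_snd {P : ℝ → ℝ} (hP : ContDiffAt ℝ 2 P x.2) :
    lapP (fun y => P y.2) x = deriv (deriv P) x.2 := by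
  have hderiv : (deriv fun s => P (x.2 + s)) = fun s => deriv P (x.2 + s) :=
    funext fun s => deriv_comp_const_add P x.2 s
  rw [lapP_eq_sum_deriv_deriv (u := fun y => P y.2) (hP.comp x contDiffAt_snd),
    Fintype.sum_sum_type]
  simp [hderiv, deriv_comp_const_add]

/-- The squared Euclidean norm on `ℝ^m × ℝ`, whose own norm is the sup norm of the factors. -/
noncomputable def euclideanNormSq (x : Ambient m) : ℝ := ‖x.1‖ ^ 2 + x.2 ^ 2

lemma contDiff_euclideanNormSq : ContDiff ℝ 2 (euclideanNormSq (m := m)) :=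
  (contDiff_fst.norm_sq ℝ).add (contDiff_snd.pow 2)

lemma sq_norm_le_euclideanNormSq (x : Ambient m) : ‖x‖ ^ 2 ≤ euclideanNormSq x := by
  rw [Prod.norm_def, euclideanNormSq]
  rcases max_cases ‖x.1‖ ‖x.2‖ with ⟨h, -⟩ | ⟨h, -⟩ <;> rw [h] <;>
    simp [sq_nonneg]

lemma euclideanNormSq_nonneg (x : Ambient m) : 0 ≤ euclideanNormSq x :=
  (sq_nonneg _).trans (sq_norm_le_euclideanNormSq x)

lemma euclideanNormSq_stdBasis (j : Fin m ⊕ Unit) : euclideanNormSq (stdBasis m j) = 1 := by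
  rcases j with i | i <;> simp [euclideanNormSq]

lemma euclideanNormSq_add_smul (x v : Ambient m) (s : ℝ) : euclideanNormSq (x + s • v) =
    euclideanNormSq x + 2 * (inner ℝ x.1 v.1 + x.2 * v.2) * s + euclideanNormSq v * s ^ 2 := by
  simp only [euclideanNormSq, Prod.fst_add, Prod.snd_add, Prod.smul_fst, Prod.smul_snd,
    norm_add_sq_real, norm_smul, inner_smul_right, mul_pow, Real.norm_eq_abs, sq_abs, smul_eq_mul]
  ring

lemma lapP_euclideanNormSq (x : Ambient m) : lapP euclideanNormSq x = 2 * (m + 1) := by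
  have hquad (a b c : ℝ) : deriv (deriv fun s : ℝ => a + b * s + c * s ^ 2) 0 = 2 * c := by
    have hderiv : (deriv fun s : ℝ => a + b * s + c * s ^ 2) = fun s => b + 2 * c * s := by
      funext s
      refine HasDerivAt.deriv ((((hasDerivAt_id s).const_mul b).const_add a).add
        ((hasDerivAt_pow 2 s).const_mul c) |>.congr_deriv ?_)
      norm_num
      ring
    simp [hderiv]
  simp only [lapP_eq_sum_deriv_deriv contDiff_euclideanNormSq.contDiffAt,
    euclideanNormSq_add_smul, hquad, euclideanNormSq_stdBasis]
  simp only [mul_one, Finset.sum_const, Finset.card_univ, Fintype.card_sum, Fintype.card_fin,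
    Fintype.card_unique, nsmul_eq_mul, Nat.cast_add, Nat.cast_one]
  ring

end Laplacian

section MaximumPrinciple

variable {m : ℕ} {lam M : ℝ} {v : Ambient m → ℝ}

theorem nonpos_of_mul_sub_lapP_nonpos (hl : 0 < lam) (hc : ContinuousOn v (halfSpace m))
    (hd : ∀ x : Ambient m, 0 < x.2 → ContDiffAt ℝ 2 v x) (hM : ∀ x ∈ halfSpace m, v x ≤ M)
    (hb : ∀ y, v (y, 0) ≤ 0) (hv : ∀ x : Ambient m, 0 < x.2 → lam * v x - lapP v x ≤ 0) :
    ∀ x ∈ halfSpace m, v x ≤ 0 := by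
  intro x₀ hx₀
  by_contra! hpos
  obtain ⟨ε, hε, hεv⟩ : ∃ ε > 0, ε * (lam * euclideanNormSq x₀ + 2 * (m + 1)) < lam * v x₀ :=
    (exists_pos_mul_lt (mul_pos hl hpos) _).imp fun ε h => ⟨h.1, mul_comm _ ε ▸ h.2⟩
  -- the penalty forces the supremum to be attained
  let F := v - ε • euclideanNormSq
  have hF (x : Ambient m) : F x = v x - ε * euclideanNormSq x := rfl
  have hcoercive : ∀ᶠ x in cocompact (Ambient m) ⊓ 𝓟 (halfSpace m), F x ≤ F x₀ := by
    have hnorm := ((tendsto_pow_atTop two_ne_zero).comp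
      (tendsto_norm_cocompact_atTop (E := Ambient m))).const_mul_atTop hε
    rw [eventually_inf_principal]
    filter_upwards [hnorm.eventually_ge_atTop (M - F x₀)] with x hx hxh
    have hsq := mul_le_mul_of_nonneg_left (sq_norm_le_euclideanNormSq x) hε.le
    rw [hF]
    linarith [hM x hxh, show M - F x₀ ≤ ε * ‖x‖ ^ 2 from hx]
  obtain ⟨x, hx, hmax⟩ := ContinuousOn.exists_isMaxOn' (f := F)
    (hc.sub (contDiff_euclideanNormSq.continuous.const_smul ε).continuousOn)
    (isClosed_le continuous_const continuous_snd) hx₀ hcoercive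
  have hle : v x₀ - ε * euclideanNormSq x₀ ≤ v x := by
    rw [← hF]
    refine (hmax hx₀).trans ?_
    linarith [hF x, mul_nonneg hε.le (euclideanNormSq_nonneg x)]
  have hlarge : 2 * ε * (m + 1) < lam * v x := by nlinarith [mul_le_mul_of_nonneg_left hle hl.le]
  have hvx : 0 < v x := pos_of_mul_pos_right ((by positivity : 0 < 2 * ε * (m + 1)).trans hlarge)
    hl.le
  have hx2 : 0 < x.2 := lt_of_le_of_ne hx fun h =>
    (hb x.1).not_gt (by rwa [show (x.1, (0 : ℝ)) = x from Prod.ext rfl h])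
  have hQd : ContDiffAt ℝ 2 (ε • euclideanNormSq) x :=
    contDiff_euclideanNormSq.contDiffAt.const_smul ε
  have hlap : lapP F x ≤ 0 := lapP_nonpos_of_isLocalMax ((hd x hx2).sub hQd)
    (hmax.isLocalMax (halfSpace_mem_nhds hx2))
  rw [lapP_sub (hd x hx2) hQd, lapP_const_smul ε contDiff_euclideanNormSq.contDiffAt,
    lapP_euclideanNormSq] at hlap
  linarith [hv x hx2]

end MaximumPrinciple

section ContractionWeight

variable {V W q P : ℝ → ℝ} {A B c t lam θ S : ℝ}

/-- A positive nonincreasing supersolution `W'' + V W ≤ 0` of the one-dimensional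
operator on the half-line. For the heteroclinic `w` of the nonlinearity `f` and `V = f' ∘ w`, the
derivative `w'` is one. -/
structure IsDecreasingSupersolution (V W : ℝ → ℝ) : Prop where
  continuousOn : ContinuousOn W (Ici 0)
  contDiffOn : ContDiffOn ℝ 2 W (Ioi 0)
  pos : ∀ t ∈ Ici 0, 0 < W t
  antitoneOn : AntitoneOn W (Ici 0)
  deriv_deriv_add_mul_nonpos : ∀ t ∈ Ioi 0, deriv (deriv W) t + V t * W t ≤ 0

/-- A weight `P`, between `1` and `S`, for which the operator sending `h` to the bounded solution
`u` of `lam * u - Δu = q * h` with zero boundary values contracts by the factor `θ` in the norm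
`sup |h| / P`. -/
structure IsContractionWeight (lam θ S : ℝ) (q P : ℝ → ℝ) : Prop where
  lam_pos : 0 < lam
  theta_nonneg : 0 ≤ θ
  theta_lt_one : θ < 1
  one_le_potential : ∀ t ∈ Ici 0, 1 ≤ q t
  continuousOn : ContinuousOn P (Ici 0)
  contDiffOn : ContDiffOn ℝ 2 P (Ioi 0)
  one_le : ∀ t ∈ Ici 0, 1 ≤ P t
  le : ∀ t ∈ Ici 0, P t ≤ S
  mul_le : ∀ t ∈ Ioi 0, q t * P t ≤ θ * (lam * P t - deriv (deriv P) t)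

/-- The weight built from a supersolution `W`. The factor `1 - exp (-t)` turns the inequality
`W'' + V W ≤ 0` into a strict one on bounded intervals, by the amount `A * exp (-t) * W t`. -/
noncomputable def supersolutionWeight (A : ℝ) (W : ℝ → ℝ) (t : ℝ) : ℝ :=
  1 + A * ((1 - Real.exp (-t)) * W t)

namespace IsDecreasingSupersolution

lemma hasDerivAt (hW : IsDecreasingSupersolution V W) (ht : 0 < t) :
    HasDerivAt W (deriv W t) t :=
  ((hW.contDiffOn.contDiffAt (Ioi_mem_nhds ht)).differentiableAt two_ne_zero).hasDerivAt

lemma hasDerivAt_deriv (hW : IsDecreasingSupersolution V W) (ht : 0 < t) :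
    HasDerivAt (deriv W) (deriv (deriv W) t) t :=
  (((hW.contDiffOn.contDiffAt (Ioi_mem_nhds ht)).derivWithin (m := 1)
    (by norm_num)).differentiableAt one_ne_zero).hasDerivAt

lemma deriv_nonpos (hW : IsDecreasingSupersolution V W) (ht : 0 < t) : deriv W t ≤ 0 := by
  rw [← derivWithin_of_mem_nhds (Ici_mem_nhds ht)]
  exact hW.antitoneOn.derivWithin_nonpos

lemma one_le_supersolutionWeight (hW : IsDecreasingSupersolution V W) (hA : 0 ≤ A)
    (ht : 0 ≤ t) : 1 ≤ supersolutionWeight A W t := by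
  have hexp : 0 ≤ 1 - Real.exp (-t) := by simpa using ht
  have hWt := (hW.pos t ht).le
  exact le_add_of_nonneg_right (by positivity)

lemma supersolutionWeight_le (hW : IsDecreasingSupersolution V W) (hA : 0 ≤ A) (ht : 0 ≤ t) :
    supersolutionWeight A W t ≤ 1 + A * W 0 := by
  have hexp : 1 - Real.exp (-t) ≤ 1 := sub_le_self _ (Real.exp_pos _).le
  unfold supersolutionWeight
  gcongr
  exact (mul_le_of_le_one_left (hW.pos t ht).le hexp).trans (hW.antitoneOn self_mem_Ici ht ht)

lemma continuousOn_supersolutionWeight (hW : IsDecreasingSupersolution V W) :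
    ContinuousOn (supersolutionWeight A W) (Ici 0) := by
  have := hW.continuousOn
  unfold supersolutionWeight
  fun_prop

lemma contDiffOn_supersolutionWeight (hW : IsDecreasingSupersolution V W) :
    ContDiffOn ℝ 2 (supersolutionWeight A W) (Ioi 0) := by
  have := hW.contDiffOn
  unfold supersolutionWeight
  fun_prop

lemma deriv_deriv_supersolutionWeight (hW : IsDecreasingSupersolution V W) (ht : 0 < t) :
    deriv (deriv (supersolutionWeight A W)) t = A * (-(Real.exp (-t) * W t) +
      2 * (Real.exp (-t) * deriv W t) + (1 - Real.exp (-t)) * deriv (deriv W) t) := by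
  have hexp (s : ℝ) : HasDerivAt (fun s : ℝ => Real.exp (-s)) (-Real.exp (-s)) s := by
    simpa using (hasDerivAt_neg s).exp
  have hfirst : deriv (supersolutionWeight A W) =ᶠ[𝓝 t] fun s =>
      A * (Real.exp (-s) * W s + (1 - Real.exp (-s)) * deriv W s) := by
    filter_upwards [Ioi_mem_nhds ht] with s hs
    refine HasDerivAt.deriv
      (((((hexp s).const_sub 1).mul (hW.hasDerivAt hs)).const_mul A).const_add 1 |>.congr_deriv ?_)
    rw [neg_neg]
  rw [hfirst.deriv_eq]
  refine HasDerivAt.deriv (((((hexp t).mul (hW.hasDerivAt ht)).add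
    (((hexp t).const_sub 1).mul (hW.hasDerivAt_deriv ht))).const_mul A).congr_deriv ?_)
  ring

lemma deriv_deriv_supersolutionWeight_add_mul_le (hW : IsDecreasingSupersolution V W)
    (hA : 0 ≤ A) (ht : 0 < t) :
    deriv (deriv (supersolutionWeight A W)) t + V t * supersolutionWeight A W t ≤
      V t - A * (Real.exp (-t) * W t) := by
  have hexp : 0 ≤ A * (1 - Real.exp (-t)) := mul_nonneg hA (by simpa using ht.le)
  have hdecr : A * (Real.exp (-t) * deriv W t) ≤ 0 :=
    mul_nonpos_of_nonneg_of_nonpos hA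
      (mul_nonpos_of_nonneg_of_nonpos (Real.exp_pos _).le (hW.deriv_nonpos ht))
  have hsuper := mul_nonpos_of_nonneg_of_nonpos hexp (hW.deriv_deriv_add_mul_nonpos t ht)
  rw [hW.deriv_deriv_supersolutionWeight ht, supersolutionWeight]
  linarith

lemma exists_sub_mul_le (hW : IsDecreasingSupersolution V W) (hB : ∀ t ∈ Ici 0, |V t| ≤ B)
    (hc : 0 < c) (hV : ∀ᶠ t in atTop, V t ≤ -c) :
    ∃ A ≥ 0, ∀ t ∈ Ioi 0, V t - A * (Real.exp (-t) * W t) ≤ -c := by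
  obtain ⟨T, hT, hT0⟩ := ((eventually_forall_ge_atTop.2 hV).and (eventually_ge_atTop 0)).exists
  have hB0 : 0 ≤ B := (abs_nonneg _).trans (hB T hT0)
  have hWT : 0 < Real.exp (-T) * W T := mul_pos (Real.exp_pos _) (hW.pos T hT0)
  refine ⟨(B + c) / (Real.exp (-T) * W T), by positivity, fun t ht => ?_⟩
  have hWt : 0 < Real.exp (-t) * W t := mul_pos (Real.exp_pos _) (hW.pos t (mem_Ioi.1 ht).le)
  rcases le_total T t with h | h
  · exact (sub_le_self _ (by positivity)).trans (hT t h)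
  · have hmono : Real.exp (-T) * W T ≤ Real.exp (-t) * W t :=
      mul_le_mul (Real.exp_le_exp.2 (neg_le_neg h)) (hW.antitoneOn (mem_Ioi.1 ht).le hT0 h)
        (hW.pos T hT0).le (Real.exp_pos _).le
    have hlarge : B + c ≤ (B + c) / (Real.exp (-T) * W T) * (Real.exp (-t) * W t) := by
      rw [div_mul_eq_mul_div, le_div_iff₀ hWT]
      gcongr
    linarith [(abs_le.1 (hB t (mem_Ioi.1 ht).le)).2]

theorem exists_isContractionWeight (hW : IsDecreasingSupersolution V W)
    (hB : ∀ t ∈ Ici 0, |V t| ≤ B) (hc : 0 < c) (hV : ∀ᶠ t in atTop, V t ≤ -c) :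
    ∃ lam θ S P, IsContractionWeight lam θ S (fun t => lam + V t) P := by
  obtain ⟨A, hA, hAV⟩ := hW.exists_sub_mul_le hB hc hV
  have hB0 : 0 ≤ B := (abs_nonneg _).trans (hB 0 self_mem_Ici)
  have hS : 1 ≤ 1 + A * W 0 := le_add_of_nonneg_right (mul_nonneg hA (hW.pos 0 self_mem_Ici).le)
  obtain ⟨Q, hQ, hQ0⟩ : ∃ Q, (2 * B + 1) * (1 + A * W 0) = Q ∧ 0 < Q :=
    ⟨_, rfl, by positivity⟩
  refine ⟨B + 1, Q / (Q + c), 1 + A * W 0, supersolutionWeight A W, ⟨by positivity, by positivity,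
    (div_lt_one (by positivity)).2 (lt_add_of_pos_right Q hc),
    fun t ht => by linarith [(abs_le.1 (hB t ht)).1], hW.continuousOn_supersolutionWeight,
    hW.contDiffOn_supersolutionWeight, fun t => hW.one_le_supersolutionWeight hA,
    fun t => hW.supersolutionWeight_le hA, fun t ht => ?_⟩⟩
  have ht0 : 0 ≤ t := (mem_Ioi.1 ht).le
  have hP1 := hW.one_le_supersolutionWeight hA ht0
  have hPQ : (B + 1 + V t) * supersolutionWeight A W t ≤ Q :=
    (mul_le_mul (by linarith [(abs_le.1 (hB t ht0)).2]) (hW.supersolutionWeight_le hA ht0)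
      (zero_le_one.trans hP1) (by positivity)).trans_eq hQ
  have hgap : (B + 1 + V t) * supersolutionWeight A W t + c ≤
      (B + 1) * supersolutionWeight A W t - deriv (deriv (supersolutionWeight A W)) t := by
    linarith [hW.deriv_deriv_supersolutionWeight_add_mul_le hA ht, hAV t ht]
  -- `X ≤ Q` upgrades the additive gap `c` to the factor: `X ≤ Q / (Q + c) * (X + c)`
  refine le_trans ?_ (mul_le_mul_of_nonneg_left hgap (by positivity))
  rw [div_mul_eq_mul_div, le_div_iff₀ (by positivity)]
  nlinarith

end IsDecreasingSupersolution

end ContractionWeight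

section BoundedSolutions

variable {m : ℕ} {lam c : ℝ} {h k u v : Ambient m → ℝ}

/-- `u` is a bounded classical solution of `lam * u - Δu = h` in the open half-space with zero
boundary values. -/
structure IsBoundedSolution (lam : ℝ) (h u : Ambient m → ℝ) : Prop where
  contDiffOn : ContDiffOn ℝ 2 u (halfSpace m)
  mul_sub_lapP_eq : ∀ x, 0 < x.2 → lam * u x - lapP u x = h x
  boundary : ∀ y, u (y, 0) = 0
  bounded : ∃ M, ∀ x ∈ halfSpace m, |u x| ≤ M

namespace IsBoundedSolution

lemma contDiffAt (hu : IsBoundedSolution lam h u) {x : Ambient m} (hx : 0 < x.2) :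
    ContDiffAt ℝ 2 u x :=
  hu.contDiffOn.contDiffAt (halfSpace_mem_nhds hx)

lemma congr_rhs (hu : IsBoundedSolution lam h u) (hk : ∀ x, 0 < x.2 → h x = k x) :
    IsBoundedSolution lam k u :=
  ⟨hu.contDiffOn, fun x hx => (hu.mul_sub_lapP_eq x hx).trans (hk x hx), hu.boundary, hu.bounded⟩

lemma congr (hu : IsBoundedSolution lam h u) (huv : EqOn u v (halfSpace m)) :
    IsBoundedSolution lam h v := by
  obtain ⟨M, hM⟩ := hu.bounded
  refine ⟨hu.contDiffOn.congr huv.symm, fun x hx => ?_, fun y => ?_, M,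
    fun x hx => huv hx ▸ hM x hx⟩
  · rw [← lapP_congr (huv.eventuallyEq_of_mem (halfSpace_mem_nhds hx)), ← huv hx.le,
      hu.mul_sub_lapP_eq x hx]
  · rw [← huv (mem_halfSpace.2 le_rfl), hu.boundary]

lemma sub (hu : IsBoundedSolution lam h u) (hv : IsBoundedSolution lam k v) :
    IsBoundedSolution lam (h - k) (u - v) := by
  obtain ⟨M, hM⟩ := hu.bounded
  obtain ⟨N, hN⟩ := hv.bounded
  refine ⟨hu.contDiffOn.sub hv.contDiffOn, fun x hx => ?_,
    fun y => by simp [hu.boundary, hv.boundary], M + N,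
    fun x hx => (abs_sub _ _).trans (add_le_add (hM x hx) (hN x hx))⟩
  rw [lapP_sub (hu.contDiffAt hx) (hv.contDiffAt hx), Pi.sub_apply, Pi.sub_apply,
    ← hu.mul_sub_lapP_eq x hx, ← hv.mul_sub_lapP_eq x hx]
  ring

lemma const_smul (c : ℝ) (hu : IsBoundedSolution lam h u) :
    IsBoundedSolution lam (c • h) (c • u) := by
  obtain ⟨M, hM⟩ := hu.bounded
  refine ⟨hu.contDiffOn.const_smul c, fun x hx => ?_, fun y => by simp [hu.boundary],
    |c| * M, fun x hx => ?_⟩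
  · rw [lapP_const_smul c (hu.contDiffAt hx), Pi.smul_apply, Pi.smul_apply, smul_eq_mul,
      smul_eq_mul, ← hu.mul_sub_lapP_eq x hx]
    ring
  · rw [Pi.smul_apply, smul_eq_mul, abs_mul]
    exact mul_le_mul_of_nonneg_left (hM x hx) (abs_nonneg c)

lemma neg (hu : IsBoundedSolution lam h u) : IsBoundedSolution lam (-h) (-u) := by
  simpa only [neg_smul, one_smul] using hu.const_smul (-1)

lemma add (hu : IsBoundedSolution lam h u) (hv : IsBoundedSolution lam k v) :
    IsBoundedSolution lam (h + k) (u + v) := by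
  simpa only [sub_neg_eq_add] using hu.sub hv.neg

end IsBoundedSolution

lemma isBoundedSolution_dirichletResolvent {σ K : ℝ} (hl : 0 < lam) (h0 : 0 < σ) (h1 : σ < 1)
    (hh : HolderLe σ (halfSpace m) h K) : IsBoundedSolution lam h (dirichletResolvent lam h) := by
  obtain ⟨C, _, hC⟩ := exists_holderLe_dirichletResolvent m hl h0.le h1.le
  exact ⟨contDiffOn_dirichletResolvent hl h0 h1 hh,
    fun _ => mul_dirichletResolvent_sub_lapP hl h0 h1 hh, dirichletResolvent_boundary lam h,
    C * K, (hC (hh.continuousOn h0) hh.1).1⟩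

end BoundedSolutions

section WeightedContraction

variable {m : ℕ} {lam θ S K : ℝ} {q P : ℝ → ℝ} {d h u : Ambient m → ℝ}

namespace IsContractionWeight

lemma le_of_le (hP : IsContractionWeight lam θ S q P) (hu : IsBoundedSolution lam h u)
    (hK : 0 ≤ K) (hh : ∀ x, 0 < x.2 → h x ≤ K * (q x.2 * P x.2)) :
    ∀ x ∈ halfSpace m, u x ≤ K * θ * P x.2 := by
  obtain ⟨M, hM⟩ := hu.bounded
  have hKθ : 0 ≤ K * θ := mul_nonneg hK hP.theta_nonneg
  let p : Ambient m → ℝ := (K * θ) • fun x => P x.2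
  have hp (x : Ambient m) (hx : x ∈ halfSpace m) : 0 ≤ p x :=
    mul_nonneg hKθ (zero_le_one.trans (hP.one_le x.2 hx))
  have hPd {x : Ambient m} (hx : 0 < x.2) : ContDiffAt ℝ 2 P x.2 :=
    hP.contDiffOn.contDiffAt (Ioi_mem_nhds hx)
  have hPd' {x : Ambient m} (hx : 0 < x.2) : ContDiffAt ℝ 2 (fun y : Ambient m => P y.2) x :=
    (hPd hx).comp x contDiffAt_snd
  have hpd {x : Ambient m} (hx : 0 < x.2) : ContDiffAt ℝ 2 p x := (hPd' hx).const_smul (K * θ)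
  have hpc : ContinuousOn p (halfSpace m) :=
    (hP.continuousOn.comp continuousOn_snd fun _ hx => hx).const_smul (K * θ)
  refine fun x hx => sub_nonpos.1 (nonpos_of_mul_sub_lapP_nonpos (v := u - p) (M := M) hP.lam_pos
    (hu.contDiffOn.continuousOn.sub hpc) (fun x hx => (hu.contDiffAt hx).sub (hpd hx))
    (fun x hx => (sub_le_self _ (hp x hx)).trans ((le_abs_self _).trans (hM x hx)))
    (fun y => ?_) (fun x hx => ?_) x hx)
  · simpa [hu.boundary] using hp (y, 0) (mem_halfSpace.2 le_rfl)
  · rw [lapP_sub (hu.contDiffAt hx) (hpd hx), lapP_const_smul _ (hPd' hx), lapP_comp_snd (hPd hx)]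
    have hsuper := mul_le_mul_of_nonneg_left (hP.mul_le x.2 hx) hK
    have hpx : p x = K * θ * P x.2 := rfl
    rw [Pi.sub_apply, hpx]
    linarith [hu.mul_sub_lapP_eq x hx, hh x hx]

lemma abs_le_of_abs_le (hP : IsContractionWeight lam θ S q P) (hu : IsBoundedSolution lam h u)
    (hK : 0 ≤ K) (hh : ∀ x, 0 < x.2 → |h x| ≤ K * (q x.2 * P x.2)) :
    ∀ x ∈ halfSpace m, |u x| ≤ K * θ * P x.2 := fun x hx =>
  abs_le'.2 ⟨hP.le_of_le hu hK (fun x hx => (le_abs_self _).trans (hh x hx)) x hx,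
    hP.le_of_le hu.neg hK (fun x hx => (neg_le_abs _).trans (hh x hx)) x hx⟩

lemma abs_le_of_abs_le_mul (hP : IsContractionWeight lam θ S q P)
    (hu : IsBoundedSolution lam (fun x => q x.2 * d x) u) (hK : 0 ≤ K)
    (hd : ∀ x ∈ halfSpace m, |d x| ≤ K * P x.2) : ∀ x ∈ halfSpace m, |u x| ≤ K * θ * P x.2 := by
  refine hP.abs_le_of_abs_le hu hK fun x hx => ?_
  have hq : 0 ≤ q x.2 := zero_le_one.trans (hP.one_le_potential x.2 hx.le)
  rw [abs_mul, abs_of_nonneg hq, mul_left_comm]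
  exact mul_le_mul_of_nonneg_left (hd x hx.le) hq

lemma eqOn_zero (hP : IsContractionWeight lam θ S q P)
    (hu : IsBoundedSolution lam (fun x => q x.2 * u x) u) : EqOn u 0 (halfSpace m) := by
  obtain ⟨M, hM⟩ := hu.bounded
  have hM0 : 0 ≤ M := (abs_nonneg _).trans (hM 0 (mem_halfSpace.2 le_rfl))
  have hiter (n : ℕ) : ∀ x ∈ halfSpace m, |u x| ≤ M * θ ^ n * P x.2 := by
    induction n with
    | zero =>
      intro x hx
      simpa using (hM x hx).trans (le_mul_of_one_le_right hM0 (hP.one_le x.2 hx))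
    | succ n ih =>
      have := pow_nonneg hP.theta_nonneg n
      simpa only [pow_succ, mul_assoc] using hP.abs_le_of_abs_le_mul hu (by positivity) ih
  intro x hx
  have hlim : Tendsto (fun n : ℕ => M * θ ^ n * P x.2) atTop (𝓝 (M * 0 * P x.2)) :=
    ((tendsto_pow_atTop_nhds_zero_of_lt_one hP.theta_nonneg hP.theta_lt_one).const_mul
      M).mul_const _
  simpa using ge_of_tendsto' hlim fun n => hiter n x hx

end IsContractionWeight

end WeightedContraction

section Picard

variable {m : ℕ} {lam θ S σ B K : ℝ} {q P : ℝ → ℝ} {g φ : Ambient m → ℝ} {s : ℕ → Ambient m → ℝ}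

/-- The iterates, started at `0`, of the map sending `u` to the bounded solution `v` of
`lam * v - Δv = q * u - g` with zero boundary values. -/
noncomputable def picardIterate (lam : ℝ) (q : ℝ → ℝ) (g : Ambient m → ℝ) : ℕ → Ambient m → ℝ
  | 0 => 0
  | n + 1 => dirichletResolvent lam fun x => q x.2 * picardIterate lam q g n x - g x

lemma holderLe_mul_sub (h0 : 0 ≤ σ) (hq : HolderLe σ (Ici 0) q B)
    (hg : HolderLe σ (halfSpace m) g K) {u : Ambient m → ℝ} {A : ℝ}
    (hu : HolderLe σ (halfSpace m) u A) :
    HolderLe σ (halfSpace m) (fun x => q x.2 * u x - g x) (2 * B * A + K) := by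
  have hq' : HolderLe σ (halfSpace m) (fun x => q x.2) B :=
    hq.comp_of_dist_le h0 (fun _ hx => hx) fun x y => le_max_right _ _
  exact (hq'.mul (hq.nonneg ⟨0, self_mem_Ici⟩) hu).sub hg

lemma exists_holderLe_picardIterate (hl : 0 < lam) (h0 : 0 < σ) (h1 : σ ≤ 1)
    (hq : HolderLe σ (Ici 0) q B) (hg : HolderLe σ (halfSpace m) g K) (n : ℕ) :
    ∃ A, HolderLe σ (halfSpace m) (picardIterate lam q g n) A := by
  induction n with
  | zero => exact ⟨_, HolderLe.const 0⟩
  | succ n ih =>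
    obtain ⟨A, hA⟩ := ih
    obtain ⟨C, -, hC⟩ := exists_holderLe_dirichletResolvent m hl h0.le h1
    have hrhs := holderLe_mul_sub h0.le hq hg hA
    exact ⟨_, hC (hrhs.continuousOn h0) hrhs.1⟩

lemma isBoundedSolution_picardIterate_succ (hl : 0 < lam) (h0 : 0 < σ) (h1 : σ < 1)
    (hq : HolderLe σ (Ici 0) q B) (hg : HolderLe σ (halfSpace m) g K) (n : ℕ) :
    IsBoundedSolution lam (fun x => q x.2 * picardIterate lam q g n x - g x)
      (picardIterate lam q g (n + 1)) :=
  let ⟨_, hA⟩ := exists_holderLe_picardIterate hl h0 h1.le hq hg n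
  isBoundedSolution_dirichletResolvent hl h0 h1 (holderLe_mul_sub h0.le hq hg hA)

namespace IsContractionWeight

lemma abs_sub_succ_le (hP : IsContractionWeight lam θ S q P) (hs0 : s 0 = 0)
    (hs : ∀ n, IsBoundedSolution lam (fun x => q x.2 * s n x - g x) (s (n + 1)))
    (hg : ∀ x ∈ halfSpace m, |g x| ≤ K) (n : ℕ) :
    ∀ x ∈ halfSpace m, |s n x - s (n + 1) x| ≤ K * θ ^ (n + 1) * P x.2 := by
  have hK : 0 ≤ K := (abs_nonneg _).trans (hg 0 (mem_halfSpace.2 le_rfl))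
  induction n with
  | zero =>
    intro x hx
    have := hP.abs_le_of_abs_le (hs 0) hK (fun x hx => by
      have hqP : 1 ≤ q x.2 * P x.2 :=
        one_le_mul_of_one_le_of_one_le (hP.one_le_potential x.2 hx.le) (hP.one_le x.2 hx.le)
      simpa [hs0] using (hg x hx.le).trans (le_mul_of_one_le_right hK hqP)) x hx
    simpa [hs0] using this
  | succ n ih =>
    have hdiff : IsBoundedSolution lam (fun x => q x.2 * (s n x - s (n + 1) x))
        (s (n + 1) - s (n + 2)) :=
      ((hs n).sub (hs (n + 1))).congr_rhs fun x _ => by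
        simp only [Pi.sub_apply]
        ring
    have := pow_nonneg hP.theta_nonneg (n + 1)
    simpa only [pow_succ θ (n + 1), mul_assoc, Pi.sub_apply] using
      hP.abs_le_of_abs_le_mul hdiff (by positivity) ih

lemma exists_abs_sub_le (hP : IsContractionWeight lam θ S q P) (hs0 : s 0 = 0)
    (hs : ∀ n, IsBoundedSolution lam (fun x => q x.2 * s n x - g x) (s (n + 1)))
    (hg : ∀ x ∈ halfSpace m, |g x| ≤ K) :
    ∃ φ : Ambient m → ℝ, ∀ x ∈ halfSpace m, ∀ n, |s n x - φ x| ≤ S / (1 - θ) * K * θ ^ n := by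
  have hK : 0 ≤ K := (abs_nonneg _).trans (hg 0 (mem_halfSpace.2 le_rfl))
  have hstep (x : Ambient m) (hx : x ∈ halfSpace m) (n : ℕ) :
      dist (s n x) (s (n + 1) x) ≤ K * S * θ ^ n := by
    have hθ := pow_nonneg hP.theta_nonneg n
    have hP0 : 0 ≤ P x.2 := zero_le_one.trans (hP.one_le x.2 hx)
    calc dist (s n x) (s (n + 1) x) ≤ K * θ ^ (n + 1) * P x.2 :=
          hP.abs_sub_succ_le hs0 hs hg n x hx
      _ ≤ K * θ ^ n * S := by
          gcongr ?_ * ?_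
          · exact mul_le_mul_of_nonneg_left
              (pow_le_pow_of_le_one hP.theta_nonneg hP.theta_lt_one.le n.le_succ) hK
          · exact hP.le x.2 hx
      _ = K * S * θ ^ n := by ring
  have hlim (x : Ambient m) (hx : x ∈ halfSpace m) :
      ∃ l, Tendsto (fun n => s n x) atTop (𝓝 l) :=
    cauchySeq_tendsto_of_complete
      (cauchySeq_of_le_geometric θ (K * S) hP.theta_lt_one (hstep x hx))
  choose! φ hφ using hlim
  refine ⟨φ, fun x hx n => ?_⟩
  exact (dist_le_of_le_geometric_of_tendsto θ (K * S) hP.theta_lt_one (hstep x hx) (hφ x hx)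
    n).trans_eq (by ring)

lemma tendsto_of_abs_sub_le (hP : IsContractionWeight lam θ S q P) {A a : ℝ} {r : ℕ → ℝ}
    (h : ∀ n, |r n - a| ≤ A * θ ^ n) : Tendsto r atTop (𝓝 a) := by
  have hpow := (tendsto_pow_atTop_nhds_zero_of_lt_one hP.theta_nonneg hP.theta_lt_one).const_mul A
  rw [mul_zero] at hpow
  exact tendsto_iff_norm_sub_tendsto_zero.2 (squeeze_zero (fun n => norm_nonneg _) h hpow)

lemma abs_le_two_mul_of_abs_sub_le (hP : IsContractionWeight lam θ S q P) {A a : ℝ} {r : ℕ → ℝ}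
    (hr : r 0 = 0) (h : ∀ n, |r n - a| ≤ A * θ ^ n) (n : ℕ) : |r n| ≤ 2 * A := by
  have ha : |a| ≤ A := by simpa [hr] using h 0
  have hpow : A * θ ^ n ≤ A := mul_le_of_le_one_right ((abs_nonneg a).trans ha)
    (pow_le_one₀ hP.theta_nonneg hP.theta_lt_one.le)
  linarith [abs_sub_abs_le_abs_sub (r n) a, h n]

lemma eqOn_of_abs_sub_le (hP : IsContractionWeight lam θ S q P) {A : ℝ}
    (hs : ∀ n, IsBoundedSolution lam (fun x => q x.2 * s n x - g x) (s (n + 1)))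
    (hφ : ∀ x ∈ halfSpace m, ∀ n, |s n x - φ x| ≤ A * θ ^ n) {ψ : Ambient m → ℝ}
    (hψ : IsBoundedSolution lam (fun x => q x.2 * φ x - g x) ψ) : EqOn ψ φ (halfSpace m) := by
  have hA : 0 ≤ A := by simpa using (abs_nonneg _).trans (hφ 0 (mem_halfSpace.2 le_rfl) 0)
  have hclose (n : ℕ) : ∀ x ∈ halfSpace m, |s (n + 1) x - ψ x| ≤ A * θ ^ n * θ * P x.2 := by
    have hdiff : IsBoundedSolution lam (fun x => q x.2 * (s n x - φ x)) (s (n + 1) - ψ) :=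
      ((hs n).sub hψ).congr_rhs fun x _ => by
        simp only [Pi.sub_apply]
        ring
    refine hP.abs_le_of_abs_le_mul hdiff (mul_nonneg hA (pow_nonneg hP.theta_nonneg n))
      fun x hx => (hφ x hx n).trans (le_mul_of_one_le_right ?_ (hP.one_le x.2 hx))
    exact mul_nonneg hA (pow_nonneg hP.theta_nonneg n)
  intro x hx
  refine tendsto_nhds_unique (hP.tendsto_of_abs_sub_le (A := A * θ * P x.2) fun n => ?_)
    ((tendsto_add_atTop_iff_nat 1).2 (hP.tendsto_of_abs_sub_le (hφ x hx)))
  exact (hclose n x hx).trans_eq (by ring)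

theorem exists_holderLe_picardLimit (hP : IsContractionWeight lam θ S q P) (m : ℕ) (h0 : 0 < σ)
    (h1 : σ < 1) (hq : HolderLe σ (Ici 0) q B) :
    ∃ A C, 0 ≤ C ∧ ∀ {g : Ambient m → ℝ} {K : ℝ}, HolderLe σ (halfSpace m) g K →
      ∃ φ : Ambient m → ℝ, HolderLe σ (halfSpace m) φ (C * K) ∧
        ∀ x ∈ halfSpace m, ∀ n, |picardIterate lam q g n x - φ x| ≤ A * K * θ ^ n := by
  obtain ⟨C, hC0, hC⟩ := exists_holderLe_dirichletResolvent m hP.lam_pos h0.le h1.le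
  have hB : 0 ≤ B := hq.nonneg ⟨0, self_mem_Ici⟩
  have hS : 0 ≤ S := (zero_le_one.trans (hP.one_le 0 self_mem_Ici)).trans (hP.le 0 self_mem_Ici)
  have hA : 0 ≤ S / (1 - θ) := div_nonneg hS (sub_nonneg.2 hP.theta_lt_one.le)
  set A := S / (1 - θ)
  refine ⟨A, C * (B * (2 * A) + 1), by positivity, fun {g K} hg => ?_⟩
  obtain ⟨φ, hφ⟩ := hP.exists_abs_sub_le rfl
    (isBoundedSolution_picardIterate_succ hP.lam_pos h0 h1 hq hg) hg.1
  have hholder (n : ℕ) : HolderLe σ (halfSpace m) (picardIterate lam q g (n + 1))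
      (C * (B * (2 * (A * K)) + K)) := by
    obtain ⟨_, hn⟩ := exists_holderLe_picardIterate hP.lam_pos h0 h1.le hq hg n
    refine hC ((holderLe_mul_sub h0.le hq hg hn).continuousOn h0) fun x hx => ?_
    refine (abs_sub _ _).trans (add_le_add ?_ (hg.1 x hx))
    rw [abs_mul]
    exact mul_le_mul (hq.1 x.2 hx)
      (hP.abs_le_two_mul_of_abs_sub_le (r := (picardIterate lam q g · x)) rfl (hφ x hx) n)
      (abs_nonneg _) hB
  have hlim (x : Ambient m) (hx : x ∈ halfSpace m) :
      Tendsto (fun n => picardIterate lam q g (n + 1) x) atTop (𝓝 (φ x)) :=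
    (tendsto_add_atTop_iff_nat 1).2 (hP.tendsto_of_abs_sub_le (hφ x hx))
  exact ⟨φ, (HolderLe.of_tendsto hholder hlim).mono (by linarith), hφ⟩

theorem exists_isBoundedSolution (hP : IsContractionWeight lam θ S q P) (m : ℕ) (h0 : 0 < σ)
    (h1 : σ < 1) (hq : HolderLe σ (Ici 0) q B) :
    ∃ C > 0, ∀ {g : Ambient m → ℝ} {K : ℝ}, HolderLe σ (halfSpace m) g K →
      ∃ φ, IsBoundedSolution lam (fun x => q x.2 * φ x - g x) φ ∧
        HolderLe σ (halfSpace m) φ (C * K) ∧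
        HolderLe σ (halfSpace m) (iteratedFDerivWithin ℝ 2 φ (halfSpace m)) (C * K) := by
  obtain ⟨C₀, hC₀, hres⟩ := exists_holderLe_dirichletResolvent m hP.lam_pos h0.le h1.le
  obtain ⟨C₂, hC₂, hhess⟩ :=
    exists_holderLe_iteratedFDerivWithin_dirichletResolvent m hP.lam_pos h0 h1
  obtain ⟨A, C, hC, hlimit⟩ := hP.exists_holderLe_picardLimit m h0 h1 hq
  have hB : 0 ≤ B := hq.nonneg ⟨0, self_mem_Ici⟩
  refine ⟨(C₀ + C₂ + 1) * (2 * B * C + 1), by positivity, fun {g K} hg => ?_⟩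
  have hK : 0 ≤ K := hg.nonneg ⟨0, mem_halfSpace.2 le_rfl⟩
  obtain ⟨φ, hφ, hsφ⟩ := hlimit hg
  have hrhs := (holderLe_mul_sub h0.le hq hg hφ).mono
    (B := (2 * B * C + 1) * K) (by linarith)
  have hψ := isBoundedSolution_dirichletResolvent hP.lam_pos h0 h1 hrhs
  have hψφ := hP.eqOn_of_abs_sub_le
    (isBoundedSolution_picardIterate_succ hP.lam_pos h0 h1 hq hg) hsφ hψ
  refine ⟨_, hψ.congr_rhs fun x hx => by rw [hψφ hx.le],
    (hres (hrhs.continuousOn h0) hrhs.1).mono ?_, (hhess hrhs).mono ?_⟩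
  all_goals
    rw [mul_assoc (C₀ + C₂ + 1)]
    gcongr
    linarith

end IsContractionWeight

end Picard

section SolutionOperator

variable {m : ℕ} {lam θ S σ B : ℝ} {q P : ℝ → ℝ}

lemma exists_linearMap_of_graph {𝕜 E F : Type*} [Field 𝕜] [AddCommGroup E] [Module 𝕜 E]
    [AddCommGroup F] [Module 𝕜 F] (G : Submodule 𝕜 (E × F)) (hG : ∀ p ∈ G, p.1 = 0 → p.2 = 0) :
    ∃ T : E →ₗ[𝕜] F, ∀ p ∈ G, T p.1 = p.2 := by
  obtain ⟨T, hT⟩ := LinearMap.exists_extend G.toLinearPMap.toFun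
  refine ⟨T, fun p hp => ?_⟩
  rw [← G.toLinearPMap_graph_eq hG, LinearPMap.mem_graph_iff] at hp
  obtain ⟨x, hx, hxp⟩ := hp
  rw [← hx, ← hxp]
  exact LinearMap.congr_fun hT x

/-- The pairs `(g, φ)` with `φ` a bounded solution of `lam * φ - Δφ = q * φ - g` with zero boundary
values. Values of `φ` outside the closed half-space are irrelevant to the equation, and are fixed
to be zero so as to make `φ` unique. -/
def solutionGraph (m : ℕ) (lam : ℝ) (q : ℝ → ℝ) :
    Submodule ℝ ((Ambient m → ℝ) × (Ambient m → ℝ)) where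
  carrier := {p | IsBoundedSolution lam (fun x => q x.2 * p.2 x - p.1 x) p.2 ∧
    EqOn p.2 0 (halfSpace m)ᶜ}
  zero_mem' :=
    ⟨⟨contDiffOn_const, fun x _ => by simp [lapP], fun _ => rfl, 0, by simp⟩, fun _ _ => rfl⟩
  add_mem' hp hp' := ⟨(hp.1.add hp'.1).congr_rhs fun x _ => by
      simp only [Pi.add_apply, Prod.fst_add, Prod.snd_add]
      ring,
    fun x hx => by simp [hp.2 hx, hp'.2 hx]⟩
  smul_mem' c _ hp := ⟨(hp.1.const_smul c).congr_rhs fun x _ => by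
      simp only [Pi.smul_apply, Prod.smul_fst, Prod.smul_snd, smul_eq_mul]
      ring,
    fun x hx => by simp [hp.2 hx]⟩

lemma indicator_mem_solutionGraph {g φ : Ambient m → ℝ}
    (hφ : IsBoundedSolution lam (fun x => q x.2 * φ x - g x) φ) :
    (g, (halfSpace m).indicator φ) ∈ solutionGraph m lam q := by
  have heq : EqOn φ ((halfSpace m).indicator φ) (halfSpace m) := (eqOn_indicator).symm
  exact ⟨(hφ.congr heq).congr_rhs fun x hx => by rw [heq hx.le], eqOn_indicator'⟩

lemma IsContractionWeight.eq_zero_of_mem_solutionGraph (hP : IsContractionWeight lam θ S q P)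
    {p : (Ambient m → ℝ) × (Ambient m → ℝ)} (hp : p ∈ solutionGraph m lam q) (h : p.1 = 0) :
    p.2 = 0 := by
  have hzero : EqOn p.2 0 (halfSpace m) := hP.eqOn_zero (hp.1.congr_rhs fun x _ => by simp [h])
  funext x
  by_cases hx : x ∈ halfSpace m
  exacts [hzero hx, hp.2 hx]

theorem IsContractionWeight.exists_solutionOperator (hP : IsContractionWeight lam θ S q P)
    (m : ℕ) (h0 : 0 < σ) (h1 : σ < 1) (hq : HolderLe σ (Ici 0) q B) :
    ∃ C > 0, ∃ T : (Ambient m → ℝ) →ₗ[ℝ] (Ambient m → ℝ), ∀ (g : Ambient m → ℝ) (K : ℝ),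
      HolderLe σ (halfSpace m) g K →
        IsBoundedSolution lam (fun x => q x.2 * T g x - g x) (T g) ∧
        HolderLe σ (halfSpace m) (T g) (C * K) ∧
        HolderLe σ (halfSpace m) (iteratedFDerivWithin ℝ 2 (T g) (halfSpace m)) (C * K) := by
  obtain ⟨C, hC, hsolve⟩ := hP.exists_isBoundedSolution m h0 h1 hq
  obtain ⟨T, hT⟩ := exists_linearMap_of_graph (solutionGraph m lam q)
    fun _ => hP.eq_zero_of_mem_solutionGraph
  refine ⟨C, hC, T, fun g K hg => ?_⟩
  obtain ⟨φ, hφ, hφK, hφK₂⟩ := hsolve hg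
  have hgraph := indicator_mem_solutionGraph hφ
  have heq : EqOn φ ((halfSpace m).indicator φ) (halfSpace m) := (eqOn_indicator).symm
  rw [hT _ hgraph]
  exact ⟨hgraph.1, hφK.congr heq, hφK₂.congr fun x hx =>
    (iteratedFDerivWithin_congr heq.symm hx 2).symm⟩

end SolutionOperator

end HalfSpaceDirichlet

lemma Monostable.contDiff_deriv {f : ℝ → ℝ} (hf : Monostable f) : ContDiff ℝ 1 (deriv f) :=
  (contDiff_succ_iff_deriv (n := 1).1 (contDiff_infty.1 hf.1 2)).2.2

lemma Monostable.nonneg {f : ℝ → ℝ} {s : ℝ} (hf : Monostable f) (hs : s ∈ Icc 0 1) : 0 ≤ f s := by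
  obtain ⟨-, h0, h1, hpos, -⟩ := hf
  rcases eq_endpoints_or_mem_Ioo_of_mem_Icc hs with rfl | rfl | hs
  exacts [h0.ge, h1.ge, (hpos s hs).le]

namespace IsHeteroclinic

open HalfSpaceDirichlet

variable {f w : ℝ → ℝ} {t σ : ℝ}

lemma mem_Icc (hw : IsHeteroclinic f w) (ht : 0 ≤ t) : w t ∈ Icc 0 1 := by
  obtain ⟨-, -, h0, hlim, -, hmono, -⟩ := hw
  refine ⟨h0 ▸ hmono.monotoneOn self_mem_Ici ht ht, ge_of_tendsto hlim ?_⟩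
  filter_upwards [eventually_ge_atTop t] with s hs
  exact hmono.monotoneOn ht (ht.trans hs) hs

lemma contDiffOn_one_derivWithin (hw : IsHeteroclinic f w) :
    ContDiffOn ℝ 1 (derivWithin w (Ici 0)) (Ici 0) :=
  hw.1.derivWithin (uniqueDiffOn_Ici 0) (by norm_num)

lemma hasDerivWithinAt (hw : IsHeteroclinic f w) (ht : 0 ≤ t) :
    HasDerivWithinAt w (derivWithin w (Ici 0) t) (Ici 0) t :=
  (hw.1.differentiableOn two_ne_zero t ht).hasDerivWithinAt

lemma hasDerivAt_derivWithin (hw : IsHeteroclinic f w) (ht : 0 < t) :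
    HasDerivAt (derivWithin w (Ici 0)) (-f (w t)) t := by
  rw [← eq_neg_of_add_eq_zero_left (hw.2.1 t ht)]
  exact ((hw.contDiffOn_one_derivWithin.differentiableOn one_ne_zero t
    ht.le).hasDerivWithinAt).hasDerivAt (Ici_mem_nhds ht)

lemma antitoneOn_derivWithin (hw : IsHeteroclinic f w) (hf : Monostable f) :
    AntitoneOn (derivWithin w (Ici 0)) (Ici 0) := by
  refine antitoneOn_of_deriv_nonpos (convex_Ici 0) hw.contDiffOn_one_derivWithin.continuousOn ?_ ?_
  all_goals rw [interior_Ici]; intro t ht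
  · exact (hw.hasDerivAt_derivWithin ht).differentiableAt.differentiableWithinAt
  · rw [(hw.hasDerivAt_derivWithin ht).deriv, neg_nonpos]
    exact hf.nonneg (hw.mem_Icc (mem_Ioi.1 ht).le)

lemma contDiffOn_two_derivWithin (hw : IsHeteroclinic f w) (hf : Monostable f) :
    ContDiffOn ℝ 2 (derivWithin w (Ici 0)) (Ioi 0) := by
  refine (contDiffOn_succ_iff_deriv_of_isOpen (n := 1) isOpen_Ioi).2
    ⟨fun t ht => (hw.hasDerivAt_derivWithin ht).differentiableAt.differentiableWithinAt,
      by simp, ?_⟩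
  have hfw : ContDiffOn ℝ 1 (fun t => -f (w t)) (Ioi 0) :=
    ((contDiff_infty.1 hf.1 1).comp_contDiffOn
      ((hw.1.mono Ioi_subset_Ici_self).of_le (by norm_num))).neg
  exact hfw.congr fun t ht => (hw.hasDerivAt_derivWithin ht).deriv

lemma deriv_deriv_derivWithin (hw : IsHeteroclinic f w) (hf : Monostable f) (ht : 0 < t) :
    deriv (deriv (derivWithin w (Ici 0))) t = -(deriv f (w t) * derivWithin w (Ici 0) t) := by
  have hfirst : deriv (derivWithin w (Ici 0)) =ᶠ[nhds t] fun s => -f (w s) := by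
    filter_upwards [Ioi_mem_nhds ht] with s hs using (hw.hasDerivAt_derivWithin hs).deriv
  have hfd : HasDerivAt f (deriv f (w t)) (w t) :=
    (hf.1.differentiable (by simp) (w t)).hasDerivAt
  rw [hfirst.deriv_eq]
  exact (hfd.comp t ((hw.hasDerivWithinAt ht.le).hasDerivAt (Ici_mem_nhds ht))).neg.deriv

lemma isDecreasingSupersolution_derivWithin (hw : IsHeteroclinic f w) (hf : Monostable f) :
    IsDecreasingSupersolution (fun t => deriv f (w t)) (derivWithin w (Ici 0)) where
  continuousOn := hw.contDiffOn_one_derivWithin.continuousOn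
  contDiffOn := hw.contDiffOn_two_derivWithin hf
  pos := hw.2.2.2.2.2.2
  antitoneOn := hw.antitoneOn_derivWithin hf
  deriv_deriv_add_mul_nonpos t ht := by
    rw [hw.deriv_deriv_derivWithin hf ht, neg_add_cancel]

lemma exists_eventually_deriv_le (hw : IsHeteroclinic f w) (hf : Monostable f) :
    ∃ c > 0, ∀ᶠ t in atTop, deriv f (w t) ≤ -c := by
  have hlim : Tendsto (fun t => deriv f (w t)) atTop (nhds (deriv f 1)) :=
    (hf.contDiff_deriv.continuous.tendsto 1).comp hw.2.2.2.1
  have hneg : deriv f 1 < 0 := hf.2.2.2.2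
  refine ⟨-deriv f 1 / 2, by linarith, hlim.eventually_le_const ?_⟩
  linarith

lemma exists_holderLe_deriv (hw : IsHeteroclinic f w) (hf : Monostable f)
    (hσ : σ ∈ Ioo (0 : ℝ) 1) : ∃ B, HolderLe σ (Ici 0) (fun t => deriv f (w t)) B := by
  obtain ⟨A, hA⟩ := isCompact_Icc.exists_bound_of_continuousOn (s := Icc (0 : ℝ) 1)
    hf.contDiff_deriv.continuous.continuousOn
  obtain ⟨L, hL⟩ := isCompact_Icc.exists_bound_of_continuousOn (s := Icc (0 : ℝ) 1)
    (hf.contDiff_deriv.continuous_deriv le_rfl).continuousOn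
  have hL0 : 0 ≤ L := (norm_nonneg _).trans (hL 0 (left_mem_Icc.2 zero_le_one))
  have hW := hw.isDecreasingSupersolution_derivWithin hf
  have hderiv (t : ℝ) (ht : t ∈ Ici 0) : HasDerivWithinAt (fun t => deriv f (w t))
      (deriv (deriv f) (w t) * derivWithin w (Ici 0) t) (Ici 0) t :=
    (hf.contDiff_deriv.differentiable one_ne_zero
      (w t)).hasDerivAt.comp_hasDerivWithinAt t (hw.hasDerivWithinAt ht)
  have hbound (t : ℝ) (ht : t ∈ Ici 0) :
      ‖deriv (deriv f) (w t) * derivWithin w (Ici 0) t‖ ≤ L * derivWithin w (Ici 0) 0 := by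
    rw [norm_mul, Real.norm_of_nonneg (hW.pos t ht).le]
    exact mul_le_mul (hL _ (hw.mem_Icc ht)) (hW.antitoneOn self_mem_Ici ht ht) (hW.pos t ht).le hL0
  exact ⟨_, HolderLe.of_norm_le_of_norm_sub_le hσ.1.le hσ.2.le
    (fun t ht => hA _ (hw.mem_Icc ht))
    (fun s hs t ht => dist_eq_norm s t ▸
      (convex_Ici 0).norm_image_sub_le_of_norm_hasDerivWithin_le hderiv hbound ht hs)
    (mul_nonneg hL0 (hW.pos 0 self_mem_Ici).le)⟩

end IsHeteroclinic

open HalfSpaceDirichlet in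
theorem half_space_linear_theory_dirichlet_general (m : ℕ) {σ : ℝ} (hσ : σ ∈ Set.Ioo (0 : ℝ) 1)
    {V W : ℝ → ℝ} (hV : ∃ B, HolderLe σ (Ici 0) V B) (hW : IsDecreasingSupersolution V W)
    (hlim : ∃ c > 0, ∀ᶠ t in atTop, V t ≤ -c) :
    ∃ C > (0 : ℝ),
      ∃ T : (EuclideanSpace ℝ (Fin m) × ℝ → ℝ) → (EuclideanSpace ℝ (Fin m) × ℝ → ℝ),
        IsLinearMap ℝ T ∧
        ∀ (g : EuclideanSpace ℝ (Fin m) × ℝ → ℝ) (Kg : ℝ), HolderLe σ (halfSpace m) g Kg →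
          ContDiffOn ℝ 2 (T g) (halfSpace m) ∧
          (∀ (y : EuclideanSpace ℝ (Fin m)) (t : ℝ), 0 < t →
            lapP (T g) (y, t) + V t * (T g) (y, t) = g (y, t)) ∧
          (∀ y : EuclideanSpace ℝ (Fin m), (T g) (y, 0) = 0) ∧
          HolderLe σ (halfSpace m) (T g) (C * Kg) ∧
          HolderLe σ (halfSpace m) (iteratedFDerivWithin ℝ 2 (T g) (halfSpace m)) (C * Kg) := by
  obtain ⟨B, hB⟩ := hV
  obtain ⟨c, hc, hlim⟩ := hlim
  obtain ⟨lam, θ, S, P, hP⟩ := hW.exists_isContractionWeight hB.1 hc hlim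
  obtain ⟨C, hC, T, hT⟩ :=
    hP.exists_solutionOperator m hσ.1 hσ.2 ((HolderLe.const lam).add hB)
  refine ⟨C, hC, T, T.isLinear, fun g K hg => ?_⟩
  obtain ⟨hsol, hTK, hTK₂⟩ := hT g K hg
  refine ⟨hsol.contDiffOn, fun y t ht => ?_, hsol.boundary, hTK, hTK₂⟩
  linarith [hsol.mul_sub_lapP_eq (y, t) ht]

/-- Linear solvability for the Dirichlet problem in a half-space:
there is a linear solution operator `g ↦ φ` for `Δφ + f'(w(t))φ = g`, `φ(y,0) = 0`,
with the uniform estimate `‖φ‖_{C^{2,σ}} ≤ C ‖g‖_{C^{0,σ}}`. -/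
theorem half_space_linear_theory_dirichlet (m : ℕ) (hm : 1 ≤ m) (σ : ℝ)
    (hσ : σ ∈ Set.Ioo (0 : ℝ) 1) (f w : ℝ → ℝ) (hf : Monostable f)
    (hw : IsHeteroclinic f w) :
    ∃ C > (0 : ℝ),
      ∃ T : (EuclideanSpace ℝ (Fin m) × ℝ → ℝ) → (EuclideanSpace ℝ (Fin m) × ℝ → ℝ),
        IsLinearMap ℝ T ∧
        ∀ (g : EuclideanSpace ℝ (Fin m) × ℝ → ℝ) (Kg : ℝ), 0 ≤ Kg →
          HolderLe σ (halfSpace m) g Kg →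
          ContDiffOn ℝ 2 (T g) (halfSpace m) ∧
          (∀ (y : EuclideanSpace ℝ (Fin m)) (t : ℝ), 0 < t →
            lapP (T g) (y, t) + deriv f (w t) * (T g) (y, t) = g (y, t)) ∧
          (∀ y : EuclideanSpace ℝ (Fin m), (T g) (y, 0) = 0) ∧
          HolderLe σ (halfSpace m) (T g) (C * Kg) ∧
          HolderLe σ (halfSpace m)
            (iteratedFDerivWithin ℝ 2 (T g) (halfSpace m)) (C * Kg) := by
  obtain ⟨C, hC, T, hT, h⟩ := half_space_linear_theory_dirichlet_general m hσ
    (hw.exists_holderLe_deriv hf hσ) (hw.isDecreasingSupersolution_derivWithin hf)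
    (hw.exists_eventually_deriv_le hf)
  exact ⟨C, hC, T, hT, fun g Kg _ => h g Kg⟩
end

section
/- Let I ⊆ (0, π/2) be an open interval, let g : I → ℝ be twice differentiable with g(θ) > 0 for all θ ∈ I, let q : I → ℝ be twice differentiable, and let β ∈ ℝ. Define w̃₀(θ) = sin³(2θ) / (9 g(θ)² + g'(θ)²)^{3/2}. Then for every θ ∈ I the following identity holds: 9 · d/dθ( g² w̃₀ q' ) − 3β · d/dθ( g g' q w̃₀ ) + w̃₀ (β + 4) ( β g'² q − 3 g g' q' ) = 9 g^{(β+4)/3} · d/dθ( w̃₀ g^{2/3} · d/dθ( g^{−β/3} q ) ). In particular, the left-hand side vanishes identically when q = g^{β/3}. -/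
open Set Real

/-- The angular weight `w̃₀(θ) = sin³(2θ) / (9g² + g'²)^{3/2}`. -/
noncomputable def wTilde (g : ℝ → ℝ) (θ : ℝ) : ℝ :=
  Real.sin (2 * θ) ^ 3 / (9 * g θ ^ 2 + deriv g θ ^ 2) ^ ((3 : ℝ) / 2)

/-!
Put `F = g² w q' - (β/3) g g' q w`. Since `(g^a f)' = g^a (f' + a (g'/g) f)`, a power of `g` is an
integrating factor: `g^{2/3} w (g^{-β/3} q)' = g^{-(β+4)/3} F`, and so
`g^{(β+4)/3} (g^{2/3} w (g^{-β/3} q)')' = F' - ((β+4)/3) (g'/g) F`.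
Nine times the right-hand side is the angular operator. For `q = g^{β/3}` the two terms of `F` are
equal, and the operator cancels term by term.
-/

open scoped Topology

/-- The angular operator of the model Jacobi equation for radial exponent `β`, with an arbitrary
weight `w` in place of `w̃₀`. -/
noncomputable def angularOperator (w g : ℝ → ℝ) (β : ℝ) (q : ℝ → ℝ) (θ : ℝ) : ℝ :=
  9 * deriv (fun t => g t ^ 2 * w t * deriv q t) θ
    - 3 * β * deriv (fun t => g t * deriv g t * q t * w t) θ
    + w θ * (β + 4) * (β * deriv g θ ^ 2 * q θ - 3 * g θ * deriv g θ * deriv q θ)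

/-- The flux `F = g² w q' - (β/3) g g' q w`, normalised so that the second-order part of
`angularOperator` is `9 F'`. -/
noncomputable def angularFlux (w g : ℝ → ℝ) (β : ℝ) (q : ℝ → ℝ) (θ : ℝ) : ℝ :=
  g θ ^ 2 * w θ * deriv q θ - β / 3 * (g θ * deriv g θ * q θ * w θ)

lemma differentiableAt_wTilde {g : ℝ → ℝ} {θ : ℝ} (hg : DifferentiableAt ℝ g θ)
    (hg' : DifferentiableAt ℝ (deriv g) θ) (hne : g θ ≠ 0) :
    DifferentiableAt ℝ (wTilde g) θ := by
  have hden_pos : 0 < 9 * g θ ^ 2 + deriv g θ ^ 2 := by positivity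
  have hden : DifferentiableAt ℝ
      (fun t => (9 * g t ^ 2 + deriv g t ^ 2) ^ ((3 : ℝ) / 2)) θ :=
    DifferentiableAt.rpow_const (by fun_prop) (Or.inl hden_pos.ne')
  exact DifferentiableAt.div (by fun_prop) hden (rpow_pos_of_pos hden_pos _).ne'

section

variable {w g q : ℝ → ℝ} {θ : ℝ}

lemma deriv_rpow_const_eq_mul_logDeriv (a : ℝ) (hg : DifferentiableAt ℝ g θ) (hne : g θ ≠ 0) :
    deriv (fun t => g t ^ a) θ = a * logDeriv g θ * g θ ^ a := by
  rw [deriv_rpow_const hg (Or.inl hne), rpow_sub_one hne, logDeriv_apply]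
  ring

lemma deriv_rpow_const_mul {f : ℝ → ℝ} (a : ℝ) (hg : DifferentiableAt ℝ g θ)
    (hf : DifferentiableAt ℝ f θ) (hne : g θ ≠ 0) :
    deriv (fun t => g t ^ a * f t) θ = g θ ^ a * (deriv f θ + a * logDeriv g θ * f θ) := by
  rw [deriv_fun_mul (hg.rpow_const (Or.inl hne)) hf, deriv_rpow_const_eq_mul_logDeriv a hg hne]
  ring

lemma mul_rpow_mul_deriv_eq_rpow_mul_angularFlux (w : ℝ → ℝ) (β : ℝ)
    (hg : DifferentiableAt ℝ g θ) (hq : DifferentiableAt ℝ q θ) (hpos : 0 < g θ) :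
    w θ * g θ ^ ((2 : ℝ) / 3) * deriv (fun t => g t ^ (-(β / 3)) * q t) θ =
      g θ ^ (-((β + 4) / 3)) * angularFlux w g β q θ := by
  have hpow : g θ ^ ((2 : ℝ) / 3) * g θ ^ (-(β / 3)) = g θ ^ (-((β + 4) / 3)) * g θ ^ 2 := by
    rw [← rpow_natCast, ← rpow_add hpos, ← rpow_add hpos]
    congr 1
    push_cast
    ring
  calc w θ * g θ ^ ((2 : ℝ) / 3) * deriv (fun t => g t ^ (-(β / 3)) * q t) θ
      = g θ ^ ((2 : ℝ) / 3) * g θ ^ (-(β / 3)) *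
          (w θ * (deriv q θ - β / 3 * logDeriv g θ * q θ)) := by
        rw [deriv_rpow_const_mul _ hg hq hpos.ne']
        ring
    _ = g θ ^ (-((β + 4) / 3)) * angularFlux w g β q θ := by
        rw [hpow, logDeriv_apply, angularFlux]
        field_simp

lemma angularOperator_eq_deriv_angularFlux (β : ℝ) (hw : DifferentiableAt ℝ w θ)
    (hg : DifferentiableAt ℝ g θ) (hg' : DifferentiableAt ℝ (deriv g) θ)
    (hq : DifferentiableAt ℝ q θ) (hq' : DifferentiableAt ℝ (deriv q) θ) (hne : g θ ≠ 0) :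
    angularOperator w g β q θ =
      9 * (deriv (angularFlux w g β q) θ
        - (β + 4) / 3 * logDeriv g θ * angularFlux w g β q θ) := by
  have hderiv : deriv (angularFlux w g β q) θ =
      deriv (fun t => g t ^ 2 * w t * deriv q t) θ
        - β / 3 * deriv (fun t => g t * deriv g t * q t * w t) θ := by
    unfold angularFlux
    rw [deriv_fun_sub (by fun_prop) (by fun_prop), deriv_const_mul_field]
  rw [hderiv, logDeriv_apply, angularOperator, angularFlux]
  field_simp
  ring

lemma angularOperator_eq_rpow_mul_deriv (β : ℝ) (hw : DifferentiableAt ℝ w θ)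
    (hg : ∀ᶠ t in 𝓝 θ, DifferentiableAt ℝ g t) (hg' : DifferentiableAt ℝ (deriv g) θ)
    (hq : ∀ᶠ t in 𝓝 θ, DifferentiableAt ℝ q t) (hq' : DifferentiableAt ℝ (deriv q) θ)
    (hpos : 0 < g θ) :
    angularOperator w g β q θ =
      9 * g θ ^ ((β + 4) / 3) *
        deriv (fun t => w t * g t ^ ((2 : ℝ) / 3) *
          deriv (fun s => g s ^ (-(β / 3)) * q s) t) θ := by
  have hgθ := hg.self_of_nhds
  have hqθ := hq.self_of_nhds
  have hflux : DifferentiableAt ℝ (angularFlux w g β q) θ := by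
    unfold angularFlux
    fun_prop
  have hpos_near : ∀ᶠ t in 𝓝 θ, 0 < g t := hgθ.continuousAt.eventually_const_lt hpos
  have hinner : (fun t => w t * g t ^ ((2 : ℝ) / 3) *
      deriv (fun s => g s ^ (-(β / 3)) * q s) t) =ᶠ[𝓝 θ]
        fun t => g t ^ (-((β + 4) / 3)) * angularFlux w g β q t := by
    filter_upwards [hg, hq, hpos_near] with t hgt hqt ht
    exact mul_rpow_mul_deriv_eq_rpow_mul_angularFlux w β hgt hqt ht
  have hcancel : g θ ^ ((β + 4) / 3) * g θ ^ (-((β + 4) / 3)) = 1 := by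
    rw [← rpow_add hpos, add_neg_cancel, rpow_zero]
  rw [angularOperator_eq_deriv_angularFlux β hw hgθ hg' hqθ hq' hpos.ne', hinner.deriv_eq,
    deriv_rpow_const_mul _ hgθ hflux hpos.ne']
  linear_combination (-9 * (deriv (angularFlux w g β q) θ
    - (β + 4) / 3 * logDeriv g θ * angularFlux w g β q θ)) * hcancel

lemma angularOperator_rpow_eq_zero (w : ℝ → ℝ) (β : ℝ)
    (hg : ∀ᶠ t in 𝓝 θ, DifferentiableAt ℝ g t) (hne : g θ ≠ 0) :
    angularOperator w g β (fun t => g t ^ (β / 3)) θ = 0 := by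
  have hne_near : ∀ᶠ t in 𝓝 θ, g t ≠ 0 := hg.self_of_nhds.continuousAt.eventually_ne hne
  have hderiv : ∀ᶠ t in 𝓝 θ,
      g t * deriv (fun s => g s ^ (β / 3)) t = β / 3 * (deriv g t * g t ^ (β / 3)) := by
    filter_upwards [hg, hne_near] with t hgt ht
    rw [deriv_rpow_const_eq_mul_logDeriv _ hgt ht, logDeriv_apply]
    field_simp
  have hterms : (fun t => g t ^ 2 * w t * deriv (fun s => g s ^ (β / 3)) t) =ᶠ[𝓝 θ]
      fun t => β / 3 * (g t * deriv g t * g t ^ (β / 3) * w t) := by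
    filter_upwards [hderiv] with t ht
    linear_combination g t * w t * ht
  rw [angularOperator, hterms.deriv_eq, deriv_const_mul_field]
  linear_combination (-3 * w θ * (β + 4) * deriv g θ) * hderiv.self_of_nhds

end

theorem angular_divergence_identity_general {I : Set ℝ} (hI : IsOpen I) {w g q : ℝ → ℝ} (β : ℝ)
    (hw : ∀ θ ∈ I, DifferentiableAt ℝ w θ)
    (hg : ∀ θ ∈ I, DifferentiableAt ℝ g θ)
    (hg' : ∀ θ ∈ I, DifferentiableAt ℝ (deriv g) θ)
    (hq : ∀ θ ∈ I, DifferentiableAt ℝ q θ)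
    (hq' : ∀ θ ∈ I, DifferentiableAt ℝ (deriv q) θ)
    (hgpos : ∀ θ ∈ I, 0 < g θ) :
    (∀ θ ∈ I, angularOperator w g β q θ =
      9 * g θ ^ ((β + 4) / 3) *
        deriv (fun t => w t * g t ^ ((2 : ℝ) / 3) *
          deriv (fun s => g s ^ (-(β / 3)) * q s) t) θ) ∧
    (∀ θ ∈ I, angularOperator w g β (fun s => g s ^ (β / 3)) θ = 0) := by
  have hnear {P : ℝ → Prop} (hP : ∀ t ∈ I, P t) {θ : ℝ} (hθ : θ ∈ I) : ∀ᶠ t in 𝓝 θ, P t :=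
    (hI.eventually_mem hθ).mono hP
  exact ⟨fun θ hθ => angularOperator_eq_rpow_mul_deriv β (hw θ hθ) (hnear hg hθ) (hg' θ hθ)
      (hnear hq hθ) (hq' θ hθ) (hgpos θ hθ),
    fun θ hθ => angularOperator_rpow_eq_zero w β (hnear hg hθ) (hgpos θ hθ).ne'⟩

/-- The divergence-form identity for the angular part of the model
Jacobi operator on the cone: for `g > 0` and twice differentiable `g, q`,
`9(g² w̃₀ q')' − 3β(g g' q w̃₀)' + w̃₀(β+4)(β g'² q − 3 g g' q')
  = 9 g^{(β+4)/3} ( w̃₀ g^{2/3} (g^{−β/3} q)' )'`,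
and in particular the left-hand side vanishes identically when `q = g^{β/3}`. -/
theorem angular_divergence_identity (I : Set ℝ) (hI : IsOpen I) (hIc : I.OrdConnected)
    (hIsub : I ⊆ Ioo 0 (π / 2)) (g q : ℝ → ℝ) (β : ℝ)
    (hg : ∀ θ ∈ I, DifferentiableAt ℝ g θ)
    (hg' : ∀ θ ∈ I, DifferentiableAt ℝ (deriv g) θ)
    (hq : ∀ θ ∈ I, DifferentiableAt ℝ q θ)
    (hq' : ∀ θ ∈ I, DifferentiableAt ℝ (deriv q) θ)
    (hgpos : ∀ θ ∈ I, 0 < g θ) :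
    (∀ θ ∈ I,
      9 * deriv (fun t => g t ^ 2 * wTilde g t * deriv q t) θ
        - 3 * β * deriv (fun t => g t * deriv g t * q t * wTilde g t) θ
        + wTilde g θ * (β + 4) *
            (β * deriv g θ ^ 2 * q θ - 3 * g θ * deriv g θ * deriv q θ)
      = 9 * g θ ^ ((β + 4) / 3) *
          deriv (fun t => wTilde g t * g t ^ ((2 : ℝ) / 3) *
            deriv (fun s => g s ^ (-(β / 3)) * q s) t) θ) ∧
    (∀ θ ∈ I,
      9 * deriv (fun t => g t ^ 2 * wTilde g t * deriv (fun s => g s ^ (β / 3)) t) θ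
        - 3 * β * deriv (fun t => g t * deriv g t * g t ^ (β / 3) * wTilde g t) θ
        + wTilde g θ * (β + 4) *
            (β * deriv g θ ^ 2 * g θ ^ (β / 3)
              - 3 * g θ * deriv g θ * deriv (fun s => g s ^ (β / 3)) θ)
      = 0) := by
  have hw : ∀ θ ∈ I, DifferentiableAt ℝ (wTilde g) θ := fun θ hθ =>
    differentiableAt_wTilde (hg θ hθ) (hg' θ hθ) (hgpos θ hθ).ne'
  exact angular_divergence_identity_general hI β hw hg hg' hq hq' hgpos
end
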